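/- Let N ≥ 1 be an odd integer, let q ≥ 1 be an integer, let χ be an even primitive Dirichlet character modulo q, and let α, β > 0 satisfy α·β^N = π^{N+1}. Then for every nonzero integer m, α^{−2Nm/(N+1)}·( Σ_{r=1}^{q} Σ_{n=1}^{∞} χ(r)·e^{−(r/q)(2n)^N α} / ( n^{2Nm+1}·(1 − e^{−(2n)^N α}) ) − ζ(2Nm+1)·L(0,χ) ) = ((−1)^m · β^{−2Nm/(N+1)} · 2^{2m(N−1)} / N) · ( (q/(2 G(conj(χ)))) · L(2m+1, conj(χ)) + (−1)^{(N+3)/2} · G(χ) · Σ_{j=−(N−1)/2}^{(N−1)/2} (−1)^j · Σ_{n=1}^{∞} conj(χ)(n) / ( n^{2m+1}·( exp((2n)^{1/N} β e^{−iπ j/N}) − 1 ) ) ) + (−1)^{m+(N+3)/2} · 2^{2Nm} · Σ_{j=1}^{⌊m+(N+1)/(2N)⌋} ((−1)^{j+1}/q^{2j−1}) · (L(1−2j, χ)/(2j−1)!) · (B_{2N(m−j)+N+1}/(2N(m−j)+N+1)!) · α^{2j/(N+1)} · β^{N + 2N²(m−j)/(N+1)} + R, where R = (−1)^{m+(N+3)/2}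 · 2^{2Nm} · (B_{2Nm+N+1}/(2Nm+N+1)!) · β^{N + 2N² m/(N+1)} if q = 1, and R = 0 if q > 1. -/

import Mathlib

/-- The Gauss sum `G(χ) = ∑_{r=1}^{q} χ(r) e^{2πi r/q}`. -/
noncomputable def gaussSum' {q : ℕ} (χ : DirichletCharacter ℂ q) : ℂ :=
  ∑ r ∈ Finset.Icc 1 q, χ (r : ZMod q) * Complex.exp (2 * Real.pi * Complex.I * r / q)

/-- The complex conjugate of a Dirichlet character. -/
noncomputable def conjChar {q : ℕ} (χ : DirichletCharacter ℂ q) : DirichletCharacter ℂ q :=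
  χ.ringHomComp (starRingEnd ℂ)

/-- `B_k / k!` where `B_k` is the `k`-th Bernoulli number, interpreted as `0` for `k < 0`. -/
noncomputable def bernOverFact (k : ℤ) : ℚ :=
  if 0 ≤ k then bernoulli k.toNat / (Nat.factorial k.toNat) else 0

/-!
Summing `χ(r) symKernel x (r/q)` over `r` pairs the residue classes `r` and `q - r`, so for even `χ`
it suffices to transform `∑ n^{-(2Nm+1)} symKernel (A n^N) u` as a function of `u ∈ (0, 1)`.

For `m ≥ 1`, expand `symKernel` in its Fourier series in `u` (that is, in partial fractions) and
interchange the summations. The sum over `n` of the resulting rational functions of `n` is evaluated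
by partial fractions at the poles `b e^{πi(1/2 - j/N)}`, which produces the `N` rotated Planck
factors. The second derivative in `u` sends `m` to `m - 1` on both sides, so the identity descends
to every integer `m`. At `u = 0`, which the class `r = q` requires, the two halves of the kernel sum
differ by `ζ(2Nm+1)`; for `m < 0` both sides blow up like a power of `1/u` as `u → 0`, and this zeta
value is the constant term of the divergent part, found by Abel summation of an alternating series
through its Mellin transform. Finally `u = r/q` is summed against `χ`: Gauss sums turn the cosines
into the conjugate character, and the functional equation turns the cosine zeta values into
`L(1 - 2j, χ)`.
-/

section

open Real Set Filter Topology HurwitzZeta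

/-! ### Partial fractions of the symmetric kernel -/

/-- The kernel `(e^{-ux} + e^{-(1-u)x}) / (1 - e^{-x}) = cosh((1/2 - u)x) / sinh(x/2)`. It pairs
the residue classes `r` and `q - r` when `u = r / q`, and is an eigenfunction of `d²/du²`. -/
noncomputable def symKernel (x u : ℝ) : ℝ :=
  (rexp (-(u * x)) + rexp (-((1 - u) * x))) / (1 - rexp (-x))

lemma one_sub_exp_neg_pos {x : ℝ} (hx : 0 < x) : 0 < 1 - rexp (-x) := by
  rw [sub_pos, Real.exp_lt_one_iff]
  exact neg_neg_of_pos hx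

lemma symKernel_one_sub (x u : ℝ) : symKernel x (1 - u) = symKernel x u := by
  simp [symKernel, add_comm]

lemma continuous_symKernel (x : ℝ) : Continuous (symKernel x) := by
  unfold symKernel
  fun_prop

lemma exp_sub_two_pi_I_mul_int (z : ℂ) (n : ℤ) :
    Complex.exp (z - 2 * π * Complex.I * n) = Complex.exp z := by
  rw [Complex.exp_eq_exp_iff_exists_int]
  exact ⟨-n, by push_cast; ring⟩

lemma integral_exp_sub_two_pi_I_mul_int {z : ℂ} (n : ℤ) (hz : z ≠ 2 * π * Complex.I * n) :
    ∫ u in (0 : ℝ)..1, Complex.exp ((z - 2 * π * Complex.I * n) * u) =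
      (Complex.exp z - 1) / (z - 2 * π * Complex.I * n) := by
  rw [integral_exp_mul_complex (sub_ne_zero.mpr hz), Complex.ofReal_one, mul_one,
    exp_sub_two_pi_I_mul_int, Complex.ofReal_zero, mul_zero, Complex.exp_zero]

lemma ofReal_ne_two_pi_I_mul_int {x : ℝ} (hx : x ≠ 0) (n : ℤ) :
    (x : ℂ) ≠ 2 * π * Complex.I * n := fun h => hx (by simpa using congrArg Complex.re h)

lemma fourier_neg_smul_symKernel (x : ℝ) (n : ℤ) (u : ℝ) :
    fourier (-n) (u : AddCircle (1 - 0 : ℝ)) • (symKernel x u : ℂ) =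
      (1 - Complex.exp (-x))⁻¹ * Complex.exp (((-x : ℝ) - 2 * π * Complex.I * n) * u) +
        (1 - Complex.exp (-x))⁻¹ * Complex.exp (-x) *
          Complex.exp ((x - 2 * π * Complex.I * n) * u) := by
  rw [fourier_coe_apply, symKernel, smul_eq_mul]
  push_cast
  rw [mul_assoc _ (Complex.exp (-x)), ← Complex.exp_add, ← mul_add, mul_comm, div_eq_inv_mul,
    mul_assoc, add_mul, ← Complex.exp_add, ← Complex.exp_add]
  ring_nf

lemma fourierCoeffOn_symKernel {x : ℝ} (hx : 0 < x) (n : ℤ) :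
    fourierCoeffOn zero_lt_one (fun u : ℝ => (symKernel x u : ℂ)) n
      = 2 * x / (x ^ 2 + (2 * π * n) ^ 2) := by
  set c : ℂ := 2 * π * Complex.I * n with hc
  have hneg : ((-x : ℝ) : ℂ) - c ≠ 0 :=
    sub_ne_zero.mpr (ofReal_ne_two_pi_I_mul_int (neg_ne_zero.mpr hx.ne') n)
  have hpos : (x : ℂ) - c ≠ 0 := sub_ne_zero.mpr (ofReal_ne_two_pi_I_mul_int hx.ne' n)
  have hD : 1 - Complex.exp (-x) ≠ 0 := by exact_mod_cast (one_sub_exp_neg_pos hx).ne'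
  have hexp : Complex.exp (-x) * Complex.exp x = 1 := by rw [← Complex.exp_add]; simp
  have hprod : (x : ℂ) ^ 2 + (2 * π * n) ^ 2 = -(((-x : ℝ) : ℂ) - c) * (x - c) := by
    push_cast
    linear_combination (2 * π * n : ℂ) ^ 2 * Complex.I_sq
      + (c + 2 * π * Complex.I * n) * hc
  simp only [fourierCoeffOn_eq_integral, fourier_neg_smul_symKernel, sub_zero, div_one, one_smul]
  rw [intervalIntegral.integral_add (Continuous.intervalIntegrable (by fun_prop) _ _)
    (Continuous.intervalIntegrable (by fun_prop) _ _), intervalIntegral.integral_const_mul,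
    intervalIntegral.integral_const_mul,
    integral_exp_sub_two_pi_I_mul_int n (sub_ne_zero.mp hneg),
    integral_exp_sub_two_pi_I_mul_int n (sub_ne_zero.mp hpos), ← hc, hprod]
  push_cast at hneg ⊢
  field_simp
  linear_combination (-(x : ℂ) - c) * hexp

lemma summable_symKernel_coeff {x : ℝ} (hx : 0 < x) :
    Summable fun n : ℤ => (2 * x / (x ^ 2 + (2 * π * n) ^ 2) : ℂ) := by
  have hsq : Summable fun n : ℤ => 2 * x * (1 / (n : ℝ) ^ 2) :=
    (Real.summable_one_div_int_pow.mpr one_lt_two).mul_left _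
  refine Summable.of_norm_bounded_eventually hsq ?_
  filter_upwards [(Set.finite_singleton (0 : ℤ)).compl_mem_cofinite] with n hn
  have hn0 : (0 : ℝ) < (n : ℝ) ^ 2 := by
    have : n ≠ 0 := hn
    positivity
  have hreal : (2 * x / (x ^ 2 + (2 * π * n) ^ 2) : ℂ) =
      ((2 * x / (x ^ 2 + (2 * π * n) ^ 2) : ℝ) : ℂ) := by push_cast; rfl
  rw [hreal, Complex.norm_real, Real.norm_of_nonneg (by positivity), div_eq_mul_one_div]
  gcongr
  have hπ : 1 ≤ (2 * π) ^ 2 := by nlinarith [Real.pi_gt_three]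
  nlinarith [sq_nonneg x]

lemma hasSum_int_symKernel {x : ℝ} (hx : 0 < x) {u : ℝ} (hu : u ∈ Ico (0 : ℝ) 1) :
    HasSum (fun n : ℤ => (2 * x / (x ^ 2 + (2 * π * n) ^ 2) : ℂ) *
      Complex.exp (2 * π * Complex.I * n * u)) (symKernel x u : ℂ) := by
  let F : C(UnitAddCircle, ℂ) :=
    ⟨AddCircle.liftIco 1 0 fun u => (symKernel x u : ℂ),
      AddCircle.liftIco_zero_continuous (by simp [symKernel, add_comm])
        (Complex.continuous_ofReal.comp (continuous_symKernel x)).continuousOn⟩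
  have hcoeff : fourierCoeff F = fun n : ℤ => (2 * x / (x ^ 2 + (2 * π * n) ^ 2) : ℂ) := by
    ext n
    rw [← fourierCoeffOn_symKernel hx n]
    refine (fourierCoeff_liftIco_eq _ n).trans ?_
    congr 1
    simp
  have h := has_pointwise_sum_fourier_series_of_summable (f := F)
    (hcoeff ▸ summable_symKernel_coeff hx) (u : UnitAddCircle)
  rw [hcoeff] at h
  convert h using 1
  · ext n
    rw [fourier_coe_apply, smul_eq_mul, Complex.ofReal_one, div_one]
  · exact (AddCircle.liftIco_zero_coe_apply (f := fun u => (symKernel x u : ℂ)) hu).symm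

lemma hasSum_symKernel_of_lt {x : ℝ} (hx : 0 < x) {u : ℝ} (hu : u ∈ Ico (0 : ℝ) 1) :
    HasSum (fun k : ℕ => 4 * x * cos (2 * π * (k + 1) * u) / (x ^ 2 + (2 * π * (k + 1)) ^ 2))
      (symKernel x u - 2 / x) := by
  have h := (hasSum_nat_add_iff' 1).mpr (hasSum_int_symKernel hx hu).nat_add_neg
  have hx0 : (x : ℂ) ≠ 0 := by exact_mod_cast hx.ne'
  rw [← Complex.hasSum_ofReal]
  have hlim : ((symKernel x u - 2 / x : ℝ) : ℂ) =
      symKernel x u + 2 * x / x ^ 2 - (2 * x / x ^ 2 + 2 * x / x ^ 2) := by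
    push_cast
    field_simp
    ring
  have hcos (k : ℕ) : Complex.cos (2 * π * (k + 1) * u) =
      (Complex.exp (2 * π * Complex.I * (k + 1) * u) +
        Complex.exp (2 * π * Complex.I * -(k + 1) * u)) / 2 := by
    rw [Complex.cos]
    ring_nf
  simp only [Finset.sum_range_one, Nat.cast_zero, Int.cast_zero, neg_zero, mul_zero, zero_mul,
    Complex.exp_zero, mul_one, ne_eq, OfNat.ofNat_ne_zero, not_false_eq_true, zero_pow,
    add_zero] at h
  rw [hlim]
  refine h.congr_fun fun k => ?_
  push_cast
  rw [hcos]
  ring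

lemma hasSum_symKernel {x : ℝ} (hx : 0 < x) {u : ℝ} (hu : u ∈ Icc (0 : ℝ) 1) :
    HasSum (fun k : ℕ => 4 * x * cos (2 * π * (k + 1) * u) / (x ^ 2 + (2 * π * (k + 1)) ^ 2))
      (symKernel x u - 2 / x) := by
  rcases eq_or_lt_of_le hu.2 with rfl | h1
  · rw [← symKernel_one_sub, sub_self]
    refine (hasSum_symKernel_of_lt hx ⟨le_rfl, zero_lt_one⟩).congr_fun fun k => ?_
    have := Real.cos_nat_mul_two_pi (k + 1)
    rw [mul_one, mul_zero, Real.cos_zero, mul_comm (2 * π)]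
    push_cast at this
    rw [this]
  · exact hasSum_symKernel_of_lt hx ⟨hu.1, h1⟩

/-! ### Summation over rotated poles -/

lemma sum_Icc_neg_eq_sum_range {E : Type*} [AddCommMonoid E] (H : ℕ) (f : ℤ → E) :
    ∑ j ∈ Finset.Icc (-(H : ℤ)) H, f j = ∑ k ∈ Finset.range (2 * H + 1), f (k - H) := by
  refine Finset.sum_bij' (fun j _ => (j + H).toNat) (fun k _ => (k : ℤ) - H) ?_ ?_ ?_ ?_ ?_ <;>
    simp only [Finset.mem_Icc, Finset.mem_range]
  · omega
  · omega
  · omega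
  · omega
  · intro j hj
    congr 1
    omega

lemma card_Icc_neg (H : ℕ) : (Finset.Icc (-(H : ℤ)) H).card = 2 * H + 1 := by
  rw [Int.card_Icc]
  omega

lemma sum_Icc_neg_one_zpow {K : Type*} [DivisionRing K] (H : ℕ) :
    ∑ j ∈ Finset.Icc (-(H : ℤ)) H, (-1 : K) ^ j = (-1) ^ H := by
  have h (k : ℕ) : (-1 : K) ^ ((k : ℤ) - H) = (-1) ^ k * (-1) ^ H := by
    rw [zpow_sub₀ (by simp), zpow_natCast, zpow_natCast, div_eq_mul_inv, ← inv_pow, inv_neg_one]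
  rw [sum_Icc_neg_eq_sum_range, Finset.sum_congr rfl fun k _ => h k, ← Finset.sum_mul,
    neg_one_geom_sum, if_neg (Nat.not_even_two_mul_add_one H), one_mul]

section RootsOfUnity

variable {K : Type*} [Field K] {H : ℕ} {ζ : K}

lemma sum_Icc_zpow_of_isPrimitiveRoot (hζ : IsPrimitiveRoot ζ (2 * H + 1)) (d : ℕ) :
    ∑ j ∈ Finset.Icc (-(H : ℤ)) H, (ζ ^ d) ^ j = if 2 * H + 1 ∣ d then 2 * (H : K) + 1 else 0 := by
  have hζ0 : ζ ^ d ≠ 0 := pow_ne_zero d (hζ.ne_zero (by omega))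
  split_ifs with hd
  · simp_rw [(hζ.pow_eq_one_iff_dvd d).mpr hd, one_zpow]
    rw [Finset.sum_const, card_Icc_neg, nsmul_one]
    push_cast
    rfl
  · have h1 : ζ ^ d ≠ 1 := mt (hζ.pow_eq_one_iff_dvd d).mp hd
    simp_rw [sum_Icc_neg_eq_sum_range, zpow_sub₀ hζ0, zpow_natCast, ← Finset.sum_div]
    rw [geom_sum_eq h1, ← pow_mul, mul_comm, pow_mul, hζ.pow_eq_one, one_pow, sub_self, zero_div,
      zero_div]

lemma inv_sub_mul_zpow_of_isPrimitiveRoot (hζ : IsPrimitiveRoot ζ (2 * H + 1)) {X Y : K}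
    (hXY : X ^ (2 * H + 1) ≠ Y ^ (2 * H + 1)) (j : ℤ) :
    (X - Y * ζ ^ j)⁻¹ = (∑ i ∈ Finset.range (2 * H + 1), X ^ i * Y ^ (2 * H - i) *
      (ζ ^ (2 * H - i)) ^ j) / (X ^ (2 * H + 1) - Y ^ (2 * H + 1)) := by
  have hpow : (Y * ζ ^ j) ^ (2 * H + 1) = Y ^ (2 * H + 1) := by
    rw [mul_pow, ← zpow_natCast (ζ ^ j), zpow_comm, zpow_natCast, hζ.pow_eq_one, one_zpow, mul_one]
  have hgeom : (∑ i ∈ Finset.range (2 * H + 1), X ^ i * Y ^ (2 * H - i) *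
      (ζ ^ (2 * H - i)) ^ j) * (X - Y * ζ ^ j) = X ^ (2 * H + 1) - Y ^ (2 * H + 1) := by
    rw [← hpow, ← (Commute.all X (Y * ζ ^ j)).geom_sum₂_mul]
    refine congrArg (· * _) (Finset.sum_congr rfl fun i _ => ?_)
    rw [Nat.add_sub_cancel, mul_pow, ← zpow_natCast (ζ ^ j), zpow_comm, zpow_natCast, mul_assoc]
  have hne : X ^ (2 * H + 1) - Y ^ (2 * H + 1) ≠ 0 := sub_ne_zero.mpr hXY
  rw [inv_eq_one_div, div_eq_div_iff (right_ne_zero_of_mul (hgeom ▸ hne)) hne, one_mul, hgeom]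

lemma sum_zpow_div_sub_mul_zpow (hζ : IsPrimitiveRoot ζ (2 * H + 1)) {X Y : K}
    (hXY : X ^ (2 * H + 1) ≠ Y ^ (2 * H + 1)) :
    ∑ j ∈ Finset.Icc (-(H : ℤ)) H, (ζ ^ (H + 1)) ^ j / (X - Y * ζ ^ j) =
      (2 * H + 1) * (X * Y) ^ H / (X ^ (2 * H + 1) - Y ^ (2 * H + 1)) := by
  have hdvd {i : ℕ} (hi : i ∈ Finset.range (2 * H + 1)) :
      2 * H + 1 ∣ H + 1 + (2 * H - i) ↔ i = H := by
    rw [Finset.mem_range] at hi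
    constructor
    · rintro ⟨c, hc⟩
      obtain rfl : c = 1 := by
        rcases c with _ | _ | c
        · omega
        · rfl
        · rw [mul_add, mul_add] at hc
          omega
      omega
    · rintro rfl
      exact ⟨1, by omega⟩
  simp_rw [div_eq_mul_inv _ (X - _), inv_sub_mul_zpow_of_isPrimitiveRoot hζ hXY, ← mul_div_assoc,
    ← Finset.sum_div, Finset.mul_sum]
  congr 1
  rw [Finset.sum_comm]
  calc ∑ i ∈ Finset.range (2 * H + 1), ∑ j ∈ Finset.Icc (-(H : ℤ)) H,
        (ζ ^ (H + 1)) ^ j * (X ^ i * Y ^ (2 * H - i) * (ζ ^ (2 * H - i)) ^ j)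
      = ∑ i ∈ Finset.range (2 * H + 1), X ^ i * Y ^ (2 * H - i) *
          if i = H then 2 * (H : K) + 1 else 0 := by
        refine Finset.sum_congr rfl fun i hi => ?_
        simp_rw [mul_left_comm _ (X ^ i * _), ← mul_zpow, ← pow_add, ← Finset.mul_sum,
          sum_Icc_zpow_of_isPrimitiveRoot hζ, hdvd hi]
    _ = (2 * H + 1) * (X * Y) ^ H := by
        rw [Finset.sum_eq_single H (fun i _ hi => by rw [if_neg hi, mul_zero])
          fun h => (h (Finset.mem_range.mpr (by omega))).elim, if_pos rfl,
          show 2 * H - H = H by omega, mul_pow]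
        ring

end RootsOfUnity

/-- The point `e^{-πij/(2H+1)}` of the unit circle. For `-H ≤ j ≤ H` these are the
`(2H+1)`-st roots of `±1` in the right half-plane. -/
noncomputable def rot (H : ℕ) (j : ℤ) : ℂ :=
  Complex.exp (-(π * Complex.I * j) / ((2 * H + 1 : ℕ) : ℂ))

/-- The Planck-type sum `∑ (-1)^j / (e^{2πb ω_j} - 1)` over the rotations `ω_j = rot H j`,
`-H ≤ j ≤ H`; it collects the exponential terms on the right of the transformation formula. -/
noncomputable def planckSum (H : ℕ) (b : ℝ) : ℂ :=
  ∑ j ∈ Finset.Icc (-(H : ℤ)) H, (-1 : ℂ) ^ j / (Complex.exp (2 * π * b * rot H j) - 1)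

lemma rot_ne_zero (H : ℕ) (j : ℤ) : rot H j ≠ 0 := Complex.exp_ne_zero _

lemma rot_eq_zpow (H : ℕ) (j : ℤ) : rot H j = rot H 1 ^ j := by
  rw [rot, rot, ← Complex.exp_int_mul]
  congr 1
  push_cast
  ring

lemma rot_one_pow (H : ℕ) : rot H 1 ^ (2 * H + 1) = -1 := by
  rw [rot, ← Complex.exp_nat_mul, mul_div_cancel₀ _ (Nat.cast_ne_zero.mpr (by omega)),
    Complex.exp_neg, Int.cast_one, mul_one, Complex.exp_pi_mul_I, inv_neg_one]

lemma isPrimitiveRoot_rot_one_sq (H : ℕ) : IsPrimitiveRoot (rot H 1 ^ 2) (2 * H + 1) := by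
  have h : rot H 1 ^ 2 = (Complex.exp (2 * π * Complex.I / ((2 * H + 1 : ℕ) : ℂ)))⁻¹ := by
    rw [rot, ← Complex.exp_nat_mul, ← Complex.exp_neg]
    congr 1
    push_cast
    ring
  exact h ▸ (Complex.isPrimitiveRoot_exp (2 * H + 1) (by omega)).inv

lemma neg_one_zpow_mul_rot (H : ℕ) (j : ℤ) :
    (-1 : ℂ) ^ j * rot H j = ((rot H 1 ^ 2) ^ (H + 1)) ^ j := by
  rw [rot_eq_zpow H j, ← rot_one_pow H, ← mul_zpow, ← pow_succ, ← pow_mul, mul_add_one]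

lemma neg_one_zpow_div_rot (H : ℕ) (j : ℤ) :
    (-1 : ℂ) ^ j / rot H j = ((rot H 1 ^ 2) ^ H) ^ j := by
  rw [rot_eq_zpow H j, ← rot_one_pow H, ← div_zpow, pow_succ,
    mul_div_cancel_right₀ _ (rot_ne_zero H 1), pow_mul]

lemma sum_neg_one_zpow_div_rot (H : ℕ) :
    ∑ j ∈ Finset.Icc (-(H : ℤ)) H, (-1 : ℂ) ^ j / rot H j = if H = 0 then 1 else 0 := by
  simp_rw [neg_one_zpow_div_rot, sum_Icc_zpow_of_isPrimitiveRoot (isPrimitiveRoot_rot_one_sq H)]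
  rcases eq_or_ne H 0 with rfl | hH
  · simp
  · rw [if_neg hH, if_neg fun h => hH (Nat.eq_zero_of_dvd_of_lt h (by omega))]

lemma sum_neg_one_zpow_mul_rot_div (H : ℕ) (t : ℝ) {b : ℝ} (hb : 0 < b) :
    ∑ j ∈ Finset.Icc (-(H : ℤ)) H, (-1 : ℂ) ^ j * rot H j / ((t : ℂ) ^ 2 + (b * rot H j) ^ 2) =
      (-1) ^ H * (2 * H + 1) * (t * b) ^ (2 * H) /
        ((t ^ (2 * H + 1)) ^ 2 + (b ^ (2 * H + 1)) ^ 2) := by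
  have hden : ((t : ℂ) ^ 2) ^ (2 * H + 1) - (-(b : ℂ) ^ 2) ^ (2 * H + 1) =
      (t ^ (2 * H + 1)) ^ 2 + (b ^ (2 * H + 1)) ^ 2 := by
    rw [Odd.neg_pow ⟨H, rfl⟩]
    ring
  have hne : ((t : ℂ) ^ 2) ^ (2 * H + 1) ≠ (-(b : ℂ) ^ 2) ^ (2 * H + 1) := by
    have hpos : (t ^ (2 * H + 1)) ^ 2 + (b ^ (2 * H + 1)) ^ 2 ≠ 0 := by positivity
    rw [← sub_ne_zero, hden]
    exact_mod_cast hpos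
  have hterm (j : ℤ) : (t : ℂ) ^ 2 + (b * rot H j) ^ 2 =
      (t : ℂ) ^ 2 - -(b : ℂ) ^ 2 * (rot H 1 ^ 2) ^ j := by
    rw [rot_eq_zpow, mul_pow, ← zpow_natCast (rot H 1 ^ j), zpow_comm, zpow_natCast]
    ring
  simp_rw [neg_one_zpow_mul_rot, hterm]
  rw [sum_zpow_div_sub_mul_zpow (isPrimitiveRoot_rot_one_sq H) hne, hden]
  congr 1
  rw [mul_neg, neg_pow, ← mul_pow (t : ℂ), ← pow_mul]
  ring

lemma cos_le_re_rot {H : ℕ} {j : ℤ} (hj : j ∈ Finset.Icc (-(H : ℤ)) H) :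
    cos (π * H / (2 * H + 1)) ≤ (rot H j).re := by
  rw [Finset.mem_Icc, ← abs_le] at hj
  have hre : (rot H j).re = cos (|π * j / (2 * H + 1)|) := by
    have harg : -(π * Complex.I * j) / ((2 * H + 1 : ℕ) : ℂ) =
        ((-(π * j / (2 * H + 1)) : ℝ) : ℂ) * Complex.I := by
      push_cast
      ring
    rw [rot, harg, Complex.exp_ofReal_mul_I_re, Real.cos_neg, Real.cos_abs]
  rw [hre]
  apply Real.cos_le_cos_of_nonneg_of_le_pi (abs_nonneg _)
  · rw [div_le_iff₀ (by positivity)]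
    nlinarith [Real.pi_pos, (Nat.cast_nonneg H : (0 : ℝ) ≤ H)]
  · rw [abs_div, abs_mul, abs_of_pos Real.pi_pos, abs_of_pos (by positivity : (0:ℝ) < 2 * H + 1)]
    gcongr
    exact_mod_cast hj

lemma cos_pi_mul_div_pos (H : ℕ) : 0 < cos (π * H / (2 * H + 1)) := by
  refine Real.cos_pos_of_mem_Ioo ⟨(neg_lt_zero.mpr (by positivity)).trans_le (by positivity), ?_⟩
  rw [div_lt_iff₀ (by positivity)]
  nlinarith [Real.pi_pos]

lemma re_rot_pos {H : ℕ} {j : ℤ} (hj : j ∈ Finset.Icc (-(H : ℤ)) H) : 0 < (rot H j).re :=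
  (cos_pi_mul_div_pos H).trans_le (cos_le_re_rot hj)

lemma exp_ne_one_of_re_pos {z : ℂ} (hz : 0 < z.re) : Complex.exp z ≠ 1 := fun h =>
  hz.ne' (by simpa [Complex.norm_exp] using congrArg norm h)

lemma I_mul_mem_integerComplement {z : ℂ} (hz : 0 < z.re) :
    Complex.I * z ∈ Complex.integerComplement := by
  rintro ⟨n, hn⟩
  exact hz.ne (by simpa using congrArg Complex.im hn)

lemma pi_mul_cot_pi_mul_I_mul {z : ℂ} (hz : 0 < z.re) :
    π * Complex.cot (π * (Complex.I * z)) =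
      -Complex.I * (π + 2 * π / (Complex.exp (2 * π * z) - 1)) := by
  have hE : Complex.exp (2 * π * z) - 1 ≠ 0 := by
    refine sub_ne_zero.mpr (exp_ne_one_of_re_pos ?_)
    have : (2 * π * z : ℂ).re = 2 * π * z.re := by simp
    rw [this]
    positivity
  have he : Complex.exp (2 * π * Complex.I * (Complex.I * z)) = (Complex.exp (2 * π * z))⁻¹ := by
    rw [← Complex.exp_neg]
    congr 1
    linear_combination (2 * π * z) * Complex.I_sq
  have hratio : ((Complex.exp (2 * π * z))⁻¹ + 1) / (1 - (Complex.exp (2 * π * z))⁻¹) =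
      1 + 2 / (Complex.exp (2 * π * z) - 1) := by
    have hE0 := Complex.exp_ne_zero (2 * π * z)
    have : 1 - (Complex.exp (2 * π * z))⁻¹ ≠ 0 := by
      rw [sub_ne_zero, ne_comm, ne_eq, inv_eq_one]
      exact sub_ne_zero.mp hE
    field_simp
    ring
  rw [Complex.cot_pi_eq_exp_ratio, he, div_mul_eq_div_div_swap, hratio, Complex.div_I]
  ring

lemma hasSum_div_sq_add_sq {z : ℂ} (hz : 0 < z.re) :
    HasSum (fun n : ℕ => z / ((n + 1) ^ 2 + z ^ 2))
      (π / 2 + π / (Complex.exp (2 * π * z) - 1) - 1 / (2 * z)) := by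
  have hx := I_mul_mem_integerComplement hz
  have hs : HasSum (cotTerm (Complex.I * z)) _ := (summable_cotTerm hx).hasSum
  rw [show ∑' n : ℕ, cotTerm (Complex.I * z) n = _ from (cot_series_rep' hx).symm,
    pi_mul_cot_pi_mul_I_mul hz] at hs
  have hval : π / 2 + π / (Complex.exp (2 * π * z) - 1) - 1 / (2 * z) =
      Complex.I / 2 * (-Complex.I * (π + 2 * π / (Complex.exp (2 * π * z) - 1)) -
        1 / (Complex.I * z)) := by
    rw [one_div (Complex.I * z), mul_inv, Complex.inv_I, one_div, mul_inv]
    linear_combination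
      (π / 2 + π / (Complex.exp (2 * π * z) - 1) - z⁻¹ / 2) * Complex.I_sq
  rw [hval]
  refine (hs.mul_left (Complex.I / 2)).congr_fun fun n => ?_
  have hden : (Complex.I * z + (n + 1)) * (Complex.I * z - (n + 1)) =
      -(((n : ℂ) + 1) ^ 2 + z ^ 2) := by
    linear_combination z ^ 2 * Complex.I_sq
  rw [cotTerm_identity hx, hden, one_div, inv_neg]
  linear_combination (z / (((n : ℂ) + 1) ^ 2 + z ^ 2)) * Complex.I_sq

lemma sum_neg_one_zpow_mul_coth (H : ℕ) (b : ℝ) :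
    ∑ j ∈ Finset.Icc (-(H : ℤ)) H, (-1 : ℂ) ^ j * (π / 2 + π /
      (Complex.exp (2 * π * (b * rot H j)) - 1) - 1 / (2 * (b * rot H j))) =
      π * ((-1) ^ H / 2 + planckSum H b) - if H = 0 then 1 / (2 * (b : ℂ)) else 0 := by
  have hif : (if H = 0 then 1 / (2 * (b : ℂ)) else 0) =
      1 / (2 * b) * if H = 0 then 1 else 0 := by simp
  rw [hif, ← sum_neg_one_zpow_div_rot, planckSum, ← sum_Icc_neg_one_zpow, Finset.sum_div,
    ← Finset.sum_add_distrib, Finset.mul_sum, Finset.mul_sum, ← Finset.sum_sub_distrib]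
  refine Finset.sum_congr rfl fun j _ => ?_
  rw [mul_assoc (2 * (π : ℂ)), ← div_div, ← div_div, ← div_div]
  ring

lemma hasSum_pow_div_pow_add_pow (H : ℕ) {b : ℝ} (hb : 0 < b) :
    HasSum (fun n : ℕ => ((((n : ℝ) + 1) ^ (2 * H) /
        ((((n : ℝ) + 1) ^ (2 * H + 1)) ^ 2 + (b ^ (2 * H + 1)) ^ 2) : ℝ) : ℂ))
      (π / (2 * H + 1) / b ^ (2 * H + 1) * (1 / 2 + (-1) ^ H * planckSum H b)
        - if H = 0 then 1 / (2 * (b : ℂ) ^ 2) else 0) := by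
  have hb0 : (b : ℂ) ≠ 0 := by exact_mod_cast hb.ne'
  have hN0 : (2 * (H : ℂ) + 1) ≠ 0 := by exact_mod_cast (by omega : 2 * H + 1 ≠ 0)
  have hsq : ((-1 : ℂ) ^ H) * (-1) ^ H = 1 := by rw [← mul_pow]; simp
  have hsum := (hasSum_sum fun j hj => (hasSum_div_sq_add_sq (z := b * rot H j)
    (by rw [Complex.re_ofReal_mul]; exact mul_pos hb (re_rot_pos hj))).mul_left ((-1 : ℂ) ^ j))
  rw [sum_neg_one_zpow_mul_coth] at hsum
  have hval : π / (2 * H + 1) / (b : ℂ) ^ (2 * H + 1) * (1 / 2 + (-1) ^ H * planckSum H b)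
        - (if H = 0 then 1 / (2 * (b : ℂ) ^ 2) else 0) =
      (-1) ^ H / ((2 * H + 1) * (b : ℂ) ^ (2 * H + 1)) *
        (π * ((-1) ^ H / 2 + planckSum H b) - if H = 0 then 1 / (2 * (b : ℂ)) else 0) := by
    rcases eq_or_ne H 0 with rfl | hH
    · simp
      field_simp
    · rw [if_neg hH, if_neg hH]
      field_simp
      linear_combination -π * hsq
  rw [hval]
  refine (hsum.mul_left _).congr_fun fun n => ?_
  have hpf := sum_neg_one_zpow_mul_rot_div H ((n : ℝ) + 1) hb
  push_cast at hpf ⊢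
  generalize (((n : ℂ) + 1) ^ (2 * H + 1)) ^ 2 + ((b : ℂ) ^ (2 * H + 1)) ^ 2 = D at hpf ⊢
  simp_rw [mul_div_assoc] at hpf
  simp_rw [mul_div_assoc, mul_left_comm _ (b : ℂ), ← Finset.mul_sum, hpf, mul_pow]
  field_simp
  linear_combination (-(b : ℂ) * b ^ (2 * H) * D⁻¹) * hsq

lemma norm_inv_exp_sub_one_le {z : ℂ} (hz : 0 < z.re) {p : ℕ} (hp : p ≠ 0) :
    ‖(Complex.exp z - 1)⁻¹‖ ≤ p.factorial / z.re ^ p := by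
  have hexp : z.re ^ p / p.factorial ≤ rexp z.re - 1 := by
    have htaylor := Real.sum_le_exp_of_nonneg hz.le (p + 1)
    obtain ⟨r, rfl⟩ := Nat.exists_eq_add_one_of_ne_zero hp
    rw [Finset.sum_range_succ, Finset.sum_range_succ'] at htaylor
    have hrest : 0 ≤ ∑ i ∈ Finset.range r, z.re ^ (i + 1) / (i + 1).factorial := by positivity
    simp only [pow_zero, Nat.factorial_zero, Nat.cast_one, div_one] at htaylor
    linarith
  have hnorm : rexp z.re - 1 ≤ ‖Complex.exp z - 1‖ := by
    have := norm_sub_norm_le (Complex.exp z) 1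
    rwa [Complex.norm_exp, norm_one] at this
  rw [norm_inv, ← inv_div]
  gcongr
  exact hexp.trans hnorm

lemma exists_norm_inv_exp_rot_sub_one_le (H : ℕ) {p : ℕ} (hp : p ≠ 0) :
    ∃ C : ℝ, ∀ j ∈ Finset.Icc (-(H : ℤ)) H, ∀ b : ℝ, 0 < b →
      ‖(Complex.exp (2 * π * b * rot H j) - 1)⁻¹‖ ≤ C / b ^ p := by
  have hc := cos_pi_mul_div_pos H
  set c := cos (π * H / (2 * H + 1))
  refine ⟨p.factorial / (2 * π * c) ^ p, fun j hj b hb => ?_⟩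
  have hle : 2 * π * c * b ≤ (2 * π * b * rot H j : ℂ).re := by
    have hre : (2 * π * b * rot H j : ℂ).re = 2 * π * (rot H j).re * b := by
      rw [show (2 * π * b : ℂ) = ((2 * π * b : ℝ) : ℂ) by push_cast; ring,
        Complex.re_ofReal_mul]
      ring
    rw [hre]
    gcongr
    exact cos_le_re_rot hj
  have hpos : 0 < 2 * π * c * b := by positivity
  calc ‖(Complex.exp (2 * π * b * rot H j) - 1)⁻¹‖
      ≤ p.factorial / (2 * π * b * rot H j : ℂ).re ^ p :=
        norm_inv_exp_sub_one_le (hpos.trans_le hle) hp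
    _ ≤ p.factorial / (2 * π * c * b) ^ p := by gcongr
    _ = p.factorial / (2 * π * c) ^ p / b ^ p := by rw [mul_pow _ b, div_div]

lemma exists_norm_planckSum_le (H : ℕ) {p : ℕ} (hp : p ≠ 0) :
    ∃ C : ℝ, ∀ b : ℝ, 0 < b → ‖planckSum H b‖ ≤ C / b ^ p := by
  obtain ⟨C, hC⟩ := exists_norm_inv_exp_rot_sub_one_le H hp
  refine ⟨(2 * H + 1) * C, fun b hb => ?_⟩
  have hterm : ∀ j ∈ Finset.Icc (-(H : ℤ)) H,
      ‖(-1 : ℂ) ^ j / (Complex.exp (2 * π * b * rot H j) - 1)‖ ≤ C / b ^ p := by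
    intro j hj
    rw [div_eq_mul_inv, norm_mul, norm_zpow, norm_neg, norm_one, one_zpow, one_mul]
    exact hC j hj b hb
  refine (norm_sum_le_of_le _ hterm).trans_eq ?_
  rw [Finset.sum_const, card_Icc_neg, nsmul_eq_mul, mul_div_assoc]
  push_cast
  rfl

/-- The positive real `b` with `b^(2H+1) = 2π(k+1)/A`: the argument of `planckSum` in the
coefficient of `cos (2π(k+1)u)`. -/
noncomputable def planckNode (H : ℕ) (A : ℝ) (k : ℕ) : ℝ :=
  (2 * π * (k + 1) / A) ^ ((1 : ℝ) / (2 * H + 1 : ℕ))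

lemma planckNode_pos (H : ℕ) {A : ℝ} (hA : 0 < A) (k : ℕ) : 0 < planckNode H A k := by
  unfold planckNode
  positivity

lemma planckNode_pow (H : ℕ) {A : ℝ} (hA : 0 < A) (k : ℕ) :
    planckNode H A k ^ (2 * H + 1) = 2 * π * (k + 1) / A := by
  rw [planckNode, one_div, Real.rpow_inv_natCast_pow (by positivity) (by omega)]

lemma summable_one_div_succ_sq : Summable fun k : ℕ => 1 / ((k : ℝ) + 1) ^ 2 := by
  exact_mod_cast (summable_nat_add_iff 1).mpr (Real.summable_one_div_nat_pow.mpr one_lt_two)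

lemma summable_zpow_mul_planckNode (H : ℕ) {A : ℝ} (hA : 0 < A) (e : ℤ) {F : ℝ → ℂ}
    (hF : ∀ p : ℕ, p ≠ 0 → ∃ C : ℝ, ∀ b : ℝ, 0 < b → ‖F b‖ ≤ C / b ^ p) :
    Summable fun k : ℕ => ((k : ℂ) + 1) ^ e * F (planckNode H A k) := by
  obtain ⟨C, h⟩ := hF ((2 * H + 1) * (e.natAbs + 2)) (by positivity)
  refine Summable.of_norm_bounded
    (summable_one_div_succ_sq.mul_left (C * (A / (2 * π)) ^ (e.natAbs + 2))) fun k => ?_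
  have hnode := h _ (planckNode_pos H hA k)
  rw [pow_mul, planckNode_pow H hA] at hnode
  have hpow : ‖((k : ℂ) + 1) ^ e‖ ≤ ((k : ℝ) + 1) ^ e.natAbs := by
    rw [norm_zpow, ← Nat.cast_add_one, Complex.norm_natCast, Nat.cast_add_one, ← zpow_natCast]
    exact zpow_le_zpow_right₀ (by simp) Int.le_natAbs
  calc ‖((k : ℂ) + 1) ^ e * F (planckNode H A k)‖
      ≤ ((k : ℝ) + 1) ^ e.natAbs * (C / (2 * π * (k + 1) / A) ^ (e.natAbs + 2)) := by
        rw [norm_mul]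
        gcongr
    _ = C * (A / (2 * π)) ^ (e.natAbs + 2) * (1 / ((k : ℝ) + 1) ^ 2) := by
        rw [div_pow, mul_pow, div_pow, pow_add ((k : ℝ) + 1)]
        field_simp

lemma summable_zpow_mul_planckSum (H : ℕ) {A : ℝ} (hA : 0 < A) (e : ℤ) :
    Summable fun k : ℕ => ((k : ℂ) + 1) ^ e * planckSum H (planckNode H A k) :=
  summable_zpow_mul_planckNode H hA e fun _ => exists_norm_planckSum_le H

/-! ### The transformation formula for positive exponents -/

/-- The function of `u` with Fourier series `∑ cos(2πku)/k^{2m+1}`, continued to all integers `m`.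
At `m = 0` the `if` selects the closed form, since `cosZeta u 1` is not given by a convergent
Dirichlet series in Mathlib. -/
noncomputable def oddCosZeta (m : ℤ) (u : ℝ) : ℂ :=
  if m = 0 then -(Real.log (2 * sin (π * u)) : ℂ) else cosZeta (u : UnitAddCircle) (2 * m + 1)

/-- The side `∑ n^{-(2Nm+1)} symKernel (A n^N) u`, `N = 2H + 1`, of the transformation formula. -/
noncomputable def kerSum (H : ℕ) (A : ℝ) (m : ℤ) (u : ℝ) : ℝ :=
  ∑' n : ℕ, ((n : ℝ) + 1) ^ (-(2 * (2 * H + 1) * m + 1)) *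
    symKernel (A * ((n : ℝ) + 1) ^ (2 * H + 1)) u

/-- The cosine series `∑ cos(2πku) k^{-(2m+1)} planckSum(b_k)` on the dual side of the
transformation formula, with `b_k^(2H+1) = 2πk/A`. -/
noncomputable def planckCos (H : ℕ) (A : ℝ) (m : ℤ) (u : ℝ) : ℂ :=
  ∑' k : ℕ, (cos (2 * π * (k + 1) * u) : ℂ) *
    (((k : ℂ) + 1) ^ (-(2 * m + 1)) * planckSum H (planckNode H A k))

/-- The coefficient of `cosZeta u (2j)` among the residual terms of the transformation formula. -/
noncomputable def residualCoeff (H : ℕ) (A : ℝ) (m : ℤ) (j : ℕ) : ℂ :=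
  4 * (-1) ^ (j + 1) * (A : ℂ) ^ (2 * (j : ℤ) - 1) / (2 * π) ^ (2 * j) *
    riemannZeta (2 * (2 * H + 1) * (m - j) + (2 * H + 1) + 1)

/-- The residual terms of the transformation formula. The coefficients vanish for `j ≥ m + 2`, so
that the value does not depend on the cutoff `K ≥ m + 2`. -/
noncomputable def residualSum (H : ℕ) (A : ℝ) (m : ℤ) (K : ℕ) (u : ℝ) : ℂ :=
  ∑ j ∈ Finset.range K, residualCoeff H A m j * cosZeta (u : UnitAddCircle) (2 * j)

/-- The dual side of the transformation formula: `kerSum H A m u = dualSum H A m K u` whenever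
`0 < u < 1` and `m + 2 ≤ K`. -/
noncomputable def dualSum (H : ℕ) (A : ℝ) (m : ℤ) (K : ℕ) (u : ℝ) : ℂ :=
  2 * (-1) ^ m / (2 * H + 1) * (A / (2 * π)) ^ (2 * m) *
    (1 / 2 * oddCosZeta m u + (-1) ^ H * planckCos H A m u) + residualSum H A m K u

lemma hasSum_cosZeta (u : ℝ) {s : ℕ} (hs : 2 ≤ s) :
    HasSum (fun k : ℕ => (cos (2 * π * (k + 1) * u) : ℂ) / ((k : ℂ) + 1) ^ s)
      (cosZeta (u : UnitAddCircle) s) := by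
  have h := (hasSum_nat_add_iff' 1).mpr
    (hasSum_nat_cosZeta u (s := s) (by rw [Complex.natCast_re]; exact_mod_cast hs))
  have hs0 : (s : ℂ) ≠ 0 := by exact_mod_cast (by omega : s ≠ 0)
  simp only [Finset.sum_range_one, Nat.cast_zero, Complex.zero_cpow hs0, div_zero, sub_zero] at h
  refine h.congr_fun fun k => ?_
  rw [Complex.cpow_natCast]
  push_cast
  ring_nf

lemma hasSum_riemannZeta {s : ℕ} (hs : 2 ≤ s) :
    HasSum (fun k : ℕ => 1 / ((k : ℂ) + 1) ^ s) (riemannZeta s) := by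
  have h := hasSum_cosZeta 0 hs
  rw [QuotientAddGroup.mk_zero, cosZeta_zero] at h
  simpa using h

lemma hasSum_planckCos (H : ℕ) {A : ℝ} (hA : 0 < A) (m : ℤ) (u : ℝ) :
    HasSum (fun k : ℕ => (cos (2 * π * (k + 1) * u) : ℂ) *
      (((k : ℂ) + 1) ^ (-(2 * m + 1)) * planckSum H (planckNode H A k))) (planckCos H A m u) := by
  refine (Summable.of_norm_bounded (summable_zpow_mul_planckSum H hA (-(2 * m + 1))).norm
    fun k => ?_).hasSum
  rw [norm_mul, Complex.norm_real, Real.norm_eq_abs]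
  exact mul_le_of_le_one_left (norm_nonneg _) (Real.abs_cos_le_one _)

lemma riemannZeta_neg_two_mul (H : ℕ) :
    riemannZeta (-(2 * H)) = if H = 0 then -1 / 2 else 0 := by
  rcases H with _ | n
  · simp [riemannZeta_zero]
  · rw [if_neg n.succ_ne_zero, ← riemannZeta_neg_two_mul_nat_add_one n]
    push_cast
    ring_nf

lemma residualCoeff_eq_zero (H : ℕ) (A : ℝ) {m : ℤ} {j : ℕ} (hj : m + 2 ≤ j) :
    residualCoeff H A m j = 0 := by
  obtain ⟨d, hd⟩ : ∃ d : ℕ, (j : ℤ) = m + 2 + d := ⟨(j - m - 2).toNat, by omega⟩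
  have hd' : (j : ℂ) = m + 2 + d := by exact_mod_cast hd
  have hzeta := riemannZeta_neg_two_mul_nat_add_one ((2 * H + 1) * d + 3 * H)
  have harg : 2 * (2 * (H : ℂ) + 1) * (m - j) + (2 * H + 1) + 1 =
      -2 * (((2 * H + 1) * d + 3 * H : ℕ) + 1) := by
    rw [hd']
    push_cast
    ring
  rw [residualCoeff, harg, hzeta, mul_zero]

lemma residualSum_eq_of_le (H : ℕ) (A : ℝ) {m : ℤ} {K L : ℕ} (hK : m + 2 ≤ K) (hL : m + 2 ≤ L)
    (u : ℝ) : residualSum H A m K u = residualSum H A m L u := by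
  wlog h : K ≤ L generalizing K L
  · exact (this hL hK (by omega)).symm
  refine Finset.sum_subset (by simpa using h) fun j _ hj => ?_
  rw [Finset.mem_range, not_lt] at hj
  rw [residualCoeff_eq_zero H A (by omega), zero_mul]

lemma residualCoeff_zero_mul_cosZeta_zero (H : ℕ) (A : ℝ) (m : ℕ) (u : ℝ) :
    residualCoeff H A m 0 * cosZeta (u : UnitAddCircle) (2 * (0 : ℕ)) =
      2 / A * riemannZeta ((2 * (2 * H + 1) * m + (2 * H + 1) + 1 : ℕ) : ℂ) := by
  rw [residualCoeff]
  simp only [Nat.cast_zero, mul_zero, cosZeta_apply_zero, zero_sub, zpow_neg_one]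
  push_cast
  ring_nf

lemma residualCoeff_succ_of_lt (H : ℕ) (A : ℝ) {m j : ℕ} (hj : j < m) :
    residualCoeff H A m (j + 1) = (-1) ^ j * 4 * (A : ℂ) ^ (2 * j + 1) / (2 * π) ^ (2 * (j + 1)) *
      riemannZeta ((2 * (2 * H + 1) * (m - 1 - j) + (2 * H + 1) + 1 : ℕ) : ℂ) := by
  obtain ⟨d, rfl⟩ : ∃ d, m = j + 1 + d := ⟨m - j - 1, by omega⟩
  rw [residualCoeff, show j + 1 + d - 1 - j = d by omega,
    show (2 * ((j + 1 : ℕ) : ℤ) - 1) = ((2 * j + 1 : ℕ) : ℤ) by push_cast; ring, zpow_natCast]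
  push_cast
  ring_nf

lemma residualCoeff_succ_self (H : ℕ) (A : ℝ) (m : ℕ) :
    residualCoeff H A m (m + 1) = -(if H = 0 then
      2 * (-1) ^ m * (A : ℂ) ^ (2 * m + 1) / (2 * π) ^ (2 * (m + 1)) else 0) := by
  have hzeta := riemannZeta_neg_two_mul H
  rw [residualCoeff, show 2 * (2 * (H : ℂ) + 1) * (((m : ℤ) : ℂ) - ((m + 1 : ℕ) : ℂ)) +
    (2 * H + 1) + 1 = -(2 * H) by push_cast; ring, hzeta,
    show (2 * ((m + 1 : ℕ) : ℤ) - 1) = ((2 * m + 1 : ℕ) : ℤ) by push_cast; ring, zpow_natCast]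
  split_ifs <;> ring

lemma inv_pow_mul_add_eq_sum {K : Type*} [Field K] {X Y : K} (hX : X ≠ 0) (hY : Y ≠ 0)
    (hXY : X + Y ≠ 0) (m : ℕ) :
    (X ^ m * (X + Y))⁻¹ = ∑ j ∈ Finset.range m, (-1) ^ j / (Y ^ (j + 1) * X ^ (m - j)) +
      (-1) ^ m / (Y ^ m * (X + Y)) := by
  induction m with
  | zero => simp
  | succ m ih =>
    have hshift : ∑ j ∈ Finset.range m, (-1) ^ j / (Y ^ (j + 1) * X ^ (m + 1 - j)) =
        X⁻¹ * ∑ j ∈ Finset.range m, (-1) ^ j / (Y ^ (j + 1) * X ^ (m - j)) := by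
      rw [Finset.mul_sum]
      refine Finset.sum_congr rfl fun j hj => ?_
      rw [Nat.sub_add_comm (Finset.mem_range.mp hj).le]
      field_simp
      exact (pow_succ' X _).symm
    rw [pow_succ', mul_assoc, mul_inv, ih, Finset.sum_range_succ, hshift, mul_add, add_assoc,
      Nat.add_sub_cancel_left]
    field_simp
    ring

lemma partial_fraction_pow {A t κ : ℝ} (hA : 0 < A) (ht : 0 < t) (hκ : 0 < κ) (H m : ℕ) :
    1 / t ^ (2 * (2 * H + 1) * m + 1) *
        (4 * (A * t ^ (2 * H + 1)) / ((A * t ^ (2 * H + 1)) ^ 2 + κ ^ 2)) =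
      ∑ j ∈ Finset.range m, (-1) ^ j * 4 * A ^ (2 * j + 1) / κ ^ (2 * (j + 1)) *
          (1 / t ^ (2 * (2 * H + 1) * (m - 1 - j) + (2 * H + 1) + 1)) +
        (-1) ^ m * (A / κ) ^ (2 * m) * (4 / A) *
          (t ^ (2 * H) / ((t ^ (2 * H + 1)) ^ 2 + (κ / A) ^ 2)) := by
  have hx : 0 < A * t ^ (2 * H + 1) := by positivity
  have hexpand := inv_pow_mul_add_eq_sum (pow_ne_zero 2 hx.ne') (pow_ne_zero 2 hκ.ne')
    (by positivity) m
  calc _ = 4 * A ^ (2 * m + 1) * t ^ (2 * H) * (((A * t ^ (2 * H + 1)) ^ 2) ^ m *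
        ((A * t ^ (2 * H + 1)) ^ 2 + κ ^ 2))⁻¹ := by
        field_simp
        ring
    _ = _ := by
        rw [hexpand, mul_add, Finset.mul_sum]
        congr 1
        · refine Finset.sum_congr rfl fun j hj => ?_
          obtain ⟨d, rfl⟩ : ∃ d, m = j + 1 + d :=
            ⟨m - j - 1, by have := Finset.mem_range.mp hj; omega⟩
          rw [show j + 1 + d - 1 - j = d by omega, show j + 1 + d - j = d + 1 by omega]
          field_simp
          ring
        · simp only [div_pow]
          field_simp
          ring

/-- The coefficient of `cos (2π(k+1)u)` in the `(n+1)`-st term of `kerSum`. -/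
noncomputable def kerCoeff (H : ℕ) (A : ℝ) (m n k : ℕ) : ℝ :=
  1 / ((n : ℝ) + 1) ^ (2 * (2 * H + 1) * m + 1) * (4 * (A * ((n : ℝ) + 1) ^ (2 * H + 1)) /
    ((A * ((n : ℝ) + 1) ^ (2 * H + 1)) ^ 2 + (2 * π * (k + 1)) ^ 2))

lemma kerCoeff_nonneg (H : ℕ) {A : ℝ} (hA : 0 < A) (m n k : ℕ) : 0 ≤ kerCoeff H A m n k := by
  unfold kerCoeff
  positivity

lemma kerCoeff_le (H : ℕ) {A : ℝ} (hA : 0 < A) {m : ℕ} (hm : 1 ≤ m) (n k : ℕ) :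
    kerCoeff H A m n k ≤ 4 * A * (1 / ((n : ℝ) + 1) ^ 2 * (1 / ((k : ℝ) + 1) ^ 2)) := by
  have hk : ((k : ℝ) + 1) ^ 2 ≤ (A * ((n : ℝ) + 1) ^ (2 * H + 1)) ^ 2 + (2 * π * (k + 1)) ^ 2 := by
    have hπ : (1 : ℝ) ≤ (2 * π) ^ 2 := by nlinarith [Real.pi_gt_three]
    rw [mul_pow (2 * π)]
    nlinarith [sq_nonneg (A * ((n : ℝ) + 1) ^ (2 * H + 1)), sq_nonneg ((k : ℝ) + 1)]
  have hn : ((n : ℝ) + 1) ^ (2 + (2 * H + 1)) ≤ ((n : ℝ) + 1) ^ (2 * (2 * H + 1) * m + 1) :=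
    pow_le_pow_right₀ (by simp) (by nlinarith)
  calc kerCoeff H A m n k
      ≤ 1 / ((n : ℝ) + 1) ^ (2 + (2 * H + 1)) *
        (4 * (A * ((n : ℝ) + 1) ^ (2 * H + 1)) / ((k : ℝ) + 1) ^ 2) := by
        unfold kerCoeff
        gcongr
    _ = 4 * A * (1 / ((n : ℝ) + 1) ^ 2 * (1 / ((k : ℝ) + 1) ^ 2)) := by
        rw [pow_add]
        field_simp

lemma summable_cos_mul_kerCoeff (H : ℕ) {A : ℝ} (hA : 0 < A) {m : ℕ} (hm : 1 ≤ m) (u : ℝ) :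
    Summable fun p : ℕ × ℕ => cos (2 * π * (p.2 + 1) * u) * kerCoeff H A m p.1 p.2 := by
  refine Summable.of_norm_bounded ((summable_one_div_succ_sq.mul_of_nonneg
    summable_one_div_succ_sq (fun _ => by positivity) fun _ => by positivity).mul_left (4 * A))
    fun p => ?_
  rw [norm_mul, Real.norm_of_nonneg (kerCoeff_nonneg H hA m p.1 p.2)]
  exact (mul_le_of_le_one_left (kerCoeff_nonneg H hA m p.1 p.2) (Real.abs_cos_le_one _)).trans
    (kerCoeff_le H hA hm p.1 p.2)

lemma mul_planckSum_eq_residualCoeff_add {H : ℕ} {A : ℝ} (hA : 0 < A) (m k : ℕ) :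
    (-1) ^ m * (A / (2 * π * (k + 1))) ^ (2 * m) * (4 / (A : ℂ)) *
        (π / (2 * H + 1) / (planckNode H A k : ℂ) ^ (2 * H + 1) *
          (1 / 2 + (-1) ^ H * planckSum H (planckNode H A k)) -
          if H = 0 then 1 / (2 * (planckNode H A k : ℂ) ^ 2) else 0) =
      residualCoeff H A m (m + 1) / ((k : ℂ) + 1) ^ (2 * (m + 1)) +
        2 * (-1) ^ m / (2 * H + 1) * (A / (2 * π)) ^ (2 * m) *
          ((1 / 2 + (-1) ^ H * planckSum H (planckNode H A k)) / ((k : ℂ) + 1) ^ (2 * m + 1)) := by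
  have hA0 : (A : ℂ) ≠ 0 := by exact_mod_cast hA.ne'
  have hN0 : (2 * (H : ℂ) + 1) ≠ 0 := by exact_mod_cast (by omega : 2 * H + 1 ≠ 0)
  have hpi : (π : ℂ) ≠ 0 := by exact_mod_cast Real.pi_ne_zero
  have hk : (k : ℂ) + 1 ≠ 0 := k.cast_add_one_ne_zero
  have hnode : (planckNode H A k : ℂ) ^ (2 * H + 1) = 2 * π * (k + 1) / A := by
    exact_mod_cast planckNode_pow H hA k
  rw [residualCoeff_succ_self, hnode]
  rcases eq_or_ne H 0 with rfl | hH
  · simp only [mul_zero, zero_add, pow_one] at hnode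
    simp only [↓reduceIte, hnode, div_pow, mul_pow]
    push_cast
    field_simp
    ring
  · rw [if_neg hH, if_neg hH]
    simp only [div_pow, mul_pow]
    field_simp
    ring

lemma hasSum_kerCoeff (H : ℕ) {A : ℝ} (hA : 0 < A) (m k : ℕ) :
    HasSum (fun n : ℕ => (kerCoeff H A m n k : ℂ))
      (∑ j ∈ Finset.range (m + 1), residualCoeff H A m (j + 1) / ((k : ℂ) + 1) ^ (2 * (j + 1)) +
        2 * (-1) ^ m / (2 * H + 1) * (A / (2 * π)) ^ (2 * m) *
          ((1 / 2 + (-1) ^ H * planckSum H (planckNode H A k)) / ((k : ℂ) + 1) ^ (2 * m + 1))) := by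
  have hA0 : (A : ℂ) ≠ 0 := by exact_mod_cast hA.ne'
  have hk : (k : ℂ) + 1 ≠ 0 := k.cast_add_one_ne_zero
  have hres := hasSum_sum (s := Finset.range m) fun j _ =>
    (hasSum_riemannZeta (s := 2 * (2 * H + 1) * (m - 1 - j) + (2 * H + 1) + 1)
      (by omega)).mul_left ((-1) ^ j * 4 * (A : ℂ) ^ (2 * j + 1) /
        (2 * π * (k + 1)) ^ (2 * (j + 1)))
  have hplanck := (hasSum_pow_div_pow_add_pow H (planckNode_pos H hA k)).mul_left
    ((-1) ^ m * (A / (2 * π * (k + 1))) ^ (2 * m) * (4 / (A : ℂ)))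
  have hfirst : ∀ j ∈ Finset.range m, (-1) ^ j * 4 * (A : ℂ) ^ (2 * j + 1) /
        (2 * π * (k + 1)) ^ (2 * (j + 1)) *
        riemannZeta ((2 * (2 * H + 1) * (m - 1 - j) + (2 * H + 1) + 1 : ℕ) : ℂ) =
      residualCoeff H A m (j + 1) / ((k : ℂ) + 1) ^ (2 * (j + 1)) := by
    intro j hj
    rw [residualCoeff_succ_of_lt H A (Finset.mem_range.mp hj), mul_pow _ ((k : ℂ) + 1)]
    field_simp
  rw [Finset.sum_congr rfl hfirst] at hres
  rw [mul_planckSum_eq_residualCoeff_add hA] at hplanck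
  rw [Finset.sum_range_succ, add_assoc]
  refine (hres.add hplanck).congr_fun fun n => ?_
  rw [kerCoeff, partial_fraction_pow hA (by positivity) (by positivity), planckNode_pow H hA]
  push_cast
  rfl

lemma kerSum_eq_tsum_add {H : ℕ} {A : ℝ} (hA : 0 < A) {m : ℕ} (hm : 1 ≤ m) {u : ℝ}
    (hu : u ∈ Icc (0 : ℝ) 1) :
    (kerSum H A m u : ℂ) = ((∑' p : ℕ × ℕ,
      cos (2 * π * (p.2 + 1) * u) * kerCoeff H A m p.1 p.2 : ℝ) : ℂ) +
        residualCoeff H A m 0 * cosZeta (u : UnitAddCircle) (2 * (0 : ℕ)) := by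
  have hrow (n : ℕ) : HasSum (fun k : ℕ => cos (2 * π * (k + 1) * u) * kerCoeff H A m n k)
      (1 / ((n : ℝ) + 1) ^ (2 * (2 * H + 1) * m + 1) *
        (symKernel (A * ((n : ℝ) + 1) ^ (2 * H + 1)) u -
          2 / (A * ((n : ℝ) + 1) ^ (2 * H + 1)))) := by
    refine ((hasSum_symKernel (by positivity) hu).mul_left _).congr_fun fun k => ?_
    rw [kerCoeff]
    ring
  have hsum := (Complex.hasSum_ofReal.mpr
    ((summable_cos_mul_kerCoeff H hA hm u).hasSum.prod_fiberwise hrow)).add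
    ((hasSum_riemannZeta (s := 2 * (2 * H + 1) * m + (2 * H + 1) + 1) (by omega)).mul_left
      (2 / (A : ℂ)))
  rw [residualCoeff_zero_mul_cosZeta_zero, kerSum, Complex.ofReal_tsum, ← hsum.tsum_eq]
  refine tsum_congr fun n => ?_
  have hn : (n : ℂ) + 1 ≠ 0 := n.cast_add_one_ne_zero
  rw [zpow_neg, show (2 * (2 * (H : ℤ) + 1) * m + 1) = ((2 * (2 * H + 1) * m + 1 : ℕ) : ℤ) by
    push_cast; ring, zpow_natCast]
  push_cast
  rw [add_assoc _ (2 * H + 1) 1, add_comm (2 * H + 1) 1, ← add_assoc,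
    pow_add _ (2 * (2 * H + 1) * m + 1)]
  field_simp
  ring

lemma hasSum_cos_mul_tsum_kerCoeff {H : ℕ} {A : ℝ} (hA : 0 < A) {m : ℕ} (hm : 1 ≤ m) (u : ℝ) :
    HasSum (fun k : ℕ => (cos (2 * π * (k + 1) * u) : ℂ) *
      (∑ j ∈ Finset.range (m + 1), residualCoeff H A m (j + 1) / ((k : ℂ) + 1) ^ (2 * (j + 1)) +
        2 * (-1) ^ m / (2 * H + 1) * (A / (2 * π)) ^ (2 * m) *
          ((1 / 2 + (-1) ^ H * planckSum H (planckNode H A k)) / ((k : ℂ) + 1) ^ (2 * m + 1))))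
      (∑ j ∈ Finset.range (m + 1),
        residualCoeff H A m (j + 1) * cosZeta (u : UnitAddCircle) (2 * (j + 1 : ℕ)) +
        2 * (-1) ^ m / (2 * H + 1) * (A / (2 * π)) ^ (2 * m) *
          (1 / 2 * oddCosZeta m u + (-1) ^ H * planckCos H A m u)) := by
  have hres := hasSum_sum (s := Finset.range (m + 1)) fun j _ =>
    (hasSum_cosZeta u (s := 2 * (j + 1)) (by omega)).mul_left (residualCoeff H A m (j + 1))
  have hodd := (hasSum_cosZeta u (s := 2 * m + 1) (by omega)).mul_left (1 / 2 : ℂ)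
  have hplanck := (hasSum_planckCos H hA m u).mul_left ((-1 : ℂ) ^ H)
  have hm0 : (m : ℤ) ≠ 0 := by exact_mod_cast (by omega : m ≠ 0)
  rw [oddCosZeta, if_neg hm0]
  push_cast at hres hodd hplanck ⊢
  refine (hres.add ((hodd.add hplanck).mul_left
    (2 * (-1 : ℂ) ^ m / (2 * H + 1) * (A / (2 * π)) ^ (2 * m)))).congr_fun fun k => ?_
  rw [zpow_neg, show (2 * (m : ℤ) + 1) = ((2 * m + 1 : ℕ) : ℤ) by push_cast; ring, zpow_natCast,
    mul_add, Finset.mul_sum]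
  congr 1
  · exact Finset.sum_congr rfl fun j _ => by ring
  · generalize ((k : ℂ) + 1) ^ (2 * m + 1) = d
    ring

lemma kerSum_eq_dualSum_of_pos {H : ℕ} {A : ℝ} (hA : 0 < A) {m : ℕ} (hm : 1 ≤ m) {K : ℕ}
    (hK : m + 2 ≤ K) {u : ℝ} (hu : u ∈ Icc (0 : ℝ) 1) :
    (kerSum H A m u : ℂ) = dualSum H A m K u := by
  have hpair := (Equiv.prodComm ℕ ℕ).hasSum_iff.mpr
    (Complex.hasSum_ofReal.mpr (summable_cos_mul_kerCoeff H hA hm u).hasSum)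
  have hcol (k : ℕ) := (hasSum_kerCoeff H hA m k).mul_left (cos (2 * π * (k + 1) * u) : ℂ)
  have hswap := hpair.prod_fiberwise fun k => (hcol k).congr_fun fun n => by
    simp only [Function.comp_apply, Equiv.prodComm_apply, Prod.fst_swap, Prod.snd_swap,
      Complex.ofReal_mul]
  rw [dualSum, residualSum_eq_of_le H A (K := K) (L := m + 1 + 1) (by exact_mod_cast hK)
    (by push_cast; omega), kerSum_eq_tsum_add hA hm hu,
    hswap.unique (hasSum_cos_mul_tsum_kerCoeff hA hm u), residualSum,
    Finset.sum_range_succ' _ (m + 1),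
    zpow_natCast, show (2 * (m : ℤ)) = ((2 * m : ℕ) : ℤ) by push_cast; ring, zpow_natCast]
  ring

/-! ### Second derivatives and descent in the exponent -/

section NormallySummable

variable {E : Type*} [NormedAddCommGroup E] {ι : Type*}

lemma exists_mem_Ioo_one_sub {u : ℝ} (hu : u ∈ Ioo (0 : ℝ) 1) : ∃ δ > 0, u ∈ Ioo δ (1 - δ) := by
  have h := lt_min hu.1 (sub_pos.mpr hu.2)
  exact ⟨min u (1 - u) / 2, half_pos h, by linarith [min_le_left u (1 - u)],
    by linarith [min_le_right u (1 - u)]⟩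

/-- Normal convergence of the series `∑ f i` on the intervals `(δ, 1 - δ)`, the hypothesis for
differentiating it termwise on `(0, 1)`. -/
def NormallySummable (f : ι → ℝ → E) : Prop :=
  ∀ δ > 0, ∃ v : ι → ℝ, Summable v ∧ ∀ i, ∀ u ∈ Ioo δ (1 - δ), ‖f i u‖ ≤ v i

lemma NormallySummable.of_norm_le {f : ι → ℝ → E} {v : ι → ℝ} (hv : Summable v)
    (h : ∀ i u, ‖f i u‖ ≤ v i) : NormallySummable f :=
  fun _ _ => ⟨v, hv, fun i u _ => h i u⟩

lemma NormallySummable.mono {f : ι → ℝ → E} {F : Type*} [NormedAddCommGroup F]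
    {g : ι → ℝ → F} (h : NormallySummable f) (C : ℝ) (hC : 0 ≤ C)
    (hle : ∀ i, ∀ u ∈ Ioo (0 : ℝ) 1, ‖g i u‖ ≤ C * ‖f i u‖) : NormallySummable g := by
  intro δ hδ
  obtain ⟨v, hv, hb⟩ := h δ hδ
  exact ⟨fun i => C * v i, hv.mul_left C, fun i u hu =>
    (hle i u ⟨hδ.trans hu.1, by linarith [hu.2]⟩).trans
      (mul_le_mul_of_nonneg_left (hb i u hu) hC)⟩

lemma NormallySummable.summable [CompleteSpace E] {f : ι → ℝ → E} (h : NormallySummable f) {u : ℝ}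
    (hu : u ∈ Ioo (0 : ℝ) 1) : Summable fun i => f i u := by
  obtain ⟨δ, hδ, hu⟩ := exists_mem_Ioo_one_sub hu
  obtain ⟨v, hv, hb⟩ := h δ hδ
  exact Summable.of_norm_bounded hv fun i => hb i u hu

end NormallySummable

section SecondDeriv

variable {E : Type*} [NormedAddCommGroup E] [NormedSpace ℝ E] {ι : Type*}

/-- `f` is twice differentiable on `(0, 1)` with second derivative `g`. -/
def HasSecondDeriv (f g : ℝ → E) : Prop :=
  ∃ f' : ℝ → E, ∀ u ∈ Ioo (0 : ℝ) 1, HasDerivAt f (f' u) u ∧ HasDerivAt f' (g u) u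

lemma HasSecondDeriv.const (c : E) : HasSecondDeriv (fun _ => c) fun _ => 0 :=
  ⟨fun _ => 0, fun u _ => ⟨hasDerivAt_const u c, hasDerivAt_const u 0⟩⟩

lemma HasSecondDeriv.add {f g f₁ g₁ : ℝ → E} (h : HasSecondDeriv f g)
    (h₁ : HasSecondDeriv f₁ g₁) :
    HasSecondDeriv (fun u => f u + f₁ u) (fun u => g u + g₁ u) := by
  obtain ⟨f', h⟩ := h
  obtain ⟨f₁', h₁⟩ := h₁
  exact ⟨fun u => f' u + f₁' u, fun u hu =>
    ⟨(h u hu).1.add (h₁ u hu).1, (h u hu).2.add (h₁ u hu).2⟩⟩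

lemma HasSecondDeriv.const_mul {𝔸 : Type*} [NormedRing 𝔸] [NormedAlgebra ℝ 𝔸] {f g : ℝ → 𝔸}
    (c : 𝔸) (h : HasSecondDeriv f g) : HasSecondDeriv (fun u => c * f u) fun u => c * g u := by
  obtain ⟨f', h⟩ := h
  exact ⟨fun u => c * f' u, fun u hu => ⟨(h u hu).1.const_mul c, (h u hu).2.const_mul c⟩⟩

lemma HasSecondDeriv.ofReal {f g : ℝ → ℝ} (h : HasSecondDeriv f g) :
    HasSecondDeriv (fun u => (f u : ℂ)) fun u => (g u : ℂ) := by
  obtain ⟨f', h⟩ := h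
  exact ⟨fun u => f' u, fun u hu => ⟨(h u hu).1.ofReal_comp, (h u hu).2.ofReal_comp⟩⟩

lemma HasSecondDeriv.comp_one_sub {f g : ℝ → E} (h : HasSecondDeriv f g) :
    HasSecondDeriv (fun u => f (1 - u)) fun u => g (1 - u) := by
  obtain ⟨f', h⟩ := h
  refine ⟨fun u => -f' (1 - u), fun u hu => ?_⟩
  have hu' : 1 - u ∈ Ioo (0 : ℝ) 1 := ⟨by linarith [hu.2], by linarith [hu.1]⟩
  exact ⟨(h _ hu').1.comp_const_sub 1 u,
    ((h _ hu').2.comp_const_sub 1 u).neg.congr_deriv (neg_neg _)⟩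

lemma HasSecondDeriv.sum {s : Finset ι} {f g : ι → ℝ → E}
    (h : ∀ i ∈ s, HasSecondDeriv (f i) (g i)) :
    HasSecondDeriv (fun u => ∑ i ∈ s, f i u) (fun u => ∑ i ∈ s, g i u) := by
  induction s using Finset.cons_induction with
  | empty => simpa only [Finset.sum_empty] using HasSecondDeriv.const (0 : E)
  | cons a s ha ih =>
    simp_rw [Finset.sum_cons]
    exact (h a (Finset.mem_cons_self a s)).add (ih fun i hi => h i (Finset.mem_cons_of_mem hi))

lemma HasSecondDeriv.congr {f g f₁ g₁ : ℝ → E} (h : HasSecondDeriv f g)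
    (hf : ∀ u ∈ Ioo (0 : ℝ) 1, f₁ u = f u) (hg : ∀ u ∈ Ioo (0 : ℝ) 1, g₁ u = g u) :
    HasSecondDeriv f₁ g₁ := by
  obtain ⟨f', h⟩ := h
  refine ⟨f', fun u hu => ⟨(h u hu).1.congr_of_eventuallyEq ?_, hg u hu ▸ (h u hu).2⟩⟩
  filter_upwards [isOpen_Ioo.mem_nhds hu] with v hv using hf v hv

lemma HasSecondDeriv.unique {f g g₁ : ℝ → E} (h : HasSecondDeriv f g) (h₁ : HasSecondDeriv f g₁)
    {u : ℝ} (hu : u ∈ Ioo (0 : ℝ) 1) : g u = g₁ u := by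
  obtain ⟨f', h⟩ := h
  obtain ⟨f₁', h₁⟩ := h₁
  have heq : f' =ᶠ[𝓝 u] f₁' := by
    filter_upwards [isOpen_Ioo.mem_nhds hu] with v hv using (h v hv).1.unique (h₁ v hv).1
  exact (h u hu).2.unique ((h₁ u hu).2.congr_of_eventuallyEq heq)

variable [CompleteSpace E]

lemma NormallySummable.hasDerivAt_tsum {f f' : ι → ℝ → E} (h' : NormallySummable f')
    (hf : ∀ i, ∀ u ∈ Ioo (0 : ℝ) 1, HasDerivAt (f i) (f' i u) u) {u : ℝ}
    (hu : u ∈ Ioo (0 : ℝ) 1) (hs : Summable fun i => f i u) :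
    HasDerivAt (fun u => ∑' i, f i u) (∑' i, f' i u) u := by
  obtain ⟨δ, hδ, hδu⟩ := exists_mem_Ioo_one_sub hu
  obtain ⟨v, hv, hb⟩ := h' δ hδ
  exact hasDerivAt_tsum_of_isPreconnected hv isOpen_Ioo isPreconnected_Ioo
    (fun i y hy => hf i y ⟨hδ.trans hy.1, by linarith [hy.2]⟩) hb hδu hs hδu

lemma hasSecondDeriv_tsum {f f' g : ι → ℝ → E} (h : NormallySummable f)
    (h' : NormallySummable f') (h'' : NormallySummable g)
    (hf : ∀ i, ∀ u ∈ Ioo (0 : ℝ) 1, HasDerivAt (f i) (f' i u) u)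
    (hf' : ∀ i, ∀ u ∈ Ioo (0 : ℝ) 1, HasDerivAt (f' i) (g i u) u) :
    HasSecondDeriv (fun u => ∑' i, f i u) (fun u => ∑' i, g i u) :=
  ⟨fun u => ∑' i, f' i u, fun _ hu =>
    ⟨h'.hasDerivAt_tsum hf hu (h.summable hu), h''.hasDerivAt_tsum hf' hu (h'.summable hu)⟩⟩

end SecondDeriv

lemma hasSecondDeriv_tsum_cos {ι : Type*} {a : ι → ℝ} {c : ι → ℂ} (ha : ∀ k, 1 ≤ a k)
    (hc : Summable fun k => a k ^ 2 * ‖c k‖) :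
    HasSecondDeriv (fun u => ∑' k, (cos (a k * u) : ℂ) * c k)
      (fun u => ∑' k, (cos (a k * u) : ℂ) * (-(a k) ^ 2 * c k)) := by
  have hsq (k) : 1 ≤ a k ^ 2 := one_le_pow₀ (ha k)
  have hnorm (x : ℝ) (hx : |x| ≤ 1) (z : ℂ) : ‖(x : ℂ) * z‖ ≤ ‖z‖ := by
    rw [norm_mul, Complex.norm_real, Real.norm_eq_abs]
    exact mul_le_of_le_one_left (norm_nonneg z) hx
  refine hasSecondDeriv_tsum (f' := fun k u => (sin (a k * u) : ℂ) * (-(a k) * c k))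
    (.of_norm_le hc fun k u => (hnorm _ (abs_cos_le_one _) _).trans ?_)
    (.of_norm_le hc fun k u => (hnorm _ (abs_sin_le_one _) _).trans ?_)
    (.of_norm_le hc fun k u => (hnorm _ (abs_cos_le_one _) _).trans ?_)
    (fun k u _ => ?_) fun k u _ => ?_
  · exact le_mul_of_one_le_left (norm_nonneg _) (hsq k)
  · rw [norm_mul, norm_neg, Complex.norm_real, Real.norm_of_nonneg (zero_le_one.trans (ha k))]
    gcongr
    exact le_self_pow₀ (ha k) two_ne_zero
  · rw [norm_mul, norm_neg, norm_pow, Complex.norm_real, Real.norm_eq_abs, sq_abs]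
  · have hcos : HasDerivAt (fun u => cos (a k * u)) (-sin (a k * u) * a k) u := by
      simpa using ((hasDerivAt_id u).const_mul (a k)).cos
    refine (hcos.ofReal_comp.mul_const (c k)).congr_deriv ?_
    push_cast
    ring
  · have hsin : HasDerivAt (fun u => sin (a k * u)) (cos (a k * u) * a k) u := by
      simpa using ((hasDerivAt_id u).const_mul (a k)).sin
    refine (hsin.ofReal_comp.mul_const (-(a k : ℂ) * c k)).congr_deriv ?_
    push_cast
    ring

lemma hasSecondDeriv_tsum_cos_two_pi {c : ℕ → ℂ}
    (hc : Summable fun k : ℕ => ((k : ℂ) + 1) ^ 2 * c k) :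
    HasSecondDeriv (fun u => ∑' k : ℕ, (cos (2 * π * (k + 1) * u) : ℂ) * c k)
      (fun u => -(4 * π ^ 2) * ∑' k : ℕ, (cos (2 * π * (k + 1) * u) : ℂ) *
        (((k : ℂ) + 1) ^ 2 * c k)) := by
  refine (hasSecondDeriv_tsum_cos (a := fun k : ℕ => 2 * π * ((k : ℝ) + 1)) (c := c)
    (fun k => ?_) ((hc.norm.mul_left ((2 * π) ^ 2)).congr fun k => ?_)).congr
    (fun _ _ => rfl) fun u _ => ?_
  · nlinarith [Real.pi_gt_three, (Nat.cast_nonneg k : (0 : ℝ) ≤ k)]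
  · rw [norm_mul, norm_pow, ← Nat.cast_add_one, Complex.norm_natCast, mul_pow]
    push_cast
    ring
  · rw [← tsum_mul_left]
    refine tsum_congr fun k => ?_
    push_cast
    ring

lemma hasSecondDeriv_planckCos (H : ℕ) {A : ℝ} (hA : 0 < A) (m : ℤ) :
    HasSecondDeriv (planckCos H A m) (fun u => -(4 * π ^ 2) * planckCos H A (m - 1) u) := by
  have hshift (k : ℕ) : ((k : ℂ) + 1) ^ 2 *
      (((k : ℂ) + 1) ^ (-(2 * m + 1)) * planckSum H (planckNode H A k)) =
      ((k : ℂ) + 1) ^ (-(2 * (m - 1) + 1)) * planckSum H (planckNode H A k) := by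
    rw [← mul_assoc, ← zpow_natCast, ← zpow_add₀ k.cast_add_one_ne_zero]
    congr 2
    push_cast
    ring
  refine (hasSecondDeriv_tsum_cos_two_pi
    ((summable_zpow_mul_planckSum H hA _).congr fun k => (hshift k).symm)).congr
    (fun _ _ => rfl) fun u _ => ?_
  simp_rw [hshift]
  rfl

lemma hasSecondDeriv_cosZeta_add_two {s : ℕ} (hs : 2 ≤ s) :
    HasSecondDeriv (fun u => cosZeta (u : UnitAddCircle) (s + 2 : ℕ))
      (fun u => -(4 * π ^ 2) * cosZeta (u : UnitAddCircle) s) := by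
  have hshift (k : ℕ) : ((k : ℂ) + 1) ^ 2 * (1 / ((k : ℂ) + 1) ^ (s + 2)) =
      1 / ((k : ℂ) + 1) ^ s := by
    have hk : (k : ℂ) + 1 ≠ 0 := k.cast_add_one_ne_zero
    field_simp
    ring
  refine (hasSecondDeriv_tsum_cos_two_pi
    ((hasSum_riemannZeta hs).summable.congr fun k => (hshift k).symm)).congr
    (fun u _ => ?_) fun u _ => ?_
  · simp_rw [mul_one_div]
    exact (hasSum_cosZeta u (by omega)).tsum_eq.symm
  · simp_rw [hshift, mul_one_div]
    rw [(hasSum_cosZeta u hs).tsum_eq]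

lemma cosZeta_two {u : ℝ} (hu : u ∈ Icc (0 : ℝ) 1) :
    cosZeta (u : UnitAddCircle) 2 = π ^ 2 * ((u : ℂ) ^ 2 - u + 1 / 6) := by
  have hbernoulli : ((Polynomial.bernoulli 2).map (algebraMap ℚ ℂ)).eval (u : ℂ) =
      u ^ 2 - u + 1 / 6 := by
    simp [Polynomial.bernoulli, Finset.sum_range_succ, Polynomial.eval_monomial]
    ring
  have h := cosZeta_two_mul_nat one_ne_zero hu
  simp only [Nat.cast_one, mul_one] at h
  rw [h, hbernoulli, Nat.factorial_two]
  push_cast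
  ring

lemma hasSecondDeriv_cosZeta_two :
    HasSecondDeriv (fun u => cosZeta (u : UnitAddCircle) 2)
      (fun _ => (2 * π ^ 2 : ℂ)) := by
  refine HasSecondDeriv.congr (f := fun u : ℝ => (π ^ 2 * ((u : ℂ) ^ 2 - u + 1 / 6)))
    (g := fun _ => (2 * π ^ 2 : ℂ)) ?_ (fun u hu => cosZeta_two (Ioo_subset_Icc_self hu))
    fun _ _ => rfl
  have hid (u : ℝ) : HasDerivAt (fun x : ℝ => (x : ℂ)) 1 u := (hasDerivAt_id u).ofReal_comp
  refine ⟨fun u => π ^ 2 * (2 * (u : ℂ) - 1), fun u _ => ⟨?_, ?_⟩⟩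
  · refine (((((hid u).pow 2).sub (hid u)).add_const (1 / 6 : ℂ)).const_mul
      ((π : ℂ) ^ 2)).congr_deriv ?_
    simp
  · refine ((((hid u).const_mul (2 : ℂ)).sub_const (1 : ℂ)).const_mul
      ((π : ℂ) ^ 2)).congr_deriv ?_
    ring

lemma hasSecondDeriv_cosZeta_even (j : ℕ) :
    HasSecondDeriv (fun u => cosZeta (u : UnitAddCircle) (2 * (j + 1 : ℕ)))
      (fun u => -(4 * π ^ 2) * cosZeta (u : UnitAddCircle) (2 * j)) := by
  rcases Nat.eq_zero_or_pos j with rfl | hj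
  · refine hasSecondDeriv_cosZeta_two.congr (fun u _ => by simp) fun u _ => ?_
    rw [Nat.cast_zero, mul_zero, cosZeta_apply_zero]
    ring
  · refine (hasSecondDeriv_cosZeta_add_two (s := 2 * j) (by omega)).congr (fun u _ => ?_)
      fun u _ => ?_
    · push_cast
      ring_nf
    · push_cast
      rfl

lemma residualCoeff_succ_mul (H : ℕ) {A : ℝ} (hA : 0 < A) (m : ℤ) (j : ℕ) :
    residualCoeff H A m (j + 1) * -(4 * π ^ 2) = A ^ 2 * residualCoeff H A (m - 1) j := by
  have hA0 : (A : ℂ) ≠ 0 := by exact_mod_cast hA.ne'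
  have hpow : (A : ℂ) ^ (2 * ((j + 1 : ℕ) : ℤ) - 1) = A ^ (2 * (j : ℤ) - 1) * A ^ 2 := by
    rw [← zpow_natCast (A : ℂ) 2, ← zpow_add₀ hA0]
    congr 1
    push_cast
    ring
  have harg : (2 * (2 * H + 1) * (m - (j + 1 : ℕ)) + (2 * H + 1) + 1 : ℂ) =
      2 * (2 * H + 1) * ((m - 1 : ℤ) - j) + (2 * H + 1) + 1 := by
    push_cast
    ring
  have _ : (π : ℂ) ≠ 0 := by exact_mod_cast Real.pi_ne_zero
  rw [residualCoeff, residualCoeff, hpow, harg, mul_add 2 j 1, pow_add (2 * π : ℂ)]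
  field_simp
  ring

lemma hasSecondDeriv_residualSum (H : ℕ) {A : ℝ} (hA : 0 < A) (m : ℤ) (K : ℕ) :
    HasSecondDeriv (residualSum H A m (K + 1)) (fun u => A ^ 2 * residualSum H A (m - 1) K u) := by
  refine ((HasSecondDeriv.sum (s := Finset.range K) fun j _ =>
    (hasSecondDeriv_cosZeta_even j).const_mul (residualCoeff H A m (j + 1))).add
      (HasSecondDeriv.const (residualCoeff H A m 0 * (-1 / 2)))).congr ?_ ?_
  · intro u _
    rw [residualSum, Finset.sum_range_succ', Nat.cast_zero, mul_zero, cosZeta_apply_zero]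
  · intro u _
    simp_rw [add_zero, ← mul_assoc, residualCoeff_succ_mul H hA, residualSum, Finset.mul_sum,
      mul_assoc]

lemma summable_zpow_mul_exp_neg (H : ℕ) (e : ℤ) {c : ℝ} (hc : 0 < c) :
    Summable fun n : ℕ => ((n : ℝ) + 1) ^ e * rexp (-(c * ((n : ℝ) + 1) ^ (2 * H + 1))) := by
  have h := (summable_nat_add_iff 1).mpr (Real.summable_pow_mul_exp_neg_nat_mul e.natAbs hc)
  refine Summable.of_nonneg_of_le (fun n => by positivity) (fun n => ?_) h
  have hk : (1 : ℝ) ≤ (n : ℝ) + 1 := by simp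
  push_cast
  refine mul_le_mul ?_ ?_ (by positivity) (by positivity)
  · rw [← zpow_natCast]
    exact zpow_le_zpow_right₀ hk Int.le_natAbs
  · rw [Real.exp_le_exp, neg_mul, neg_le_neg_iff]
    exact mul_le_mul_of_nonneg_left (le_self_pow₀ hk (by omega)) hc.le

/-- The derivative of `symKernel x` is `x * symKernelDeriv x`. -/
noncomputable def symKernelDeriv (x u : ℝ) : ℝ :=
  (-rexp (-(u * x)) + rexp (-((1 - u) * x))) / (1 - rexp (-x))

lemma hasDerivAt_exp_neg_mul (x u : ℝ) :
    HasDerivAt (fun u => rexp (-(u * x))) (-(x * rexp (-(u * x)))) u := by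
  have hlin : HasDerivAt (fun u => -(u * x)) (-x) u := by
    simpa only [neg_mul, mul_neg] using hasDerivAt_mul_const (-x)
  exact hlin.exp.congr_deriv (by ring)

lemma hasDerivAt_exp_neg_one_sub_mul (x u : ℝ) :
    HasDerivAt (fun u => rexp (-((1 - u) * x))) (x * rexp (-((1 - u) * x))) u := by
  simpa only [neg_neg] using (hasDerivAt_exp_neg_mul x (1 - u)).comp_const_sub 1 u

lemma hasDerivAt_symKernel (x u : ℝ) : HasDerivAt (symKernel x) (x * symKernelDeriv x u) u := by
  refine (((hasDerivAt_exp_neg_mul x u).add (hasDerivAt_exp_neg_one_sub_mul x u)).div_const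
    (1 - rexp (-x))).congr_deriv ?_
  rw [symKernelDeriv]
  ring

lemma hasDerivAt_symKernelDeriv (x u : ℝ) :
    HasDerivAt (symKernelDeriv x) (x * symKernel x u) u := by
  refine (((hasDerivAt_exp_neg_mul x u).neg.add (hasDerivAt_exp_neg_one_sub_mul x u)).div_const
    (1 - rexp (-x))).congr_deriv ?_
  rw [symKernel]
  ring

lemma symKernel_nonneg {x : ℝ} (hx : 0 < x) (u : ℝ) : 0 ≤ symKernel x u :=
  div_nonneg (by positivity) (one_sub_exp_neg_pos hx).le

lemma abs_symKernelDeriv_le {x : ℝ} (hx : 0 < x) (u : ℝ) :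
    |symKernelDeriv x u| ≤ symKernel x u := by
  rw [symKernelDeriv, abs_div, abs_of_pos (one_sub_exp_neg_pos hx)]
  refine div_le_div_of_nonneg_right ((abs_add_le _ _).trans_eq ?_) (one_sub_exp_neg_pos hx).le
  rw [abs_neg, Real.abs_exp, Real.abs_exp]

lemma symKernel_le {A x u δ : ℝ} (hA : 0 < A) (hx : A ≤ x) (hu : u ∈ Icc δ (1 - δ)) :
    symKernel x u ≤ 2 / (1 - rexp (-A)) * rexp (-(δ * x)) := by
  have hx0 : 0 < x := hA.trans_le hx
  have hδu : δ ≤ 1 - u := by linarith [hu.2]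
  rw [symKernel, div_mul_eq_mul_div, two_mul]
  have hApos := one_sub_exp_neg_pos hA
  gcongr
  exact hu.1

lemma normallySummable_zpow_mul_symKernel (H : ℕ) {A : ℝ} (hA : 0 < A) (e : ℤ) :
    NormallySummable fun (n : ℕ) u =>
      ((n : ℝ) + 1) ^ e * symKernel (A * ((n : ℝ) + 1) ^ (2 * H + 1)) u := by
  intro δ hδ
  refine ⟨_, (summable_zpow_mul_exp_neg H e (mul_pos hδ hA)).mul_left (2 / (1 - rexp (-A))),
    fun n u hu => ?_⟩
  have hx : A ≤ A * ((n : ℝ) + 1) ^ (2 * H + 1) :=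
    le_mul_of_one_le_right hA.le (one_le_pow₀ (by simp))
  rw [Real.norm_of_nonneg (mul_nonneg (by positivity) (symKernel_nonneg (hA.trans_le hx) u)),
    mul_left_comm, mul_assoc δ]
  gcongr
  exact symKernel_le hA hx (Ioo_subset_Icc_self hu)

lemma normallySummable_zpow_mul_symKernelDeriv (H : ℕ) {A : ℝ} (hA : 0 < A) (e : ℤ) :
    NormallySummable fun (n : ℕ) u =>
      ((n : ℝ) + 1) ^ e * symKernelDeriv (A * ((n : ℝ) + 1) ^ (2 * H + 1)) u := by
  refine (normallySummable_zpow_mul_symKernel H hA e).mono 1 zero_le_one fun n u _ => ?_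
  have hx : 0 < A * ((n : ℝ) + 1) ^ (2 * H + 1) := by positivity
  rw [one_mul, norm_mul, norm_mul]
  gcongr
  exact (abs_symKernelDeriv_le hx u).trans (le_abs_self _)

lemma hasSecondDeriv_kerSum (H : ℕ) {A : ℝ} (hA : 0 < A) (m : ℤ) :
    HasSecondDeriv (kerSum H A m) (fun u => A ^ 2 * kerSum H A (m - 1) u) := by
  set e : ℤ := -(2 * (2 * H + 1) * m + 1) with he
  have hshift (n : ℕ) (e : ℤ) : ((n : ℝ) + 1) ^ (e + ((2 * H + 1 : ℕ) : ℤ)) =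
      ((n : ℝ) + 1) ^ e * ((n : ℝ) + 1) ^ (2 * H + 1) := by
    rw [zpow_add₀ n.cast_add_one_ne_zero, zpow_natCast]
  refine (hasSecondDeriv_tsum
    (f := fun (n : ℕ) u => ((n : ℝ) + 1) ^ e * symKernel (A * ((n : ℝ) + 1) ^ (2 * H + 1)) u)
    (f' := fun (n : ℕ) u => A * (((n : ℝ) + 1) ^ (e + ((2 * H + 1 : ℕ) : ℤ)) *
      symKernelDeriv (A * ((n : ℝ) + 1) ^ (2 * H + 1)) u))
    (g := fun (n : ℕ) u => A ^ 2 * (((n : ℝ) + 1) ^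
      (e + ((2 * H + 1 : ℕ) : ℤ) + ((2 * H + 1 : ℕ) : ℤ)) *
        symKernel (A * ((n : ℝ) + 1) ^ (2 * H + 1)) u))
    (normallySummable_zpow_mul_symKernel H hA _)
    ((normallySummable_zpow_mul_symKernelDeriv H hA (e + ((2 * H + 1 : ℕ) : ℤ))).mono A hA.le
      fun n u _ => ?_)
    ((normallySummable_zpow_mul_symKernel H hA
      (e + ((2 * H + 1 : ℕ) : ℤ) + ((2 * H + 1 : ℕ) : ℤ))).mono (A ^ 2) (by positivity)
        fun n u _ => ?_)
    (fun n u _ => ?_) fun n u _ => ?_).congr (fun _ _ => rfl) fun u _ => ?_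
  · rw [norm_mul, Real.norm_of_nonneg hA.le]
  · rw [norm_mul, Real.norm_of_nonneg (by positivity : (0 : ℝ) ≤ A ^ 2)]
  · refine ((hasDerivAt_symKernel _ u).const_mul _).congr_deriv ?_
    rw [hshift]
    ring
  · refine (((hasDerivAt_symKernelDeriv _ u).const_mul _).const_mul A).congr_deriv ?_
    rw [hshift _ (e + _)]
    ring
  · rw [tsum_mul_left, kerSum, show -(2 * (2 * H + 1) * (m - 1) + 1) =
      e + ((2 * H + 1 : ℕ) : ℤ) + ((2 * H + 1 : ℕ) : ℤ) by rw [he]; push_cast; ring]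

lemma sin_pi_mul_pos {v : ℝ} (hv : v ∈ Ioo (0 : ℝ) 1) : 0 < sin (π * v) :=
  sin_pos_of_mem_Ioo ⟨mul_pos pi_pos hv.1, mul_lt_of_lt_one_right pi_pos hv.2⟩

lemma one_sub_cos_two_pi_mul (v : ℝ) : 1 - cos (2 * π * v) = 2 * sin (π * v) ^ 2 := by
  rw [mul_assoc, cos_two_mul, cos_sq']
  ring

lemma hasSum_cos_mul_pow_div {r : ℝ} (hr : r ∈ Ico (0 : ℝ) 1) (θ : ℝ) :
    HasSum (fun k : ℕ => cos (k * θ) / k * r ^ k) (-(log (1 - 2 * r * cos θ + r ^ 2) / 2)) := by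
  set z : ℂ := r * Complex.exp (θ * Complex.I) with hz
  have hz_norm : ‖z‖ < 1 := by
    rw [hz, norm_mul, Complex.norm_exp_ofReal_mul_I, mul_one, Complex.norm_real,
      Real.norm_of_nonneg hr.1]
    exact hr.2
  have hre (k : ℕ) : (z ^ k / k).re = cos (k * θ) / k * r ^ k := by
    have hpow : z ^ k / k = ((r ^ k / k : ℝ) : ℂ) * Complex.exp ((k * θ : ℝ) * Complex.I) := by
      rw [hz, mul_pow, ← Complex.exp_nat_mul]
      push_cast
      rw [← mul_assoc]
      ring
    rw [hpow, Complex.re_ofReal_mul, Complex.exp_ofReal_mul_I_re]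
    ring
  have hnormSq : ‖1 - z‖ ^ 2 = 1 - 2 * r * cos θ + r ^ 2 := by
    rw [← Complex.normSq_eq_norm_sq, Complex.normSq_apply, hz]
    simp only [Complex.sub_re, Complex.one_re, Complex.re_ofReal_mul, Complex.exp_ofReal_mul_I_re,
      Complex.sub_im, Complex.one_im, Complex.im_ofReal_mul, Complex.exp_ofReal_mul_I_im]
    linear_combination r ^ 2 * sin_sq_add_cos_sq θ
  have hval : (-Complex.log (1 - z)).re = -(log (1 - 2 * r * cos θ + r ^ 2) / 2) := by
    rw [← hnormSq, Real.log_pow, Complex.neg_re, Complex.log_re]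
    push_cast
    ring
  rw [← hval]
  exact (Complex.hasSum_re (Complex.hasSum_taylorSeries_neg_log hz_norm)).congr_fun
    fun k => (hre k).symm

/-- The Clausen-type function `∑ sin(2πku)/k²`, the derivative of `∑ cos(2πku)/k³` up to a factor;
its term `k = 0` is `0 / 0 = 0`. -/
noncomputable def clausenSum (u : ℝ) : ℝ := ∑' k : ℕ, sin (k * (2 * π * u)) / (k : ℝ) ^ 2

lemma abs_cos_div_le_inv (x : ℝ) (k : ℝ) : |cos x / k| ≤ |k|⁻¹ := by
  rw [abs_div, div_eq_mul_inv]
  exact mul_le_of_le_one_left (by positivity) (abs_cos_le_one x)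

lemma hasDerivAt_sin_mul_div_sq (k : ℕ) (u : ℝ) :
    HasDerivAt (fun u => sin (k * (2 * π * u)) / (k : ℝ) ^ 2)
      (2 * π * (cos (k * (2 * π * u)) / k)) u := by
  have hlin : HasDerivAt (fun u => k * (2 * π * u)) (k * (2 * π)) u := by
    simpa using ((hasDerivAt_id u).const_mul (2 * π)).const_mul (k : ℝ)
  refine (hlin.sin.div_const ((k : ℝ) ^ 2)).congr_deriv ?_
  rcases eq_or_ne (k : ℝ) 0 with hk | hk
  · rw [hk]
    ring
  · field_simp

lemma hasDerivAt_abelSum_clausen {r : ℝ} (hr : r ∈ Ico (0 : ℝ) 1) (u : ℝ) :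
    HasDerivAt (fun u => ∑' k : ℕ, sin (k * (2 * π * u)) / (k : ℝ) ^ 2 * r ^ k)
      (-π * log (1 - 2 * r * cos (2 * π * u) + r ^ 2)) u := by
  refine (hasDerivAt_tsum (u := fun k : ℕ => 2 * π * r ^ k)
    ((summable_geometric_of_lt_one hr.1 hr.2).mul_left _)
    (fun k y => (hasDerivAt_sin_mul_div_sq k y).mul_const (r ^ k)) (fun k y => ?_) (y₀ := 0)
    (by simp) u).congr_deriv ?_
  · have hle : |cos (k * (2 * π * y)) / k| ≤ 1 :=
      (abs_cos_div_le_inv _ _).trans (by rw [Nat.abs_cast]; exact Nat.cast_inv_le_one k)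
    rw [norm_mul, norm_mul, Real.norm_of_nonneg two_pi_pos.le,
      Real.norm_of_nonneg (pow_nonneg hr.1 k), Real.norm_eq_abs]
    have hrk := pow_nonneg hr.1 k
    exact mul_le_mul_of_nonneg_right (mul_le_of_le_one_right two_pi_pos.le hle) hrk
  · simp_rw [mul_assoc (2 * π)]
    rw [((hasSum_cos_mul_pow_div hr (2 * π * u)).mul_left (2 * π)).tsum_eq]
    ring

lemma one_sub_two_mul_mul_add_sq_pos {r c : ℝ} (hr : 0 ≤ r) (hc : c < 1) :
    0 < 1 - 2 * r * c + r ^ 2 := by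
  rcases hr.eq_or_lt with rfl | hr
  · norm_num
  · nlinarith [sq_nonneg (1 - r), mul_pos hr (sub_pos.mpr hc)]

lemma tendstoUniformlyOn_log_abelSum {δ : ℝ} (hδ : 0 < δ) :
    TendstoUniformlyOn (fun r v => -π * log (1 - 2 * r * cos (2 * π * v) + r ^ 2))
      (fun v => -π * log (1 - 2 * 1 * cos (2 * π * v) + 1 ^ 2)) (𝓝[<] 1) (Icc δ (1 - δ)) := by
  have hcont : ContinuousOn
      (fun p : ℝ × ℝ => -π * log (1 - 2 * p.1 * cos (2 * π * p.2) + p.1 ^ 2))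
      (Icc (0 : ℝ) 1 ×ˢ Icc δ (1 - δ)) := by
    refine continuousOn_const.mul (ContinuousOn.log (by fun_prop) fun p hp => ?_)
    have hsin := sin_pi_mul_pos (v := p.2) ⟨hδ.trans_le hp.2.1, by linarith [hp.2.2]⟩
    have hcos := one_sub_cos_two_pi_mul p.2
    exact (one_sub_two_mul_mul_add_sq_pos hp.1.1 (by nlinarith [pow_pos hsin 2])).ne'
  have huc := (isCompact_Icc.prod isCompact_Icc).uniformContinuousOn_of_continuous hcont
  have htendsto := UniformContinuousOn.tendstoUniformlyOn (x := (1 : ℝ))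
    (F := fun r v => -π * log (1 - 2 * r * cos (2 * π * v) + r ^ 2)) huc
    (right_mem_Icc.mpr zero_le_one)
  exact fun U hU => nhdsWithin_le_of_mem (Icc_mem_nhdsLT zero_lt_one) (htendsto U hU)

lemma summable_sin_mul_div_sq (θ : ℝ) : Summable fun k : ℕ => sin (k * θ) / (k : ℝ) ^ 2 := by
  refine .of_norm_bounded (Real.summable_one_div_nat_pow.mpr one_lt_two) fun k => ?_
  rw [Real.norm_eq_abs, abs_div, abs_of_nonneg (by positivity : (0 : ℝ) ≤ (k : ℝ) ^ 2)]
  gcongr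
  exact abs_sin_le_one _

lemma hasDerivAt_clausenSum {u : ℝ} (hu : u ∈ Ioo (0 : ℝ) 1) :
    HasDerivAt clausenSum (-(2 * π) * log (2 * sin (π * u))) u := by
  obtain ⟨δ, hδ, hδu⟩ := exists_mem_Ioo_one_sub hu
  refine (hasDerivAt_of_tendstoUniformlyOn isOpen_Ioo
    ((tendstoUniformlyOn_log_abelSum hδ).mono Ioo_subset_Icc_self)
    (f := fun r u => ∑' k : ℕ, sin (k * (2 * π * u)) / (k : ℝ) ^ 2 * r ^ k) ?_ (fun v _ => ?_)
    hδu).congr_deriv ?_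
  · filter_upwards [Ico_mem_nhdsLT zero_lt_one] with r hr v _ using hasDerivAt_abelSum_clausen hr v
  · exact Real.tendsto_tsum_powerSeries_nhdsWithin_lt
      (summable_sin_mul_div_sq (2 * π * v)).hasSum.tendsto_sum_nat
  · rw [show 1 - 2 * 1 * cos (2 * π * u) + 1 ^ 2 = (2 * sin (π * u)) ^ 2 by
      linear_combination 2 * one_sub_cos_two_pi_mul u, Real.log_pow]
    push_cast
    ring

lemma cosZeta_three (u : ℝ) :
    cosZeta (u : UnitAddCircle) 3 = (∑' k : ℕ, cos (k * (2 * π * u)) / (k : ℝ) ^ 3 : ℝ) := by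
  rw [← (hasSum_nat_cosZeta u (s := 3) (by norm_num)).tsum_eq, Complex.ofReal_tsum]
  refine tsum_congr fun k => ?_
  rw [show k * (2 * π * u) = 2 * π * u * k by ring, show (3 : ℂ) = (3 : ℕ) by norm_num,
    Complex.cpow_natCast]
  push_cast
  rfl

lemma hasDerivAt_tsum_cos_div_cube (u : ℝ) :
    HasDerivAt (fun u => ∑' k : ℕ, cos (k * (2 * π * u)) / (k : ℝ) ^ 3)
      (-(2 * π) * clausenSum u) u := by
  rw [clausenSum, ← tsum_mul_left]
  refine hasDerivAt_tsum (g := fun (k : ℕ) u => cos (k * (2 * π * u)) / (k : ℝ) ^ 3)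
    (g' := fun (k : ℕ) u => -(2 * π) * (sin (k * (2 * π * u)) / (k : ℝ) ^ 2))
    ((Real.summable_one_div_nat_pow.mpr one_lt_two).mul_left (2 * π))
    (fun k y => ?_) (fun k y => ?_) (y₀ := 0) ?_ u
  · have hlin : HasDerivAt (fun u => k * (2 * π * u)) (k * (2 * π)) y := by
      simpa using ((hasDerivAt_id y).const_mul (2 * π)).const_mul (k : ℝ)
    refine (hlin.cos.div_const ((k : ℝ) ^ 3)).congr_deriv ?_
    rcases eq_or_ne (k : ℝ) 0 with hk | hk
    · rw [hk]
      ring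
    · field_simp
  · rw [norm_mul, norm_neg, norm_div, norm_pow, Real.norm_of_nonneg two_pi_pos.le,
      Real.norm_natCast, Real.norm_eq_abs]
    gcongr
    exact abs_sin_le_one _
  · simp

lemma hasSecondDeriv_cosZeta_three :
    HasSecondDeriv (fun u => cosZeta (u : UnitAddCircle) 3)
      (fun u => 4 * π ^ 2 * (log (2 * sin (π * u)) : ℂ)) := by
  refine (HasSecondDeriv.ofReal ⟨fun u => -(2 * π) * clausenSum u, fun u hu =>
    ⟨hasDerivAt_tsum_cos_div_cube u, (hasDerivAt_clausenSum hu).const_mul _⟩⟩).congr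
    (fun u _ => cosZeta_three u) fun u _ => ?_
  push_cast
  ring

/-- The Hurwitz zeta series `∑ (n + u)^e`, with integral exponent. -/
noncomputable def hurwitzSum (e : ℤ) (u : ℝ) : ℝ := ∑' n : ℕ, ((n : ℝ) + u) ^ e

/-- The sum `∑_{l ∈ ℤ} |l + u|^e` over the integers, for `0 < u < 1`. -/
noncomputable def latticeSum (e : ℤ) (u : ℝ) : ℝ := hurwitzSum e u + hurwitzSum e (1 - u)

lemma norm_zpow_le_of_mul_succ_le {e : ℤ} (he : e ≤ -2) {δ x : ℝ} (hδ : 0 < δ) (n : ℕ)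
    (hx : δ * ((n : ℝ) + 1) ≤ x) : ‖x ^ e‖ ≤ δ ^ e * (1 / ((n : ℝ) + 1) ^ 2) := by
  obtain ⟨d, rfl⟩ : ∃ d : ℕ, e = -(d + 2 : ℕ) := ⟨(-e - 2).toNat, by omega⟩
  have hx0 : 0 < x := (by positivity : 0 < δ * ((n : ℝ) + 1)).trans_le hx
  rw [Real.norm_of_nonneg (by positivity)]
  simp only [zpow_neg, zpow_natCast]
  calc (x ^ (d + 2))⁻¹ ≤ ((δ * ((n : ℝ) + 1)) ^ (d + 2))⁻¹ := by gcongr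
    _ = (δ ^ (d + 2))⁻¹ * (1 / ((n : ℝ) + 1) ^ (d + 2)) := by rw [mul_pow]; field_simp
    _ ≤ (δ ^ (d + 2))⁻¹ * (1 / ((n : ℝ) + 1) ^ 2) := by gcongr <;> simp

lemma normallySummable_natCast_add_zpow {e : ℤ} (he : e ≤ -2) :
    NormallySummable fun (n : ℕ) u => ((n : ℝ) + u) ^ e := fun δ hδ =>
  ⟨_, summable_one_div_succ_sq.mul_left (δ ^ e), fun n u hu =>
    norm_zpow_le_of_mul_succ_le he hδ n (by
      nlinarith [hu.1, hu.2, (Nat.cast_nonneg n : (0 : ℝ) ≤ n)])⟩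

lemma hasSecondDeriv_hurwitzSum {e : ℤ} (he : e ≤ -2) :
    HasSecondDeriv (hurwitzSum e) (fun u => e * (e - 1) * hurwitzSum (e - 2) u) := by
  have hderiv (a : ℤ) (n : ℕ) (u : ℝ) (hu : u ∈ Ioo (0 : ℝ) 1) :
      HasDerivAt (fun u => ((n : ℝ) + u) ^ a) (a * ((n : ℝ) + u) ^ (a - 1)) u :=
    (hasDerivAt_zpow a _ (.inl (by have := hu.1; positivity))).comp_const_add (n : ℝ) u
  refine (hasSecondDeriv_tsum (f' := fun (n : ℕ) u => e * ((n : ℝ) + u) ^ (e - 1))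
    (g := fun (n : ℕ) u => e * ((e - 1 : ℤ) * ((n : ℝ) + u) ^ (e - 1 - 1)))
    (normallySummable_natCast_add_zpow he)
    ((normallySummable_natCast_add_zpow (by omega : e - 1 ≤ -2)).mono |(e : ℝ)| (abs_nonneg _)
      fun n u _ => (norm_mul _ _).le)
    ((normallySummable_natCast_add_zpow (by omega : e - 1 - 1 ≤ -2)).mono
      (|(e : ℝ)| * |((e - 1 : ℤ) : ℝ)|) (by positivity) fun n u _ => ?_)
    (hderiv e) fun n u hu => (hderiv (e - 1) n u hu).const_mul _).congr
    (fun _ _ => rfl) fun u _ => ?_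
  · rw [← mul_assoc, norm_mul, norm_mul, Real.norm_eq_abs, Real.norm_eq_abs]
  · rw [tsum_mul_left, tsum_mul_left, ← mul_assoc, hurwitzSum, sub_sub]
    push_cast
    rfl

lemma hasSecondDeriv_latticeSum {e : ℤ} (he : e ≤ -2) :
    HasSecondDeriv (latticeSum e) (fun u => e * (e - 1) * latticeSum (e - 2) u) :=
  ((hasSecondDeriv_hurwitzSum he).add (hasSecondDeriv_hurwitzSum he).comp_one_sub).congr
    (fun _ _ => rfl) fun _ _ => mul_add _ _ _

lemma ofReal_mem_integerComplement {v : ℝ} (hv : v ∈ Ioo (0 : ℝ) 1) :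
    (v : ℂ) ∈ Complex.integerComplement := by
  rintro ⟨l, hl⟩
  have hl' : (l : ℝ) = v := by exact_mod_cast hl
  have hpos : 0 < l := by exact_mod_cast hl' ▸ hv.1
  have hlt : l < 1 := by exact_mod_cast hl' ▸ hv.2
  omega

lemma cotTerm_ofReal (v : ℝ) (n : ℕ) :
    cotTerm v n = (((n + 1 + v)⁻¹ - (n + 1 - v)⁻¹ : ℝ) : ℂ) := by
  rw [cotTerm, one_div, one_div, ← neg_sub ((n : ℂ) + 1) v, inv_neg, add_comm (v : ℂ)]
  push_cast
  ring

lemma pi_mul_cos_div_sin {v : ℝ} (hv : v ∈ Ioo (0 : ℝ) 1) :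
    π * (cos (π * v) / sin (π * v)) =
      v⁻¹ + ∑' n : ℕ, (((n : ℝ) + 1 + v)⁻¹ - ((n : ℝ) + 1 - v)⁻¹) := by
  apply Complex.ofReal_injective
  have h := cot_series_rep' (ofReal_mem_integerComplement hv)
  simp_rw [← cotTerm.eq_1, cotTerm_ofReal, ← Complex.ofReal_tsum] at h
  rw [Complex.ofReal_add, ← h, Complex.cot]
  push_cast
  ring

lemma hasDerivAt_tsum_inv_sub_inv {u : ℝ} (hu : u ∈ Ioo (0 : ℝ) 1) :
    HasDerivAt (fun v => ∑' n : ℕ, (((n : ℝ) + 1 + v)⁻¹ - ((n : ℝ) + 1 - v)⁻¹))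
      (∑' n : ℕ, -(((n : ℝ) + 1 + u) ^ (-2 : ℤ) + ((n : ℝ) + (1 - u)) ^ (-2 : ℤ))) u := by
  refine NormallySummable.hasDerivAt_tsum
    (f := fun (n : ℕ) v => ((n : ℝ) + 1 + v)⁻¹ - ((n : ℝ) + 1 - v)⁻¹)
    (f' := fun (n : ℕ) v => -(((n : ℝ) + 1 + v) ^ (-2 : ℤ) + ((n : ℝ) + (1 - v)) ^ (-2 : ℤ)))
    (fun δ hδ => ⟨_, (summable_one_div_succ_sq.mul_left (δ ^ (-2 : ℤ))).add
      (summable_one_div_succ_sq.mul_left (δ ^ (-2 : ℤ))), fun n v hv => ?_⟩)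
    (fun n v hv => ?_) hu ?_
  · have _ : (0 : ℝ) ≤ n := n.cast_nonneg
    rw [norm_neg]
    exact (norm_add_le _ _).trans (add_le_add
      (norm_zpow_le_of_mul_succ_le le_rfl hδ n (by nlinarith [hv.1, hv.2]))
      (norm_zpow_le_of_mul_succ_le le_rfl hδ n (by nlinarith [hv.1, hv.2])))
  · have hplus : (n : ℝ) + 1 + v ≠ 0 := by have := hv.1; positivity
    have hminus : (n : ℝ) + 1 - v ≠ 0 := by
      have := hv.2
      have _ : (0 : ℝ) ≤ n := n.cast_nonneg
      linarith
    refine (((hasDerivAt_inv hplus).comp_const_add ((n : ℝ) + 1) v).sub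
      ((hasDerivAt_inv hminus).comp_const_sub ((n : ℝ) + 1) v)).congr_deriv ?_
    rw [← add_sub_assoc, zpow_neg, zpow_neg, zpow_ofNat, zpow_ofNat]
    ring
  · have h := summable_cotTerm (ofReal_mem_integerComplement hu)
    simp_rw [cotTerm_ofReal] at h
    exact Complex.summable_ofReal.mp h

lemma latticeSum_neg_two {u : ℝ} (hu : u ∈ Ioo (0 : ℝ) 1) :
    latticeSum (-2) u = u ^ (-2 : ℤ) +
      ∑' n : ℕ, (((n : ℝ) + 1 + u) ^ (-2 : ℤ) + ((n : ℝ) + (1 - u)) ^ (-2 : ℤ)) := by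
  have hu' : 1 - u ∈ Ioo (0 : ℝ) 1 := ⟨by linarith [hu.2], by linarith [hu.1]⟩
  have hl := (normallySummable_natCast_add_zpow (le_refl (-2))).summable hu
  have hr := (normallySummable_natCast_add_zpow (le_refl (-2))).summable hu'
  have hl' := (summable_nat_add_iff 1).mpr hl
  simp_rw [Nat.cast_add_one] at hl'
  rw [latticeSum, hurwitzSum, hurwitzSum, hl.tsum_eq_zero_add, hl'.tsum_add hr, Nat.cast_zero,
    zero_add, add_assoc]
  simp_rw [Nat.cast_add_one]

lemma hasSecondDeriv_log_sin :
    HasSecondDeriv (fun u => -log (2 * sin (π * u))) (latticeSum (-2)) := by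
  refine ⟨fun u => -(π * (cos (π * u) / sin (π * u))), fun u hu => ⟨?_, ?_⟩⟩
  · have hsin := sin_pi_mul_pos hu
    have hderiv : HasDerivAt (fun u => sin (π * u)) (cos (π * u) * (π * 1)) u :=
      ((hasDerivAt_id u).const_mul π).sin
    refine ((hderiv.const_mul 2).log (by positivity)).neg.congr_deriv ?_
    field_simp
  · refine (((hasDerivAt_inv hu.1.ne').add (hasDerivAt_tsum_inv_sub_inv hu)).neg.congr_deriv
      ?_).congr_of_eventuallyEq ?_
    · rw [latticeSum_neg_two hu, tsum_neg, zpow_neg, zpow_ofNat]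
      ring
    · filter_upwards [isOpen_Ioo.mem_nhds hu] with v hv using
        congrArg Neg.neg (pi_mul_cos_div_sin hv)

lemma Gamma_mul_cos_even (M : ℕ) :
    Complex.Gamma (2 * (M + 1 : ℕ)) * Complex.cos (π * (2 * (M + 1 : ℕ)) / 2) =
      (2 * M + 1).factorial * (-1) ^ (M + 1) := by
  congr 1
  · rw [show (2 * ((M + 1 : ℕ) : ℂ)) = ((2 * M + 1 : ℕ) : ℂ) + 1 by push_cast; ring,
      Complex.Gamma_nat_eq_factorial]
  · rw [show (π * (2 * ((M + 1 : ℕ) : ℂ)) / 2) = ((M + 1 : ℕ) : ℂ) * π by ring]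
    exact_mod_cast congrArg (fun x : ℝ => (x : ℂ)) (cos_nat_mul_pi (M + 1))

lemma cosZeta_one_sub_even (a : UnitAddCircle) (M : ℕ) :
    cosZeta a (1 - 2 * (M + 1 : ℕ)) =
      2 * (2 * π) ^ (-(2 * (M + 1 : ℕ) : ℤ)) * (2 * M + 1).factorial * (-1) ^ (M + 1) *
        hurwitzZetaEven a (2 * (M + 1 : ℕ)) := by
  rw [cosZeta_one_sub, mul_assoc (2 * _) (Complex.Gamma _), Gamma_mul_cos_even,
    ← Complex.cpow_intCast]
  · push_cast
    ring_nf
  · intro n h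
    have hcast : ((2 * (M + 1) : ℤ) : ℂ) = ((1 - n : ℤ) : ℂ) := by
      push_cast
      push_cast at h
      exact h
    have hint : (2 * (M + 1) : ℤ) = 1 - n := by exact_mod_cast hcast
    omega

lemma hurwitzZetaEven_eq_latticeSum {u : ℝ} (hu : u ∈ Ioo (0 : ℝ) 1) (M : ℕ) :
    hurwitzZetaEven (u : UnitAddCircle) (2 * (M + 1 : ℕ)) =
      1 / 2 * (latticeSum (-(2 * (M + 1 : ℕ))) u : ℂ) := by
  have hu' : 1 - u ∈ Ioo (0 : ℝ) 1 := ⟨by linarith [hu.2], by linarith [hu.1]⟩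
  have hs : (2 * ((M + 1 : ℕ) : ℂ)) = ((2 * (M + 1) : ℕ) : ℂ) := by push_cast; ring
  have he : (-(2 * ((M + 1 : ℕ) : ℤ))) = -((2 * (M + 1) : ℕ) : ℤ) := by push_cast; ring
  have hsummable : -((2 * (M + 1) : ℕ) : ℤ) ≤ -2 := by push_cast; omega
  rw [← (hasSum_nat_hurwitzZetaEven_of_mem_Icc (Ioo_subset_Icc_self hu)
    (s := 2 * (M + 1 : ℕ)) (by rw [hs, Complex.natCast_re]; norm_cast; omega)).tsum_eq, he,
    latticeSum, hurwitzSum, hurwitzSum,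
    ← ((normallySummable_natCast_add_zpow hsummable).summable hu).tsum_add
      ((normallySummable_natCast_add_zpow hsummable).summable hu'),
    Complex.ofReal_tsum, ← tsum_mul_left]
  refine tsum_congr fun n => ?_
  rw [hs, Complex.cpow_natCast, Complex.cpow_natCast, zpow_neg, zpow_neg, zpow_natCast,
    zpow_natCast, ← add_sub_assoc]
  push_cast
  rw [one_div, one_div]
  ring

lemma oddCosZeta_neg {u : ℝ} (hu : u ∈ Ioo (0 : ℝ) 1) (M : ℕ) :
    oddCosZeta (-(M + 1 : ℕ)) u = (2 * π) ^ (-(2 * (M + 1 : ℕ) : ℤ)) * (2 * M + 1).factorial *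
      (-1) ^ (M + 1) * (latticeSum (-(2 * (M + 1 : ℕ))) u : ℂ) := by
  have hs : 2 * ((-(M + 1 : ℕ) : ℤ) : ℂ) + 1 = 1 - 2 * (M + 1 : ℕ) := by push_cast; ring
  rw [oddCosZeta, if_neg (by omega), hs, cosZeta_one_sub_even, hurwitzZetaEven_eq_latticeSum hu]
  ring

lemma hasSecondDeriv_oddCosZeta_neg (M : ℕ) :
    HasSecondDeriv (oddCosZeta (-(M + 1 : ℕ)))
      (fun u => -(4 * π ^ 2) * oddCosZeta (-(M + 1 : ℕ) - 1) u) := by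
  have hpi : (π : ℂ) ≠ 0 := by exact_mod_cast Real.pi_ne_zero
  refine ((hasSecondDeriv_latticeSum (e := -(2 * (M + 1 : ℕ))) (by omega)).ofReal.const_mul
    ((2 * π : ℂ) ^ (-(2 * (M + 1 : ℕ) : ℤ)) * (2 * M + 1).factorial * (-1) ^ (M + 1))).congr
    (fun u hu => oddCosZeta_neg hu M) fun u hu => ?_
  rw [show (-(M + 1 : ℕ) - 1 : ℤ) = -((M + 1) + 1 : ℕ) by push_cast; ring, oddCosZeta_neg hu,
    show (-(2 * ((M + 1) + 1 : ℕ) : ℤ)) = -(2 * (M + 1 : ℕ)) - 2 by push_cast; ring,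
    show (2 * (M + 1) + 1) = (2 * M + 1) + 1 + 1 by ring, Nat.factorial_succ, Nat.factorial_succ,
    zpow_sub₀ (by simp)]
  push_cast
  field_simp
  norm_num
  ring

lemma hasSecondDeriv_oddCosZeta_zero :
    HasSecondDeriv (oddCosZeta 0) (fun u => -(4 * π ^ 2) * oddCosZeta (0 - 1) u) := by
  have hpi : (π : ℂ) ≠ 0 := by exact_mod_cast Real.pi_ne_zero
  refine hasSecondDeriv_log_sin.ofReal.congr (fun u _ => ?_) fun u hu => ?_
  · rw [oddCosZeta, if_pos rfl, Complex.ofReal_neg]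
  · rw [show (0 - 1 : ℤ) = -(0 + 1 : ℕ) by norm_num, oddCosZeta_neg hu]
    norm_num
    field_simp
    norm_num

lemma hasSecondDeriv_oddCosZeta_one :
    HasSecondDeriv (oddCosZeta 1) (fun u => -(4 * π ^ 2) * oddCosZeta (1 - 1) u) := by
  refine hasSecondDeriv_cosZeta_three.congr (fun u _ => ?_) fun u _ => ?_
  · rw [oddCosZeta, if_neg one_ne_zero]
    norm_num
  · rw [oddCosZeta, if_pos (by norm_num)]
    ring

lemma hasSecondDeriv_oddCosZeta (m : ℤ) :
    HasSecondDeriv (oddCosZeta m) (fun u => -(4 * π ^ 2) * oddCosZeta (m - 1) u) := by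
  obtain ⟨M, rfl⟩ | rfl | rfl | hm :
      (∃ M : ℕ, m = -(M + 1 : ℕ)) ∨ m = 0 ∨ m = 1 ∨ 2 ≤ m := by
    rcases lt_or_ge m 0 with hm | hm
    · exact .inl ⟨(-m - 1).toNat, by omega⟩
    · omega
  · exact hasSecondDeriv_oddCosZeta_neg M
  · exact hasSecondDeriv_oddCosZeta_zero
  · exact hasSecondDeriv_oddCosZeta_one
  · lift m to ℕ using by omega
    refine (hasSecondDeriv_cosZeta_add_two (s := 2 * m - 1) (by omega)).congr
      (fun u _ => ?_) fun u _ => ?_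
    · rw [oddCosZeta, if_neg (by omega), show 2 * m - 1 + 2 = 2 * m + 1 by omega]
      push_cast
      rfl
    · rw [oddCosZeta, if_neg (by omega), show 2 * m - 1 = 2 * (m - 1) + 1 by omega]
      push_cast [show 1 ≤ m by omega]
      rfl

lemma kerSum_eq_dualSum_descend {H : ℕ} {A : ℝ} (hA : 0 < A) {m : ℤ} {K : ℕ}
    (h : ∀ u ∈ Ioo (0 : ℝ) 1, (kerSum H A m u : ℂ) = dualSum H A m (K + 1) u) {u : ℝ}
    (hu : u ∈ Ioo (0 : ℝ) 1) : (kerSum H A (m - 1) u : ℂ) = dualSum H A (m - 1) K u := by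
  have hA0 : (A : ℂ) ≠ 0 := by exact_mod_cast hA.ne'
  have hright := (((hasSecondDeriv_oddCosZeta m).const_mul (1 / 2)).add
    ((hasSecondDeriv_planckCos H hA m).const_mul ((-1) ^ H))).const_mul
      (2 * (-1) ^ m / (2 * H + 1) * (A / (2 * π)) ^ (2 * m) : ℂ) |>.add
        (hasSecondDeriv_residualSum H hA m K)
  have hderiv := (hasSecondDeriv_kerSum H hA m).ofReal.unique
    (hright.congr (fun v hv => h v hv) fun _ _ => rfl) hu
  rw [dualSum]
  apply mul_left_cancel₀ (pow_ne_zero 2 hA0)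
  have hpi : (π : ℂ) ≠ 0 := by exact_mod_cast Real.pi_ne_zero
  push_cast at hderiv
  rw [hderiv, show 2 * m = 2 * (m - 1) + 2 by ring,
    zpow_add₀ (div_ne_zero hA0 (by simp)), zpow_sub_one₀ (by norm_num : (-1 : ℂ) ≠ 0)]
  field_simp
  norm_num
  ring

lemma kerSum_eq_dualSum (H : ℕ) {A : ℝ} (hA : 0 < A) (m : ℤ) (K : ℕ) (hK : m + 2 ≤ K) {u : ℝ}
    (hu : u ∈ Ioo (0 : ℝ) 1) : (kerSum H A m u : ℂ) = dualSum H A m K u := by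
  have hpos {n : ℕ} (hn : 1 ≤ n) {L : ℕ} (hL : n + 2 ≤ L) (v : ℝ) (hv : v ∈ Ioo (0 : ℝ) 1) :
      (kerSum H A n v : ℂ) = dualSum H A n L v :=
    kerSum_eq_dualSum_of_pos hA hn hL (Ioo_subset_Icc_self hv)
  have hdescend (d L : ℕ) (hL : 1 - (d : ℤ) + 2 ≤ L) (v : ℝ) (hv : v ∈ Ioo (0 : ℝ) 1) :
      (kerSum H A (1 - d) v : ℂ) = dualSum H A (1 - d) L v := by
    induction d generalizing L v with
    | zero => simpa using hpos le_rfl (by omega : 1 + 2 ≤ L) v hv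
    | succ d ih =>
      rw [show (1 - ((d + 1 : ℕ) : ℤ)) = 1 - d - 1 by push_cast; ring]
      exact kerSum_eq_dualSum_descend hA
        (fun w hw => ih (L + 1) (by push_cast at hL ⊢; omega) w hw) hv
  rcases le_or_gt 1 m with hm | hm
  · lift m to ℕ using by omega
    exact hpos (by omega) (by omega) u hu
  · obtain ⟨d, rfl⟩ : ∃ d : ℕ, m = 1 - d := ⟨(1 - m).toNat, by omega⟩
    exact hdescend d K hK u hu

/-! ### Abel summation and the value at `u = 0` -/

lemma mul_mellin_eq_integral_rpow_inv (G : ℝ → ℂ) {s : ℝ} (hs : 0 < s) :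
    (s : ℂ) * mellin G s = ∫ y in Ioi (0 : ℝ), G (y ^ s⁻¹) := by
  rw [← MeasureTheory.integral_comp_rpow_Ioi (fun y => G (y ^ s⁻¹)) hs.ne', mellin,
    ← MeasureTheory.integral_const_mul]
  refine MeasureTheory.setIntegral_congr_fun measurableSet_Ioi fun x (hx : 0 < x) => ?_
  rw [← Real.rpow_mul hx.le, mul_inv_cancel₀ hs.ne', Real.rpow_one, abs_of_pos hs,
    Complex.real_smul, Complex.ofReal_mul, Complex.ofReal_cpow hx.le, smul_eq_mul]
  push_cast
  ring

lemma norm_comp_rpow_inv_le {E : Type*} [SeminormedAddGroup E] {G : ℝ → E} {B : ℝ}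
    (hB : ∀ t > 0, ‖G t‖ ≤ B * rexp (-t)) {s y : ℝ} (hs : s ∈ Ioo (0 : ℝ) 1) (hy : 0 < y) :
    ‖G (y ^ s⁻¹)‖ ≤ B * rexp 1 * rexp (-y) := by
  have hB0 : 0 ≤ B :=
    nonneg_of_mul_nonneg_left ((norm_nonneg _).trans (hB 1 one_pos)) (Real.exp_pos _)
  refine (hB _ (Real.rpow_pos_of_pos hy s⁻¹)).trans ?_
  rw [mul_assoc, ← Real.exp_add]
  refine mul_le_mul_of_nonneg_left (Real.exp_le_exp.mpr ?_) hB0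
  rcases le_total y 1 with h | h
  · linarith [Real.rpow_pos_of_pos hy s⁻¹]
  · have := Real.rpow_le_rpow_of_exponent_le h ((one_le_inv₀ hs.1).mpr hs.2.le)
    rw [Real.rpow_one] at this
    linarith

lemma tendsto_comp_rpow_inv {E : Type*} [SeminormedAddCommGroup E] {G : ℝ → E} {B : ℝ} {L : E}
    (hB : ∀ t > 0, ‖G t‖ ≤ B * rexp (-t)) (hL : Tendsto G (𝓝[>] 0) (𝓝 L)) {y : ℝ} (hy : 0 < y)
    (hy1 : y ≠ 1) :
    Tendsto (fun s : ℝ => G (y ^ s⁻¹)) (𝓝[>] 0) (𝓝 ((Iio (1 : ℝ)).indicator (fun _ => L) y)) := by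
  rcases lt_or_gt_of_ne hy1 with h | h
  · rw [indicator_of_mem (mem_Iio.mpr h)]
    refine hL.comp (tendsto_nhdsWithin_iff.mpr ⟨?_, .of_forall fun s => Real.rpow_pos_of_pos hy _⟩)
    exact (tendsto_rpow_atTop_of_base_lt_one y (by linarith) h).comp tendsto_inv_nhdsGT_zero
  · rw [indicator_of_notMem (notMem_Iio.mpr h.le)]
    have hpow : Tendsto (fun s : ℝ => y ^ s⁻¹) (𝓝[>] 0) atTop :=
      (tendsto_rpow_atTop_of_base_gt_one y h).comp tendsto_inv_nhdsGT_zero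
    refine squeeze_zero_norm (fun s => hB _ (Real.rpow_pos_of_pos hy _)) ?_
    simpa using (Real.tendsto_exp_neg_atTop_nhds_zero.comp hpow).const_mul B

-- After the substitution `y = t^s` the integral concentrates on `(0, 1)` as `s → 0`.
lemma tendsto_mul_mellin {G : ℝ → ℂ} {B : ℝ} {L : ℂ} (hG : ContinuousOn G (Ioi 0))
    (hB : ∀ t > 0, ‖G t‖ ≤ B * rexp (-t)) (hL : Tendsto G (𝓝[>] 0) (𝓝 L)) :
    Tendsto (fun s : ℝ => (s : ℂ) * mellin G s) (𝓝[>] 0) (𝓝 L) := by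
  have hlimit : L = ∫ y in Ioi (0 : ℝ), (Iio (1 : ℝ)).indicator (fun _ => L) y := by
    rw [MeasureTheory.setIntegral_indicator measurableSet_Iio, Ioi_inter_Iio,
      MeasureTheory.setIntegral_const]
    simp
  rw [hlimit]
  have hev : ∀ᶠ s : ℝ in 𝓝[>] 0, s ∈ Ioo (0 : ℝ) 1 := Ioo_mem_nhdsGT one_pos
  refine Tendsto.congr' (f₁ := fun s : ℝ => ∫ y in Ioi (0 : ℝ), G (y ^ s⁻¹)) ?_
    (MeasureTheory.tendsto_integral_filter_of_dominated_convergence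
      (fun y => B * rexp 1 * rexp (-y)) ?_ ?_ ((integrableOn_exp_neg_Ioi 0).const_mul _) ?_)
  · filter_upwards [hev] with s hs using (mul_mellin_eq_integral_rpow_inv G hs.1).symm
  · refine .of_forall fun s => ContinuousOn.aestronglyMeasurable (hG.comp ?_ fun y hy => ?_)
      measurableSet_Ioi
    · exact continuousOn_id.rpow_const fun y hy => .inl (ne_of_gt hy)
    · exact Real.rpow_pos_of_pos hy _
  · filter_upwards [hev] with s hs
    filter_upwards [MeasureTheory.self_mem_ae_restrict measurableSet_Ioi] with y hy
    exact norm_comp_rpow_inv_le hB hs hy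
  · filter_upwards [MeasureTheory.self_mem_ae_restrict measurableSet_Ioi,
      MeasureTheory.ae_restrict_of_ae (MeasureTheory.Measure.ae_ne _ (1 : ℝ))] with y hy hy1
    exact tendsto_comp_rpow_inv hB hL hy hy1

lemma summable_pow_mul_exp_neg_pow (p : ℕ) {N : ℕ} (hN : N ≠ 0) {t : ℝ} (ht : 0 < t) :
    Summable fun n : ℕ => (n : ℝ) ^ p * rexp (-(n : ℝ) ^ N * t) := by
  refine Summable.of_nonneg_of_le (fun n => by positivity) (fun n => ?_)
    (Real.summable_pow_mul_exp_neg_nat_mul p ht)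
  have h1 : (n : ℝ) ≤ (n : ℝ) ^ N := by exact_mod_cast Nat.le_self_pow hN n
  refine mul_le_mul_of_nonneg_left (Real.exp_le_exp.mpr ?_) (by positivity)
  nlinarith

/-- The series `∑ n^p e^{-n^N t}`. -/
noncomputable def powExpSum (p N : ℕ) (t : ℝ) : ℝ :=
  ∑' n : ℕ, (n : ℝ) ^ p * rexp (-(n : ℝ) ^ N * t)

/-- The alternating series `∑ (-1)ⁿ n^p e^{-n^N t}`, which stays bounded as `t → 0⁺` and therefore
has a Mellin transform near `0`. -/
noncomputable def altExpSum (p N : ℕ) (t : ℝ) : ℂ :=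
  ∑' n : ℕ, ((-1) ^ n * (n : ℂ) ^ p) * (rexp (-(n : ℝ) ^ N * t) : ℂ)

lemma norm_altExpSum_term (p N n : ℕ) (t : ℝ) :
    ‖((-1) ^ n * (n : ℂ) ^ p) * (rexp (-(n : ℝ) ^ N * t) : ℂ)‖ =
      (n : ℝ) ^ p * rexp (-(n : ℝ) ^ N * t) := by
  rw [norm_mul, norm_mul, norm_pow, norm_pow, norm_neg, norm_one, one_pow, one_mul,
    Complex.norm_natCast, Complex.norm_real, Real.norm_of_nonneg (Real.exp_pos _).le]

lemma hasSum_altExpSum (p : ℕ) {N : ℕ} (hN : N ≠ 0) {t : ℝ} (ht : 0 < t) :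
    HasSum (fun n : ℕ => ((-1) ^ n * (n : ℂ) ^ p) * (rexp (-(n : ℝ) ^ N * t) : ℂ))
      (altExpSum p N t) :=
  (Summable.of_norm_bounded (summable_pow_mul_exp_neg_pow p hN ht)
    fun n => (norm_altExpSum_term p N n t).le).hasSum

lemma continuousOn_altExpSum (p : ℕ) {N : ℕ} (hN : N ≠ 0) :
    ContinuousOn (altExpSum p N) (Ioi 0) := by
  intro t (ht : 0 < t)
  refine ContinuousAt.continuousWithinAt (ContinuousOn.continuousAt (s := Ioi (t / 2)) ?_
    (Ioi_mem_nhds (half_lt_self ht)))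
  refine continuousOn_tsum (u := fun n : ℕ => (n : ℝ) ^ p * rexp (-(n : ℝ) ^ N * (t / 2)))
    (fun n => by fun_prop) (summable_pow_mul_exp_neg_pow p hN (half_pos ht))
    fun n x (hx : t / 2 < x) => ?_
  rw [norm_altExpSum_term]
  refine mul_le_mul_of_nonneg_left (Real.exp_le_exp.mpr ?_) (by positivity)
  have h0 : (0 : ℝ) ≤ (n : ℝ) ^ N := by positivity
  nlinarith

lemma norm_altExpSum_le_of_le {p : ℕ} (hp : p ≠ 0) {N : ℕ} (hN : N ≠ 0) {δ t : ℝ} (hδ : 0 < δ)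
    (ht : δ ≤ t) : ‖altExpSum p N t‖ ≤ powExpSum p N δ * rexp (δ - t) := by
  refine tsum_of_norm_bounded
    ((summable_pow_mul_exp_neg_pow p hN hδ).hasSum.mul_right (rexp (δ - t))) fun n => ?_
  rw [norm_altExpSum_term]
  rcases Nat.eq_zero_or_pos n with rfl | hn
  · simp [hp]
  · rw [mul_assoc, ← Real.exp_add]
    refine mul_le_mul_of_nonneg_left (Real.exp_le_exp.mpr ?_) (by positivity)
    have : (1 : ℝ) ≤ (n : ℝ) ^ N := one_le_pow₀ (by exact_mod_cast hn)
    nlinarith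

lemma exists_norm_altExpSum_le {p : ℕ} (hp : p ≠ 0) {N : ℕ} (hN : N ≠ 0) {L : ℂ}
    (hL : Tendsto (altExpSum p N) (𝓝[>] 0) (𝓝 L)) :
    ∃ B, ∀ t > 0, ‖altExpSum p N t‖ ≤ B * rexp (-t) := by
  obtain ⟨δ, hδ, hsmall⟩ : ∃ δ > 0, ∀ t ∈ Ioo 0 δ, ‖altExpSum p N t‖ ≤ ‖L‖ + 1 := by
    obtain ⟨δ, hδ, h⟩ := mem_nhdsGT_iff_exists_Ioo_subset.mp
      (hL.norm.eventually (gt_mem_nhds (lt_add_one ‖L‖)))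
    exact ⟨δ, hδ, fun t ht => (h ht).le⟩
  have hS0 : 0 ≤ powExpSum p N δ := tsum_nonneg fun n => by positivity
  refine ⟨(‖L‖ + 1 + powExpSum p N δ) * rexp δ, fun t ht => ?_⟩
  rw [mul_assoc, ← Real.exp_add, ← sub_eq_add_neg]
  rcases lt_or_ge t δ with h | h
  · refine (hsmall t ⟨ht, h⟩).trans ?_
    have : 1 ≤ rexp (δ - t) := Real.one_le_exp (by linarith)
    nlinarith [norm_nonneg L]
  · refine (norm_altExpSum_le_of_le hp hN hδ h).trans ?_
    gcongr
    linarith [norm_nonneg L]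

lemma eq_two_mul_sub_of_hasSum_alternating {f : ℕ → ℂ} {a b c : ℂ}
    (ha : HasSum (fun n => (-1) ^ n * f n) a) (hb : HasSum f b)
    (hc : HasSum (fun n => f (2 * n)) c) : a = 2 * c - b := by
  have heven : HasSum (fun n : ℕ => (-1) ^ (2 * n) * f (2 * n) + f (2 * n)) (2 * c) :=
    (hc.mul_left 2).congr_fun fun n => by rw [pow_mul, neg_one_sq, one_pow]; ring
  have hodd : HasSum (fun n : ℕ => (-1) ^ (2 * n + 1) * f (2 * n + 1) + f (2 * n + 1)) 0 :=
    hasSum_zero.congr_fun fun n => by rw [pow_succ, pow_mul, neg_one_sq, one_pow]; ring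
  have h := (ha.add hb).unique
    (HasSum.even_add_odd (f := fun n => (-1) ^ n * f n + f n) heven hodd)
  linear_combination h

lemma altExpSum_eq_sub (p : ℕ) {N : ℕ} (hN : N ≠ 0) {t : ℝ} (ht : 0 < t) :
    altExpSum p N t = 2 ^ (p + 1) * powExpSum p N (2 ^ N * t) - powExpSum p N t := by
  have hsum (s : ℝ) (hs : 0 < s) :
      HasSum (fun n : ℕ => (((n : ℝ) ^ p * rexp (-(n : ℝ) ^ N * s) : ℝ) : ℂ)) (powExpSum p N s) :=
    Complex.hasSum_ofReal.mpr (summable_pow_mul_exp_neg_pow p hN hs).hasSum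
  rw [eq_two_mul_sub_of_hasSum_alternating ((hasSum_altExpSum p hN ht).congr_fun fun n => ?_)
    (hsum t ht) (((hsum (2 ^ N * t) (by positivity)).mul_left (2 ^ p)).congr_fun fun n => ?_)]
  · ring
  · push_cast
    ring
  · rw [show -((2 * n : ℕ) : ℝ) ^ N * t = -(n : ℝ) ^ N * (2 ^ N * t) by push_cast; ring]
    push_cast
    ring

lemma ofReal_half_ne_zero : ((1 / 2 : ℝ) : UnitAddCircle) ≠ 0 := by
  intro h
  obtain ⟨n, hn⟩ := (AddCircle.coe_eq_zero_iff 1).mp h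
  rw [zsmul_eq_mul, mul_one] at hn
  have : 2 * n = 1 := by exact_mod_cast (by linarith : (2 : ℝ) * n = 1)
  omega

lemma hasSum_neg_one_pow_div_cpow {s : ℂ} (hs : 1 < s.re) :
    HasSum (fun n : ℕ => (-1) ^ n * (1 / (n : ℂ) ^ s)) (cosZeta ((1 / 2 : ℝ) : UnitAddCircle) s) :=
  (hasSum_nat_cosZeta (1 / 2) hs).congr_fun fun n => by
    rw [show 2 * π * (1 / 2) * n = n * π by ring, Real.cos_nat_mul_pi]
    push_cast
    ring

lemma cosZeta_half {s : ℂ} (hs : s ≠ 1) :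
    cosZeta ((1 / 2 : ℝ) : UnitAddCircle) s = (2 ^ (1 - s) - 1) * riemannZeta s := by
  have hopen : IsOpen ({1}ᶜ : Set ℂ) := isOpen_compl_singleton
  have hconn : IsPreconnected ({1}ᶜ : Set ℂ) :=
    (isConnected_compl_singleton_of_one_lt_rank (by simp) 1).isPreconnected
  have hf : AnalyticOnNhd ℂ (cosZeta ((1 / 2 : ℝ) : UnitAddCircle)) {1}ᶜ :=
    (differentiable_cosZeta_of_ne_zero ofReal_half_ne_zero).differentiableOn.analyticOnNhd hopen
  have hg : AnalyticOnNhd ℂ (fun s => (2 ^ (1 - s) - 1) * riemannZeta s) {1}ᶜ := by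
    refine DifferentiableOn.analyticOnNhd (fun z hz => ?_) hopen
    have hpow : DifferentiableAt ℂ (fun s : ℂ => (2 : ℂ) ^ (1 - s)) z :=
      ((differentiableAt_const _).sub differentiableAt_id).const_cpow (.inl two_ne_zero)
    exact ((hpow.sub_const 1).mul (differentiableAt_riemannZeta hz)).differentiableWithinAt
  refine hf.eqOn_of_preconnected_of_eventuallyEq hg hconn (show (2 : ℂ) ∈ {1}ᶜ by simp) ?_ hs
  filter_upwards [(isOpen_lt continuous_const Complex.continuous_re).mem_nhds
    (show (1 : ℝ) < (2 : ℂ).re by simp)] with z (hz : 1 < z.re)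
  have hzeta : HasSum (fun n : ℕ => 1 / (n : ℂ) ^ z) (riemannZeta z) :=
    zeta_eq_tsum_one_div_nat_cpow hz ▸ (Complex.summable_one_div_nat_cpow.mpr hz).hasSum
  rw [eq_two_mul_sub_of_hasSum_alternating (hasSum_neg_one_pow_div_cpow hz) hzeta
    ((hzeta.mul_left ((2 : ℂ) ^ (-z))).congr_fun fun n => ?_),
    show 1 - z = -z + 1 by ring, Complex.cpow_add _ _ two_ne_zero, Complex.cpow_one]
  · ring
  · rw [Complex.cpow_neg, Nat.cast_mul, Complex.natCast_mul_natCast_cpow, Nat.cast_ofNat]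
    field_simp

lemma mellin_altExpSum_of_large {p : ℕ} (hp : p ≠ 0) {N : ℕ} (hN : N ≠ 0) {s : ℂ}
    (hs : (p : ℝ) + 1 < s.re) :
    mellin (altExpSum p N) s = Complex.Gamma s *
      cosZeta ((1 / 2 : ℝ) : UnitAddCircle) (N * s - p) := by
  have hN1 : (1 : ℝ) ≤ N := by exact_mod_cast Nat.one_le_iff_ne_zero.mpr hN
  have _ : (0 : ℝ) ≤ p := Nat.cast_nonneg p
  have hre : (N * s - p : ℂ).re = N * s.re - p := by simp
  have hlarge : 1 < N * s.re - p := by nlinarith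
  have hdirichlet := (hasSum_neg_one_pow_div_cpow (s := N * s - p) (by rwa [hre])).mul_left
    (Complex.Gamma s)
  have hsummable : Summable fun n : ℕ =>
      ‖(-1) ^ n * (n : ℂ) ^ p‖ / ((n : ℝ) ^ N) ^ s.re := by
    refine (Real.summable_one_div_nat_rpow.mpr hlarge).congr fun n => ?_
    rcases eq_or_ne n 0 with rfl | hn
    · simp [hp, Real.zero_rpow (show N * s.re - p ≠ 0 by linarith)]
    · have hn' : (0 : ℝ) < n := by positivity
      rw [norm_mul, norm_pow, norm_pow, norm_neg, norm_one, one_pow, one_mul,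
        Complex.norm_natCast, Real.rpow_sub hn', Real.rpow_natCast, Real.rpow_mul hn'.le,
        Real.rpow_natCast, one_div_div]
  refine (hasSum_mellin (a := fun n : ℕ => (-1) ^ n * (n : ℂ) ^ p)
    (p := fun n : ℕ => (n : ℝ) ^ N) (fun n => ?_) (by linarith)
    (fun t ht => hasSum_altExpSum p hN ht) hsummable).unique (hdirichlet.congr_fun fun n => ?_)
  · rcases eq_or_ne n 0 with rfl | hn
    · simp [hp]
    · right; positivity
  · rcases eq_or_ne n 0 with rfl | hn
    · have hne : (N * s - p : ℂ) ≠ 0 := fun h => by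
        rw [h, Complex.zero_re] at hre
        linarith
      simp [hp, Complex.zero_cpow hne]
    · have hn' : (n : ℂ) ≠ 0 := Nat.cast_ne_zero.mpr hn
      rw [Complex.ofReal_pow, Complex.ofReal_natCast, ← Complex.natCast_cpow_natCast_mul,
        Complex.cpow_sub _ _ hn', Complex.cpow_natCast, one_div_div]
      ring

lemma differentiableAt_Gamma_of_re_pos {s : ℂ} (hs : 0 < s.re) :
    DifferentiableAt ℂ Complex.Gamma s := by
  refine Complex.differentiableAt_Gamma s fun n h => ?_
  rw [h, Complex.neg_re, Complex.natCast_re] at hs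
  linarith [(Nat.cast_nonneg n : (0 : ℝ) ≤ n)]

lemma differentiableAt_mellin_altExpSum (p : ℕ) {N : ℕ} (hN : N ≠ 0) {B : ℝ}
    (hB : ∀ t > 0, ‖altExpSum p N t‖ ≤ B * rexp (-t)) {s : ℂ} (hs : 0 < s.re) :
    DifferentiableAt ℂ (mellin (altExpSum p N)) s := by
  refine mellin_differentiableAt_of_isBigO_rpow_exp (a := 1) (b := 0) one_pos
    ((continuousOn_altExpSum p hN).locallyIntegrableOn measurableSet_Ioi) (.of_bound B ?_)
    (.of_bound |B| ?_) hs
  · filter_upwards [eventually_gt_atTop 0] with t ht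
    rw [Real.norm_of_nonneg (Real.exp_pos _).le, neg_one_mul]
    exact hB t ht
  · filter_upwards [self_mem_nhdsWithin] with t (ht : 0 < t)
    rw [neg_zero, Real.rpow_zero, norm_one, mul_one]
    have h1 : rexp (-t) ≤ 1 := Real.exp_le_one_iff.mpr (by linarith)
    nlinarith [hB t ht, le_abs_self B, abs_nonneg B, Real.exp_pos (-t)]

lemma mellin_altExpSum {p : ℕ} (hp : p ≠ 0) {N : ℕ} (hN : N ≠ 0) {B : ℝ}
    (hB : ∀ t > 0, ‖altExpSum p N t‖ ≤ B * rexp (-t)) {s : ℂ} (hs : 0 < s.re) :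
    mellin (altExpSum p N) s = Complex.Gamma s *
      cosZeta ((1 / 2 : ℝ) : UnitAddCircle) (N * s - p) := by
  have hopen : IsOpen {z : ℂ | 0 < z.re} := isOpen_lt continuous_const Complex.continuous_re
  have hf : AnalyticOnNhd ℂ (mellin (altExpSum p N)) {z : ℂ | 0 < z.re} :=
    DifferentiableOn.analyticOnNhd (fun z hz =>
      (differentiableAt_mellin_altExpSum p hN hB hz).differentiableWithinAt) hopen
  have hg : AnalyticOnNhd ℂ (fun z => Complex.Gamma z *
      cosZeta ((1 / 2 : ℝ) : UnitAddCircle) (N * z - p)) {z : ℂ | 0 < z.re} :=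
    DifferentiableOn.analyticOnNhd (fun z hz => ((differentiableAt_Gamma_of_re_pos hz).mul
      ((differentiable_cosZeta_of_ne_zero ofReal_half_ne_zero).comp
        (by fun_prop)).differentiableAt).differentiableWithinAt) hopen
  have hre : ((p + 2 : ℕ) : ℂ).re = p + 2 := by rw [Complex.natCast_re]; push_cast; rfl
  refine hf.eqOn_of_preconnected_of_eventuallyEq hg (convex_halfSpace_re_gt 0).isPreconnected
    (show 0 < ((p + 2 : ℕ) : ℂ).re by rw [hre]; positivity) ?_ hs
  filter_upwards [(isOpen_lt continuous_const Complex.continuous_re).mem_nhds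
    (show (p : ℝ) + 1 < ((p + 2 : ℕ) : ℂ).re by rw [hre]; linarith)] with z hz
  exact mellin_altExpSum_of_large hp hN hz

lemma eq_cosZeta_half_of_tendsto_altExpSum {p : ℕ} (hp : p ≠ 0) {N : ℕ} (hN : N ≠ 0) {L : ℂ}
    (hL : Tendsto (altExpSum p N) (𝓝[>] 0) (𝓝 L)) :
    L = cosZeta ((1 / 2 : ℝ) : UnitAddCircle) (-p) := by
  obtain ⟨B, hB⟩ := exists_norm_altExpSum_le hp hN hL
  refine tendsto_nhds_unique (tendsto_mul_mellin (continuousOn_altExpSum p hN) hB hL) ?_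
  have hcont : ContinuousAt (fun s : ℝ => Complex.Gamma ((s : ℂ) + 1) *
      cosZeta ((1 / 2 : ℝ) : UnitAddCircle) (N * (s : ℂ) - p)) 0 := by
    refine ContinuousAt.mul ?_ ((differentiable_cosZeta_of_ne_zero
      ofReal_half_ne_zero).continuous.comp (by fun_prop)).continuousAt
    exact ContinuousAt.comp (f := fun s : ℝ => (s : ℂ) + 1)
      (differentiableAt_Gamma_of_re_pos (by simp)).continuousAt (by fun_prop)
  have h := hcont.tendsto.mono_left (nhdsWithin_le_nhds (s := Ioi 0))
  simp only [Complex.ofReal_zero, zero_add, Complex.Gamma_one, one_mul, mul_zero, zero_sub] at h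
  refine h.congr' ?_
  filter_upwards [self_mem_nhdsWithin] with s (hs : 0 < s)
  rw [mellin_altExpSum hp hN hB (by simpa using hs),
    Complex.Gamma_add_one _ (Complex.ofReal_ne_zero.mpr hs.ne'), mul_assoc]

lemma tendsto_const_mul_nhdsGT_zero {c : ℝ} (hc : 0 < c) :
    Tendsto (fun t => c * t) (𝓝[>] 0) (𝓝[>] 0) :=
  tendsto_iff_comap.mpr (comap_mulLeft_nhdsGT_zero hc).ge

-- Scaling `t` by `2^N` eliminates the singular term and leaves the Abel sum of `(-1)ⁿ n^p`.
lemma eq_riemannZeta_of_tendsto_powExpSum_sub {p N k : ℕ} (hp : p ≠ 0) (hN : N ≠ 0)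
    (hk : N * k = p + 1) {c C : ℂ}
    (h : Tendsto (fun t : ℝ => (powExpSum p N t : ℂ) - c * (t : ℂ) ^ (-k : ℤ)) (𝓝[>] 0) (𝓝 C)) :
    C = riemannZeta (-p) := by
  have halt : Tendsto (altExpSum p N) (𝓝[>] 0) (𝓝 ((2 : ℂ) ^ (p + 1) * C - C)) := by
    have hscale := tendsto_const_mul_nhdsGT_zero (c := 2 ^ N) (by positivity)
    refine (((h.comp hscale).const_mul ((2 : ℂ) ^ (p + 1))).sub h).congr' ?_
    filter_upwards [self_mem_nhdsWithin] with t ht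
    have hpow : (2 : ℂ) ^ (p + 1) * (((2 : ℝ) ^ N * t : ℝ) : ℂ) ^ (-k : ℤ) =
        (t : ℂ) ^ (-k : ℤ) := by
      push_cast
      rw [mul_zpow, ← mul_assoc, ← hk, zpow_neg, zpow_natCast, ← pow_mul,
        mul_inv_cancel₀ (pow_ne_zero _ two_ne_zero), one_mul]
    rw [altExpSum_eq_sub p hN ht, Function.comp_apply]
    linear_combination (-c) * hpow
  have hne : (2 : ℂ) ^ (p + 1) - 1 ≠ 0 := by
    refine sub_ne_zero.mpr ?_
    exact_mod_cast (Nat.one_lt_two_pow p.succ_ne_zero).ne'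
  have hL := eq_cosZeta_half_of_tendsto_altExpSum hp hN halt
  rw [cosZeta_half (by norm_cast; omega), sub_neg_eq_add, add_comm (1 : ℂ), ← Nat.cast_succ,
    Complex.cpow_natCast, ← sub_one_mul] at hL
  exact mul_left_cancel₀ hne hL

lemma continuous_planckCos (H : ℕ) {A : ℝ} (hA : 0 < A) (m : ℤ) :
    Continuous (planckCos H A m) := by
  refine continuous_tsum (fun k => by fun_prop)
    (summable_zpow_mul_planckSum H hA (-(2 * m + 1))).norm fun k u => ?_
  rw [norm_mul, Complex.norm_real, Real.norm_eq_abs]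
  exact mul_le_of_le_one_left (norm_nonneg _) (Real.abs_cos_le_one _)

lemma min_mul_succ_le {u v : ℝ} (hv : v ≤ u) (n : ℕ) :
    min v 1 * ((n : ℝ) + 1) ≤ n + u := by
  have hn : min v 1 * n ≤ n := mul_le_of_le_one_left n.cast_nonneg (min_le_right v 1)
  linarith [min_le_left v 1]

lemma summable_natCast_add_zpow {e : ℤ} (he : e ≤ -2) {u : ℝ} (hu : 0 < u) :
    Summable fun n : ℕ => ((n : ℝ) + u) ^ e :=
  (summable_one_div_succ_sq.mul_left _).of_norm_bounded fun n =>
    norm_zpow_le_of_mul_succ_le he (lt_min hu one_pos) n (min_mul_succ_le le_rfl n)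

lemma hurwitzSum_eq_zpow_add {e : ℤ} (he : e ≤ -2) {u : ℝ} (hu : 0 < u) :
    hurwitzSum e u = u ^ e + hurwitzSum e (1 + u) := by
  rw [hurwitzSum, (summable_natCast_add_zpow he hu).tsum_eq_zero_add, Nat.cast_zero, zero_add,
    hurwitzSum]
  simp only [Nat.cast_succ, add_assoc]

lemma continuousAt_hurwitzSum {e : ℤ} (he : e ≤ -2) {u : ℝ} (hu : 0 < u) :
    ContinuousAt (hurwitzSum e) u := by
  have hδ : 0 < min (u / 2) 1 := lt_min (half_pos hu) one_pos
  refine ContinuousOn.continuousAt (s := Ici (u / 2)) ?_ (Ici_mem_nhds (half_lt_self hu))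
  refine continuousOn_tsum (fun n => ?_) (summable_one_div_succ_sq.mul_left _) fun n v hv =>
    norm_zpow_le_of_mul_succ_le he hδ n (min_mul_succ_le hv n)
  exact ContinuousOn.zpow₀ (by fun_prop) _ fun v (hv : u / 2 ≤ v) => Or.inl (by
    linarith [(Nat.cast_nonneg n : (0 : ℝ) ≤ n)] : 0 < n + v).ne'

lemma hurwitzSum_neg_one_eq_riemannZeta {s : ℕ} (hs : 2 ≤ s) :
    (hurwitzSum (-s) 1 : ℂ) = riemannZeta s := by
  rw [← (hasSum_riemannZeta hs).tsum_eq, hurwitzSum, Complex.ofReal_tsum]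
  refine tsum_congr fun n => ?_
  rw [zpow_neg, zpow_natCast, one_div]
  push_cast
  rfl

lemma oddCosZeta_neg_zero (M : ℕ) :
    oddCosZeta (-(M + 1 : ℕ)) 0 = (2 * π) ^ (-(2 * (M + 1 : ℕ) : ℤ)) * (2 * M + 1).factorial *
      (-1) ^ (M + 1) * (2 * (hurwitzSum (-(2 * (M + 1 : ℕ))) 1 : ℂ)) := by
  have hs : 2 * ((-(M + 1 : ℕ) : ℤ) : ℂ) + 1 = 1 - 2 * (M + 1 : ℕ) := by push_cast; ring
  have hzeta : (hurwitzSum (-(2 * (M + 1 : ℕ))) 1 : ℂ) = riemannZeta (2 * (M + 1 : ℕ)) :=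
    mod_cast hurwitzSum_neg_one_eq_riemannZeta (s := 2 * (M + 1)) (by omega)
  rw [oddCosZeta, if_neg (by omega), QuotientAddGroup.mk_zero, hs, cosZeta_one_sub_even,
    hurwitzZetaEven_zero, hzeta]
  ring

lemma le_mul_succ_pow {A : ℝ} (hA : 0 ≤ A) (n k : ℕ) : A ≤ A * ((n : ℝ) + 1) ^ k :=
  le_mul_of_one_le_right hA (one_le_pow₀ (by simp))

/-- The half `∑ n^e e^{-uAn^N} / (1 - e^{-An^N})`, `N = 2H + 1`, of `kerSum`. -/
noncomputable def halfKerSum (H : ℕ) (A : ℝ) (e : ℤ) (u : ℝ) : ℝ :=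
  ∑' n : ℕ, ((n : ℝ) + 1) ^ e * (rexp (-(u * (A * ((n : ℝ) + 1) ^ (2 * H + 1)))) /
    (1 - rexp (-(A * ((n : ℝ) + 1) ^ (2 * H + 1)))))

lemma norm_halfKerSum_term_le (H : ℕ) {A : ℝ} (hA : 0 < A) (e : ℤ) {δ u : ℝ} (hu : δ ≤ u)
    (n : ℕ) :
    ‖((n : ℝ) + 1) ^ e * (rexp (-(u * (A * ((n : ℝ) + 1) ^ (2 * H + 1)))) /
      (1 - rexp (-(A * ((n : ℝ) + 1) ^ (2 * H + 1)))))‖ ≤ 1 / (1 - rexp (-A)) *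
        (((n : ℝ) + 1) ^ e * rexp (-(δ * A * ((n : ℝ) + 1) ^ (2 * H + 1)))) := by
  have hx := le_mul_succ_pow hA.le n (2 * H + 1)
  have hA' := one_sub_exp_neg_pos hA
  have hx' := one_sub_exp_neg_pos (hA.trans_le hx)
  rw [Real.norm_of_nonneg (by positivity), mul_assoc δ A, mul_left_comm (1 / _), one_div_mul_eq_div]
  gcongr

lemma summable_halfKerSum (H : ℕ) {A : ℝ} (hA : 0 < A) (e : ℤ) {u : ℝ} (hu : 0 < u) :
    Summable fun n : ℕ => ((n : ℝ) + 1) ^ e * (rexp (-(u * (A * ((n : ℝ) + 1) ^ (2 * H + 1)))) /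
      (1 - rexp (-(A * ((n : ℝ) + 1) ^ (2 * H + 1))))) :=
  ((summable_zpow_mul_exp_neg H e (mul_pos hu hA)).mul_left _).of_norm_bounded
    (norm_halfKerSum_term_le H hA e le_rfl)

lemma continuousAt_halfKerSum (H : ℕ) {A : ℝ} (hA : 0 < A) (e : ℤ) {u : ℝ} (hu : 0 < u) :
    ContinuousAt (halfKerSum H A e) u :=
  (continuousOn_tsum (fun n => by fun_prop)
    ((summable_zpow_mul_exp_neg H e (mul_pos (half_pos hu) hA)).mul_left _)
    fun n _ hv => norm_halfKerSum_term_le H hA e hv n).continuousAt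
      (Ici_mem_nhds (half_lt_self hu))

lemma halfKerSum_eq_tsum_add (H : ℕ) {A : ℝ} (hA : 0 < A) (e : ℤ) {u : ℝ} (hu : 0 < u) :
    halfKerSum H A e u =
      ∑' n : ℕ, ((n : ℝ) + 1) ^ e * rexp (-(u * A * ((n : ℝ) + 1) ^ (2 * H + 1))) +
        halfKerSum H A e (1 + u) := by
  rw [halfKerSum, halfKerSum, ← (summable_zpow_mul_exp_neg H e (mul_pos hu hA)).tsum_add
    (summable_halfKerSum H hA e (by linarith))]
  refine tsum_congr fun n => ?_
  have hx := (one_sub_exp_neg_pos (hA.trans_le (le_mul_succ_pow hA.le n (2 * H + 1)))).ne'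
  rw [mul_assoc u A, add_mul, one_mul, neg_add, Real.exp_add]
  field_simp
  ring

lemma kerSum_eq_halfKerSum_add (H : ℕ) {A : ℝ} (hA : 0 < A) (m : ℤ) {u : ℝ}
    (hu : u ∈ Ioo (0 : ℝ) 1) :
    kerSum H A m u = halfKerSum H A (-(2 * (2 * H + 1) * m + 1)) u +
      halfKerSum H A (-(2 * (2 * H + 1) * m + 1)) (1 - u) := by
  rw [kerSum, halfKerSum, halfKerSum, ← (summable_halfKerSum H hA _ hu.1).tsum_add
    (summable_halfKerSum H hA _ (sub_pos.mpr hu.2))]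
  refine tsum_congr fun n => ?_
  rw [symKernel, add_div, mul_add]

lemma powExpSum_eq_tsum_succ {p N : ℕ} (hp : p ≠ 0) (hN : N ≠ 0) {t : ℝ} (ht : 0 < t) :
    powExpSum p N t = ∑' n : ℕ, ((n : ℝ) + 1) ^ p * rexp (-(t * ((n : ℝ) + 1) ^ N)) := by
  rw [powExpSum, (summable_pow_mul_exp_neg_pow p hN ht).tsum_eq_zero_add, Nat.cast_zero,
    zero_pow hp, zero_mul, zero_add]
  refine tsum_congr fun n => ?_
  rw [Nat.cast_succ, neg_mul, mul_comm t]

lemma residualSum_one (H : ℕ) (A : ℝ) (m : ℤ) (u : ℝ) :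
    residualSum H A m 1 u = residualSum H A m 1 0 := by
  simp only [residualSum, Finset.sum_range_one, Nat.cast_zero, mul_zero, cosZeta_apply_zero]

lemma tendsto_one_add_add_one_sub {f : ℝ → ℝ} (hf : ContinuousAt f 1) :
    Tendsto (fun u => f (1 + u) + f (1 - u)) (𝓝[>] 0) (𝓝 (2 * f 1)) := by
  have hadd : ContinuousAt (fun u => f (1 + u)) 0 :=
    hf.comp_of_eq (f := fun u => 1 + u) (by fun_prop) (add_zero 1)
  have hsub : ContinuousAt (fun u => f (1 - u)) 0 :=
    hf.comp_of_eq (f := fun u => 1 - u) (by fun_prop) (sub_zero 1)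
  have hlim := (hadd.tendsto.add hsub.tendsto).mono_left (nhdsWithin_le_nhds (s := Ioi 0))
  rwa [add_zero, sub_zero, ← two_mul] at hlim

lemma latticeSum_eq_zpow_add {e : ℤ} (he : e ≤ -2) {u : ℝ} (hu : 0 < u) :
    latticeSum e u = u ^ e + (hurwitzSum e (1 + u) + hurwitzSum e (1 - u)) := by
  rw [latticeSum, hurwitzSum_eq_zpow_add he hu, add_assoc]

lemma exists_tendsto_oddCosZeta_neg_sub (M : ℕ) :
    ∃ c : ℂ, Tendsto (fun u : ℝ => oddCosZeta (-(M + 1 : ℕ)) u -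
      c * (u : ℂ) ^ (-(2 * (M + 1) : ℕ) : ℤ)) (𝓝[>] 0) (𝓝 (oddCosZeta (-(M + 1 : ℕ)) 0)) := by
  have he : -(2 * ((M + 1 : ℕ) : ℤ)) ≤ -2 := by omega
  have hlim := (Complex.continuous_ofReal.tendsto _).comp
    (tendsto_one_add_add_one_sub (continuousAt_hurwitzSum he one_pos))
  refine ⟨(2 * π) ^ (-(2 * (M + 1 : ℕ) : ℤ)) * (2 * M + 1).factorial * (-1) ^ (M + 1), ?_⟩
  rw [oddCosZeta_neg_zero, ← Complex.ofReal_ofNat 2, ← Complex.ofReal_mul 2 (hurwitzSum _ _)]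
  refine (hlim.const_mul _).congr' ?_
  filter_upwards [Ioo_mem_nhdsGT one_pos] with u hu
  rw [oddCosZeta_neg hu, latticeSum_eq_zpow_add he hu.1, Function.comp_apply]
  push_cast
  ring

lemma exists_tendsto_dualSum_neg_sub (H : ℕ) {A : ℝ} (hA : 0 < A) (M : ℕ) :
    ∃ c : ℂ, Tendsto (fun u : ℝ => dualSum H A (-(M + 1 : ℕ)) 1 u -
      c * (u : ℂ) ^ (-(2 * (M + 1) : ℕ) : ℤ)) (𝓝[>] 0) (𝓝 (dualSum H A (-(M + 1 : ℕ)) 1 0)) := by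
  obtain ⟨c, hodd⟩ := exists_tendsto_oddCosZeta_neg_sub M
  have hplanck := (continuous_planckCos H hA (-(M + 1 : ℕ))).continuousAt.tendsto.mono_left
    (nhdsWithin_le_nhds (a := (0 : ℝ)) (s := Ioi 0))
  have hlim := (((hodd.const_mul (1 / 2)).add (hplanck.const_mul ((-1) ^ H))).const_mul
    (2 * (-1) ^ (-(M + 1 : ℕ) : ℤ) / (2 * H + 1) * (A / (2 * π)) ^ (2 * (-(M + 1 : ℕ) : ℤ)) : ℂ)
    ).add_const (residualSum H A (-(M + 1 : ℕ)) 1 0)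
  refine ⟨2 * (-1) ^ (-(M + 1 : ℕ) : ℤ) / (2 * H + 1) *
    (A / (2 * π)) ^ (2 * (-(M + 1 : ℕ) : ℤ)) * (1 / 2 * c), hlim.congr fun u => ?_⟩
  rw [dualSum, residualSum_one H A _ u]
  ring

lemma kerSum_neg {H : ℕ} {A : ℝ} (hA : 0 < A) {M P : ℕ}
    (hP : P + 1 = (2 * H + 1) * (M + 1)) {u : ℝ} (hu : u ∈ Ioo (0 : ℝ) 1) :
    kerSum H A (-(M + 1 : ℕ)) u = powExpSum (2 * P + 1) (2 * H + 1) (u * A) +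
      (halfKerSum H A (2 * P + 1 : ℕ) (1 + u) + halfKerSum H A (2 * P + 1 : ℕ) (1 - u)) := by
  have hexp : -(2 * (2 * H + 1) * (-(M + 1 : ℕ) : ℤ) + 1) = ((2 * P + 1 : ℕ) : ℤ) := by
    zify at hP
    push_cast
    linarith
  rw [kerSum_eq_halfKerSum_add H hA _ hu, hexp, halfKerSum_eq_tsum_add H hA _ hu.1,
    powExpSum_eq_tsum_succ (by omega) (by omega) (mul_pos hu.1 hA), add_assoc]
  simp only [zpow_natCast]

-- As `u → 0`, both sides of the transformation formula blow up like `u^{-2(M+1)}`, and the constant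
-- term of the divergent part of `kerSum` is a zeta value.
lemma two_mul_halfKerSum_one_add_of_neg (H : ℕ) {A : ℝ} (hA : 0 < A) {M P : ℕ}
    (hP : P + 1 = (2 * H + 1) * (M + 1)) :
    2 * (halfKerSum H A (2 * P + 1 : ℕ) 1 : ℂ) + riemannZeta (-(2 * P + 1 : ℕ)) =
      dualSum H A (-(M + 1 : ℕ)) 1 0 := by
  obtain ⟨c, hdual⟩ := exists_tendsto_dualSum_neg_sub H hA M
  have hhalf := (Complex.continuous_ofReal.tendsto _).comp (tendsto_one_add_add_one_sub
    (continuousAt_halfKerSum H hA (2 * P + 1 : ℕ) one_pos))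
  have hscale := tendsto_const_mul_nhdsGT_zero (inv_pos.mpr hA)
  rw [← eq_riemannZeta_of_tendsto_powExpSum_sub (p := 2 * P + 1) (N := 2 * H + 1)
    (k := 2 * (M + 1)) (c := c * (A : ℂ) ^ (2 * (M + 1))) (by omega) (by omega)
    (by rw [show 2 * P + 1 + 1 = 2 * (P + 1) by ring, hP]; ring)
    (((hdual.sub hhalf).comp hscale).congr' ?_)]
  · push_cast
    ring
  · filter_upwards [Ioo_mem_nhdsGT hA] with t ht
    have hu : A⁻¹ * t ∈ Ioo (0 : ℝ) 1 :=
      ⟨mul_pos (inv_pos.mpr hA) ht.1, (inv_mul_lt_one₀ hA).mpr ht.2⟩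
    have hcore := kerSum_neg hA hP hu
    have hpow : ((A⁻¹ * t : ℝ) : ℂ) ^ (-(2 * (M + 1) : ℕ) : ℤ) =
        (A : ℂ) ^ (2 * (M + 1)) * (t : ℂ) ^ (-(2 * (M + 1) : ℕ) : ℤ) := by
      rw [Complex.ofReal_mul, mul_zpow, Complex.ofReal_inv, inv_zpow', neg_neg, zpow_natCast]
    rw [mul_right_comm, inv_mul_cancel₀ hA.ne', one_mul] at hcore
    simp only [Function.comp_apply]
    rw [← kerSum_eq_dualSum H hA _ 1 (by omega) hu, hcore, hpow]
    push_cast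
    ring

lemma symKernel_zero {x : ℝ} (hx : 0 < x) :
    symKernel x 0 = 2 * (rexp (-(1 * x)) / (1 - rexp (-x))) + 1 := by
  have := (one_sub_exp_neg_pos hx).ne'
  rw [symKernel, zero_mul, neg_zero, Real.exp_zero, sub_zero, one_mul]
  field_simp
  ring

lemma two_mul_halfKerSum_one_add_of_pos (H : ℕ) {A : ℝ} (hA : 0 < A) {M : ℕ} (hM : 1 ≤ M) {K : ℕ}
    (hK : M + 2 ≤ K) :
    2 * (halfKerSum H A (-(2 * (2 * H + 1) * M + 1 : ℕ)) 1 : ℂ) +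
      riemannZeta (2 * (2 * H + 1) * M + 1 : ℕ) = dualSum H A M K 0 := by
  have hhalf := (Complex.hasSum_ofReal.mpr
    (summable_halfKerSum H hA (-(2 * (2 * H + 1) * M + 1 : ℕ)) one_pos).hasSum).mul_left (2 : ℂ)
  rw [← kerSum_eq_dualSum_of_pos hA hM hK (by simp : (0 : ℝ) ∈ Icc 0 1)]
  rw [kerSum, Complex.ofReal_tsum]
  refine ((hhalf.add (hasSum_riemannZeta (by nlinarith))).congr_fun fun n => ?_).tsum_eq.symm
  have hexp : -(2 * (2 * H + 1) * (M : ℤ) + 1) = -(2 * (2 * H + 1) * M + 1 : ℕ) := by push_cast; rfl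
  rw [symKernel_zero (hA.trans_le (le_mul_succ_pow hA.le n (2 * H + 1))), hexp, zpow_neg,
    zpow_natCast]
  push_cast
  ring

lemma two_mul_halfKerSum_one_add (H : ℕ) {A : ℝ} (hA : 0 < A) {m : ℤ} (hm : m ≠ 0) {K : ℕ}
    (hK : m + 2 ≤ K) :
    2 * (halfKerSum H A (-(2 * (2 * H + 1) * m + 1)) 1 : ℂ) +
      riemannZeta (2 * (2 * H + 1) * m + 1) = dualSum H A m K 0 := by
  rcases lt_or_gt_of_ne hm with h | h
  · obtain ⟨M, rfl⟩ : ∃ M : ℕ, m = -(M + 1 : ℕ) := ⟨(-m - 1).toNat, by omega⟩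
    obtain ⟨P, hP⟩ : ∃ P, (2 * H + 1) * (M + 1) = P + 1 :=
      Nat.exists_eq_add_one_of_ne_zero (by positivity)
    have hexp : -(2 * (2 * H + 1) * (-(M + 1 : ℕ) : ℤ) + 1) = ((2 * P + 1 : ℕ) : ℤ) := by
      zify at hP
      push_cast
      linarith
    have key := two_mul_halfKerSum_one_add_of_neg H hA hP.symm
    rw [dualSum, residualSum_eq_of_le H A (L := K) (by omega) hK] at key
    rw [dualSum, ← key, ← hexp]
    congr 2
    have hexp' := congrArg (Int.cast (R := ℂ)) hexp
    push_cast at hexp' ⊢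
    linear_combination -hexp'
  · lift m to ℕ using h.le
    have key := two_mul_halfKerSum_one_add_of_pos H hA (by omega : 1 ≤ m) (K := K) (by omega)
    push_cast at key ⊢
    exact key

lemma dualSum_one (H : ℕ) (A : ℝ) {m : ℤ} (hm : m ≠ 0) (K : ℕ) :
    dualSum H A m K 1 = dualSum H A m K 0 := by
  have hcircle : ((1 : ℝ) : UnitAddCircle) = ((0 : ℝ) : UnitAddCircle) := by
    rw [AddCircle.coe_period, QuotientAddGroup.mk_zero]
  have hplanck : planckCos H A m 1 = planckCos H A m 0 := by
    refine tsum_congr fun k => ?_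
    rw [show 2 * π * ((k : ℝ) + 1) * 1 = ((k + 1 : ℕ) : ℝ) * (2 * π) by push_cast; ring,
      Real.cos_nat_mul_two_pi, mul_zero, Real.cos_zero]
  simp only [dualSum, oddCosZeta, if_neg hm, residualSum, hcircle, hplanck]

/-! ### Summation against an even primitive character -/

lemma sum_Icc_natCast_eq_sum_zmod {E : Type*} [AddCommMonoid E] {q : ℕ} [NeZero q]
    (f : ZMod q → E) : ∑ r ∈ Finset.Icc 1 q, f (r : ZMod q) = ∑ j : ZMod q, f j := by
  have hshift : ∑ r ∈ Finset.Icc 1 q, f (r : ZMod q) =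
      ∑ r ∈ Finset.range q, f ((r + 1 : ℕ) : ZMod q) := by
    rw [Finset.range_eq_Ico, Finset.sum_Ico_add' (fun r : ℕ => f (r : ZMod q)) 0 q 1]
    rfl
  rw [hshift, ← Equiv.sum_comp (Equiv.addRight (1 : ZMod q)) f]
  refine Finset.sum_nbij' (fun r => (r : ZMod q)) ZMod.val (fun r _ => Finset.mem_univ _)
    (fun j _ => Finset.mem_range.mpr j.val_lt)
    (fun r hr => ZMod.val_cast_of_lt (Finset.mem_range.mp hr))
    (fun j _ => ZMod.natCast_zmod_val j) fun r _ => ?_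
  rw [Nat.cast_add_one, Equiv.coe_addRight]

lemma conjChar_eq_inv {q : ℕ} [NeZero q] (χ : DirichletCharacter ℂ q) : conjChar χ = χ⁻¹ := by
  rw [← MulChar.star_eq_inv]
  rfl

lemma even_inv {q : ℕ} {χ : DirichletCharacter ℂ q} (hev : χ.Even) :
    (χ⁻¹).Even := by
  have h : χ (-1) = 1 := hev
  rw [DirichletCharacter.Even, ← MulChar.star_apply', h, star_one]

lemma summable_conjChar_div_exp_rot_sub_one {q : ℕ} (χ : DirichletCharacter ℂ q) {H : ℕ} {A : ℝ}
    (hA : 0 < A) (e : ℤ) {j : ℤ} (hj : j ∈ Finset.Icc (-(H : ℤ)) H) :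
    Summable fun n : ℕ => conjChar χ ((n + 1 : ℕ) : ZMod q) / (((n : ℂ) + 1) ^ e *
      (Complex.exp (2 * π * planckNode H A n * rot H j) - 1)) := by
  have hplanck : ∀ p : ℕ, p ≠ 0 → ∃ C : ℝ, ∀ b : ℝ, 0 < b →
      ‖(Complex.exp (2 * π * b * rot H j) - 1)⁻¹‖ ≤ C / b ^ p := fun p hp =>
    (exists_norm_inv_exp_rot_sub_one_le H hp).imp fun _ hC => hC j hj
  refine Summable.of_norm_bounded (summable_zpow_mul_planckNode H hA (-e) hplanck).norm
    fun n => ?_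
  rw [div_eq_mul_inv, mul_inv, zpow_neg, norm_mul]
  exact mul_le_of_le_one_left (norm_nonneg _) (DirichletCharacter.norm_le_one _ _)

section Character

variable {q : ℕ} [NeZero q] {χ : DirichletCharacter ℂ q}

lemma even_sum_reflect (hq : 1 < q) (hev : χ.Even) (S : ℝ → ℂ) :
    ∑ r ∈ Finset.Icc 1 q, χ (r : ZMod q) * S (1 - r / q) =
      ∑ r ∈ Finset.Icc 1 q, χ (r : ZMod q) * S (r / q) := by
  have : Fact (1 < q) := ⟨hq⟩
  have hq0 : (q : ℝ) ≠ 0 := Nat.cast_ne_zero.mpr (NeZero.ne q)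
  have hIcc (f : ℝ → ℂ) : ∑ r ∈ Finset.Icc 1 q, χ (r : ZMod q) * f r =
      ∑ r ∈ Finset.range (q + 1), χ (r : ZMod q) * f r := by
    rw [Finset.range_eq_Ico, Finset.sum_eq_sum_Ico_succ_bot q.succ_pos, Nat.cast_zero,
      χ.map_nonunit not_isUnit_zero, zero_mul, zero_add]
    rfl
  rw [hIcc fun x => S (1 - x / q), hIcc fun x => S (x / q), ← Finset.sum_flip]
  refine Finset.sum_congr rfl fun r hr => ?_
  have hrq : r ≤ q := Nat.lt_succ_iff.mp (Finset.mem_range.mp hr)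
  rw [Nat.cast_sub hrq, ZMod.natCast_self, zero_sub, hev.eval_neg, Nat.cast_sub hrq, sub_div,
    div_self hq0, sub_sub_cancel]

lemma LFunction_zero_of_even (hq : 1 < q) (hev : χ.Even) :
    DirichletCharacter.LFunction χ 0 = 0 := by
  have : Fact (1 < q) := ⟨hq⟩
  rw [DirichletCharacter.LFunction, ZMod.LFunction_apply_zero_of_even hev.to_fun,
    χ.map_nonunit not_isUnit_zero, neg_zero, zero_div]

lemma sum_mul_dualSum (hq : 1 < q) (χ : DirichletCharacter ℂ q) (H : ℕ) {A : ℝ} (hA : 0 < A)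
    {m : ℤ} {K : ℕ} (hK : m + 2 ≤ K) :
    ∑ r ∈ Finset.Icc 1 q, χ (r : ZMod q) * dualSum H A m K (r / q) =
      ∑ r ∈ Finset.Icc 1 q, χ (r : ZMod q) *
        (halfKerSum H A (-(2 * (2 * H + 1) * m + 1)) (r / q) : ℂ) +
      ∑ r ∈ Finset.Icc 1 q, χ (r : ZMod q) *
        (halfKerSum H A (-(2 * (2 * H + 1) * m + 1)) (1 - r / q) : ℂ) := by
  rw [← Finset.sum_add_distrib]
  refine Finset.sum_congr rfl fun r hr => ?_
  obtain ⟨hr1, hrq⟩ := Finset.mem_Icc.mp hr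
  rcases hrq.eq_or_lt with rfl | hlt
  · have : Fact (1 < r) := ⟨hq⟩
    simp only [ZMod.natCast_self, χ.map_nonunit not_isUnit_zero, zero_mul, add_zero]
  · have hu : (r / q : ℝ) ∈ Ioo (0 : ℝ) 1 := by
      have hr0 : (0 : ℝ) < r := by exact_mod_cast hr1
      have hrq' : (r : ℝ) < q := by exact_mod_cast hlt
      exact ⟨div_pos hr0 (hr0.trans hrq'), (div_lt_one (hr0.trans hrq')).mpr hrq'⟩
    rw [← kerSum_eq_dualSum H hA m K hK hu, kerSum_eq_halfKerSum_add H hA m hu,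
      Complex.ofReal_add, mul_add]

lemma sum_mul_halfKerSum_sub_zeta (hev : χ.Even) (H : ℕ) {A : ℝ} (hA : 0 < A) {m : ℤ}
    (hm : m ≠ 0) {K : ℕ} (hK : m + 2 ≤ K) :
    ∑ r ∈ Finset.Icc 1 q, χ (r : ZMod q) *
        (halfKerSum H A (-(2 * (2 * H + 1) * m + 1)) (r / q) : ℂ) -
        riemannZeta (2 * (2 * H + 1) * m + 1) * DirichletCharacter.LFunction χ 0 =
      1 / 2 * ∑ r ∈ Finset.Icc 1 q, χ (r : ZMod q) * dualSum H A m K (r / q) := by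
  rcases (Nat.one_le_iff_ne_zero.mpr (NeZero.ne q)).eq_or_lt with rfl | hq
  · have hχ : χ ((1 : ℕ) : ZMod 1) = 1 := by rw [Nat.cast_one, map_one]
    rw [Finset.Icc_self, Finset.sum_singleton, Finset.sum_singleton, hχ,
      DirichletCharacter.LFunction_modOne_eq, riemannZeta_zero, Nat.cast_one, div_one,
      dualSum_one H A hm, ← two_mul_halfKerSum_one_add H hA hm hK]
    ring
  · rw [sum_mul_dualSum hq χ H hA hK,
      even_sum_reflect hq hev fun u => (halfKerSum H A (-(2 * (2 * H + 1) * m + 1)) u : ℂ),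
      LFunction_zero_of_even hq hev]
    ring

lemma gaussSum'_eq_gaussSum (χ : DirichletCharacter ℂ q) :
    gaussSum' χ = gaussSum χ ZMod.stdAddChar := by
  rw [gaussSum', gaussSum, ← sum_Icc_natCast_eq_sum_zmod]
  refine Finset.sum_congr rfl fun r _ => ?_
  rw [ZMod.stdAddChar_apply, ZMod.toCircle_natCast]

lemma dft_eq_gaussSum_mul_inv (hprim : χ.IsPrimitive) (hev : χ.Even) :
    ZMod.dft χ = fun k => gaussSum χ ZMod.stdAddChar * χ⁻¹ k := by
  funext k
  rw [hprim.fourierTransform_eq_inv_mul_gaussSum, (even_inv hev).eval_neg, mul_comm]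

lemma gaussSum'_mul_gaussSum'_conjChar (hprim : χ.IsPrimitive) (hev : χ.Even) :
    gaussSum' χ * gaussSum' (conjChar χ) = q := by
  have hprim' : (χ⁻¹).IsPrimitive := by
    rw [DirichletCharacter.isPrimitive_def, DirichletCharacter.conductor_inv]
    exact hprim
  have hdft : ZMod.dft χ = gaussSum χ ZMod.stdAddChar • fun k => χ⁻¹ k :=
    dft_eq_gaussSum_mul_inv hprim hev
  have hinv := congrFun (ZMod.dft_dft (fun j => χ j)) 1
  rw [hdft, map_smul, dft_eq_gaussSum_mul_inv hprim' (even_inv hev), hev.eval_neg] at hinv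
  simpa [gaussSum'_eq_gaussSum, conjChar_eq_inv] using hinv

lemma sum_mul_sinZeta_of_even (hev : χ.Even) (s : ℂ) :
    ∑ j : ZMod q, χ j * sinZeta (ZMod.toAddCircle j) s = 0 := by
  rw [← self_eq_neg, ← Finset.sum_neg_distrib]
  refine Fintype.sum_equiv (.neg _) _ _ fun i => ?_
  rw [Equiv.neg_apply, hev.eval_neg, map_neg, sinZeta_neg]
  ring

lemma sum_mul_expZeta_of_even (hev : χ.Even) (s : ℂ) :
    ∑ j : ZMod q, χ j * expZeta (ZMod.toAddCircle (-j)) s =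
      ∑ j : ZMod q, χ j * cosZeta (ZMod.toAddCircle j) s := by
  calc ∑ j : ZMod q, χ j * expZeta (ZMod.toAddCircle (-j)) s
      = ∑ j : ZMod q, χ j * cosZeta (ZMod.toAddCircle j) s -
          Complex.I * ∑ j : ZMod q, χ j * sinZeta (ZMod.toAddCircle j) s := by
        rw [Finset.mul_sum, ← Finset.sum_sub_distrib]
        refine Finset.sum_congr rfl fun j _ => ?_
        rw [expZeta, map_neg, sinZeta_neg, cosZeta_neg]
        ring
    _ = ∑ j : ZMod q, χ j * cosZeta (ZMod.toAddCircle j) s := by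
        rw [sum_mul_sinZeta_of_even hev, mul_zero, sub_zero]

lemma sum_mul_cosZeta (hprim : χ.IsPrimitive) (hev : χ.Even) {s : ℂ} (hs : s ≠ 1) :
    ∑ r ∈ Finset.Icc 1 q, χ (r : ZMod q) * cosZeta ((r / q : ℝ) : UnitAddCircle) s =
      gaussSum' χ * DirichletCharacter.LFunction (conjChar χ) s := by
  have hlin : ZMod.LFunction (fun j => gaussSum χ ZMod.stdAddChar * χ⁻¹ j) s =
      gaussSum χ ZMod.stdAddChar * DirichletCharacter.LFunction χ⁻¹ s := by
    simp only [DirichletCharacter.LFunction, ZMod.LFunction, Finset.mul_sum]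
    exact Finset.sum_congr rfl fun j _ => by ring
  have hdft := ZMod.LFunction_dft (fun j => χ j) (s := s) (Or.inr hs)
  rw [dft_eq_gaussSum_mul_inv hprim hev, hlin, sum_mul_expZeta_of_even hev] at hdft
  rw [gaussSum'_eq_gaussSum, conjChar_eq_inv, hdft, ← sum_Icc_natCast_eq_sum_zmod]
  simp only [ZMod.toAddCircle_natCast]

lemma stdAddChar_mul_add_stdAddChar_neg_mul (k r : ℕ) :
    ZMod.stdAddChar ((k : ZMod q) * (r : ZMod q)) +
        ZMod.stdAddChar (-(k : ZMod q) * (r : ZMod q)) =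
      2 * (cos (2 * π * k * (r / q)) : ℂ) := by
  have hpos : (k : ZMod q) * (r : ZMod q) = ((k * r : ℕ) : ZMod q) := by push_cast; rfl
  have hneg : -(k : ZMod q) * (r : ZMod q) = ((-(k * r : ℕ) : ℤ) : ZMod q) := by push_cast; ring
  rw [hpos, hneg, ZMod.stdAddChar_apply, ZMod.stdAddChar_apply, ZMod.toCircle_natCast,
    ZMod.toCircle_intCast, Complex.ofReal_cos, Complex.two_cos]
  push_cast
  ring_nf

lemma sum_mul_cos (hprim : χ.IsPrimitive) (hev : χ.Even) (k : ℕ) :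
    ∑ r ∈ Finset.Icc 1 q, χ (r : ZMod q) * (cos (2 * π * k * (r / q)) : ℂ) =
      gaussSum' χ * conjChar χ (k : ZMod q) := by
  have hshift (a : ZMod q) :
      ∑ r ∈ Finset.Icc 1 q, χ (r : ZMod q) * ZMod.stdAddChar (a * (r : ZMod q)) =
        χ⁻¹ a * gaussSum χ ZMod.stdAddChar := by
    rw [← gaussSum_mulShift_of_isPrimitive ZMod.stdAddChar hprim, gaussSum,
      ← sum_Icc_natCast_eq_sum_zmod]
    simp only [AddChar.mulShift_apply]
  have hneg := hshift (-k)
  rw [(even_inv hev).eval_neg] at hneg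
  rw [gaussSum'_eq_gaussSum, conjChar_eq_inv, ← mul_right_inj' (two_ne_zero' ℂ), two_mul (_ * _),
    mul_comm (gaussSum χ _)]
  nth_rw 1 [← hshift k]
  rw [← hneg, ← Finset.sum_add_distrib, Finset.mul_sum]
  refine Finset.sum_congr rfl fun r _ => ?_
  rw [← mul_add, stdAddChar_mul_add_stdAddChar_neg_mul]
  ring

lemma sum_eq_ite_of_isPrimitive (hprim : χ.IsPrimitive) :
    ∑ r ∈ Finset.Icc 1 q, χ (r : ZMod q) = if q = 1 then 1 else 0 := by
  split_ifs with h
  · subst h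
    rw [Finset.Icc_self, Finset.sum_singleton, Nat.cast_one, map_one]
  · have hχ : χ ≠ 1 := by
      rintro rfl
      exact h (hprim.symm.trans DirichletCharacter.conductor_one)
    rw [sum_Icc_natCast_eq_sum_zmod, MulChar.sum_eq_zero_of_ne_one hχ]

lemma sum_mul_planckCos (hprim : χ.IsPrimitive) (hev : χ.Even) (H : ℕ) {A : ℝ} (hA : 0 < A)
    (m : ℤ) :
    ∑ r ∈ Finset.Icc 1 q, χ (r : ZMod q) * planckCos H A m (r / q) =
      gaussSum' χ * ∑ j ∈ Finset.Icc (-(H : ℤ)) H, (-1 : ℂ) ^ j *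
        ∑' n : ℕ, conjChar χ ((n + 1 : ℕ) : ZMod q) / (((n : ℂ) + 1) ^ (2 * m + 1) *
          (Complex.exp (2 * π * planckNode H A n * rot H j) - 1)) := by
  have hcos := hasSum_sum (s := Finset.Icc 1 q) fun (r : ℕ) _ =>
    (hasSum_planckCos H hA m (r / q)).mul_left (χ (r : ZMod q))
  have hexp := hasSum_sum (s := Finset.Icc (-(H : ℤ)) H) fun j hj =>
    (summable_conjChar_div_exp_rot_sub_one χ hA (2 * m + 1) hj).hasSum.mul_left ((-1 : ℂ) ^ j)
  refine hcos.unique (HasSum.congr_fun (hexp.mul_left (gaussSum' χ)) fun n => ?_)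
  have hGauss := sum_mul_cos hprim hev (n + 1)
  push_cast at hGauss
  simp only [← mul_assoc]
  rw [← Finset.sum_mul, ← Finset.sum_mul]
  push_cast
  rw [hGauss, planckSum, Finset.mul_sum, Finset.mul_sum]
  refine Finset.sum_congr rfl fun j _ => ?_
  rw [zpow_neg]
  simp only [div_eq_mul_inv, mul_inv]
  ring

lemma half_sum_mul_dualSum (hprim : χ.IsPrimitive) (hev : χ.Even) (H : ℕ) {A : ℝ} (hA : 0 < A)
    {m : ℤ} (hm : m ≠ 0) (K : ℕ) :
    1 / 2 * ∑ r ∈ Finset.Icc 1 q, χ (r : ZMod q) * dualSum H A m K (r / q) =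
      (-1) ^ m / (2 * H + 1) * (A / (2 * π)) ^ (2 * m) *
          (q / (2 * gaussSum' (conjChar χ)) *
            DirichletCharacter.LFunction (conjChar χ) (2 * m + 1) +
          (-1) ^ H * gaussSum' χ * ∑ j ∈ Finset.Icc (-(H : ℤ)) H, (-1 : ℂ) ^ j *
            ∑' n : ℕ, conjChar χ ((n + 1 : ℕ) : ZMod q) / (((n : ℂ) + 1) ^ (2 * m + 1) *
              (Complex.exp (2 * π * planckNode H A n * rot H j) - 1))) +
        1 / 2 * ∑ r ∈ Finset.Icc 1 q, χ (r : ZMod q) * residualSum H A m K (r / q) := by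
  have hG := gaussSum'_mul_gaussSum'_conjChar hprim hev
  have hG0 : gaussSum' (conjChar χ) ≠ 0 :=
    right_ne_zero_of_mul (hG.trans_ne (Nat.cast_ne_zero.mpr (NeZero.ne q)))
  have hq : (q : ℂ) / (2 * gaussSum' (conjChar χ)) = 1 / 2 * gaussSum' χ := by
    rw [← hG]
    field_simp
  have hs : (2 * m + 1 : ℂ) ≠ 1 := by
    rw [Ne, add_eq_right]
    simpa using hm
  rw [hq, mul_assoc (1 / 2), ← sum_mul_cosZeta hprim hev hs, mul_assoc ((-1) ^ H),
    ← sum_mul_planckCos hprim hev H hA m]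
  simp only [dualSum, oddCosZeta, if_neg hm, Finset.mul_sum, mul_add, Finset.sum_add_distrib]
  refine congrArg₂ _ (congrArg₂ _ ?_ ?_) rfl <;>
  · refine Finset.sum_congr rfl fun r _ => ?_
    ring

lemma hurwitzZetaEven_one_sub_even (a : UnitAddCircle) (M : ℕ) :
    hurwitzZetaEven a (1 - 2 * (M + 1 : ℕ)) =
      2 * (2 * π) ^ (-(2 * (M + 1 : ℕ) : ℤ)) * (2 * M + 1).factorial * (-1) ^ (M + 1) *
        cosZeta a (2 * (M + 1 : ℕ)) := by
  rw [hurwitzZetaEven_one_sub, mul_assoc (2 * _) (Complex.Gamma _), Gamma_mul_cos_even,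
    ← Complex.cpow_intCast]
  · push_cast
    ring_nf
  · intro n h
    have hint : (2 * (M + 1) : ℤ) = -n := by exact_mod_cast h
    omega
  · refine Or.inr fun h => ?_
    have hnat : 2 * (M + 1) = 1 := by exact_mod_cast h
    omega

lemma LFunction_one_sub_even (hev : χ.Even) (M : ℕ) :
    DirichletCharacter.LFunction χ (1 - 2 * (M + 1 : ℕ)) = (q : ℂ) ^ (2 * M + 1) *
      (2 * (2 * π) ^ (-(2 * (M + 1 : ℕ) : ℤ)) * (2 * M + 1).factorial * (-1) ^ (M + 1)) *
        ∑ r ∈ Finset.Icc 1 q, χ (r : ZMod q) *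
          cosZeta ((r / q : ℝ) : UnitAddCircle) (2 * (M + 1 : ℕ)) := by
  have hexp : -(1 - 2 * ((M + 1 : ℕ) : ℂ)) = ((2 * M + 1 : ℕ) : ℂ) := by
    push_cast
    ring
  rw [DirichletCharacter.LFunction, ZMod.LFunction_def_even hev.to_fun,
    ← sum_Icc_natCast_eq_sum_zmod, mul_assoc, Finset.mul_sum _ _ (_ * _), hexp,
    Complex.cpow_natCast]
  congr 1
  refine Finset.sum_congr rfl fun r _ => ?_
  rw [ZMod.toAddCircle_natCast, hurwitzZetaEven_one_sub_even]
  ring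

lemma riemannZeta_two_mul_intCast (a : ℤ) :
    riemannZeta (2 * a) =
      (-1) ^ (a + 1) * 2 ^ (2 * a - 1) * π ^ (2 * a) * ((bernOverFact (2 * a) : ℚ) : ℂ) := by
  rcases lt_or_ge a 0 with h | h
  · obtain ⟨n, rfl⟩ : ∃ n : ℕ, a = -(n + 1 : ℕ) := ⟨(-a - 1).toNat, by omega⟩
    have hcast : 2 * ((-(n + 1 : ℕ) : ℤ) : ℂ) = -2 * (n + 1) := by
      push_cast
      ring
    rw [bernOverFact, if_neg (by omega), Rat.cast_zero, mul_zero, hcast,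
      riemannZeta_neg_two_mul_nat_add_one]
  · obtain ⟨n, rfl⟩ := Int.eq_ofNat_of_zero_le h
    have hb : bernOverFact (2 * (n : ℤ)) = bernoulli (2 * n) / (2 * n).factorial := by
      rw [bernOverFact, if_pos (by omega)]
      rfl
    have hzpow : (2 : ℂ) ^ (2 * (n : ℤ) - 1) = 2 ^ (2 * n) / 2 := zpow_sub_one₀ two_ne_zero _
    have hpi : (π : ℂ) ^ (2 * (n : ℤ)) = π ^ (2 * n) := zpow_natCast _ _
    have hsign : (-1 : ℂ) ^ ((n : ℤ) + 1) = (-1) ^ (n + 1) := zpow_natCast _ _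
    rw [hb, Int.cast_natCast, riemannZeta_two_mul_nat', hzpow, hpi, hsign]
    push_cast
    ring

section AlphaBeta

variable {N : ℕ} {α β : ℝ}

lemma log_pi_eq_of_mul_pow_eq (hα : 0 < α) (hβ : 0 < β) (hαβ : α * β ^ N = π ^ (N + 1)) :
    log π = (log α + N * log β) / (N + 1) := by
  have hlog := congrArg log hαβ
  rw [log_mul hα.ne' (by positivity), log_pow, log_pow] at hlog
  push_cast at hlog
  rw [hlog]
  field_simp

lemma zpow_mul_pi_zpow (hα : 0 < α) (hβ : 0 < β) (hαβ : α * β ^ N = π ^ (N + 1)) (m j : ℤ) :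
    α ^ (2 * j - 1) * π ^ (2 * (N : ℤ) * (m - j) + N + 1) =
      α ^ (2 * (N : ℝ) * m / (N + 1)) * (α ^ (2 * (j : ℝ) / (N + 1)) *
        β ^ ((N : ℝ) + 2 * (N : ℝ) ^ 2 * ((m : ℝ) - j) / (N + 1))) := by
  rw [← rpow_intCast, ← rpow_intCast]
  simp only [rpow_def_of_pos hα, rpow_def_of_pos hβ, rpow_def_of_pos pi_pos, ← exp_add]
  rw [log_pi_eq_of_mul_pow_eq hα hβ hαβ]
  push_cast
  field_simp
  ring_nf

lemma div_pi_zpow (hα : 0 < α) (hβ : 0 < β) (hαβ : α * β ^ N = π ^ (N + 1)) (m : ℤ) :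
    (α / π) ^ (2 * m) =
      α ^ (2 * (N : ℝ) * m / (N + 1)) * β ^ (-(2 * (N : ℝ) * m) / (N + 1)) := by
  rw [← rpow_intCast, div_rpow hα.le pi_pos.le]
  simp only [rpow_def_of_pos hα, rpow_def_of_pos hβ, rpow_def_of_pos pi_pos, ← exp_add, ← exp_sub]
  rw [log_pi_eq_of_mul_pow_eq hα hβ hαβ]
  push_cast
  field_simp
  ring_nf

lemma two_pow_mul_div_two_pi_zpow (hα : 0 < α) (hβ : 0 < β) (hαβ : α * β ^ N = π ^ (N + 1))
    (m : ℤ) :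
    (((2 ^ N * α : ℝ) : ℂ) / (2 * π)) ^ (2 * m) = 2 ^ (2 * m * ((N : ℤ) - 1)) *
      ((α ^ (2 * (N : ℝ) * m / (N + 1)) : ℝ) * (β ^ (-(2 * (N : ℝ) * m) / (N + 1)) : ℝ)) := by
  have hbase : ((2 ^ N * α : ℝ) : ℂ) / (2 * π) = 2 ^ ((N : ℤ) - 1) * ((α / π : ℝ) : ℂ) := by
    rw [zpow_sub_one₀ two_ne_zero, zpow_natCast]
    push_cast
    ring
  rw [hbase, mul_zpow, ← zpow_mul, mul_comm ((N : ℤ) - 1), ← Complex.ofReal_zpow,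
    div_pi_zpow hα hβ hαβ, Complex.ofReal_mul]

end AlphaBeta

lemma two_pi_mul_planckNode {N H : ℕ} (hN : N = 2 * H + 1) {α β : ℝ} (hα : 0 < α) (hβ : 0 < β)
    (hαβ : α * β ^ N = π ^ (N + 1)) (k : ℕ) :
    2 * π * planckNode H (2 ^ N * α) k = (2 * ((k : ℝ) + 1)) ^ ((1 : ℝ) / N) * β := by
  have hA : 0 < 2 ^ N * α := by positivity
  have hN0 : N ≠ 0 := by omega
  have hnode := planckNode_pos H hA k
  refine (pow_left_inj₀ (by positivity) (by positivity) hN0).mp ?_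
  have hβN : β ^ N = π ^ (N + 1) / α := by
    rw [← hαβ]
    field_simp
  have hpow : planckNode H (2 ^ N * α) k ^ N = 2 * π * (k + 1) / (2 ^ N * α) := by
    rw [← planckNode_pow H hA, hN]
  rw [mul_pow, mul_pow, mul_pow _ β, hpow, one_div, rpow_inv_natCast_pow (by positivity) hN0, hβN]
  field_simp
  ring

lemma two_pi_mul_planckNode_mul_rot {N H : ℕ} (hN : N = 2 * H + 1) {α β : ℝ} (hα : 0 < α)
    (hβ : 0 < β) (hαβ : α * β ^ N = π ^ (N + 1)) (k : ℕ) (j : ℤ) :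
    2 * (π : ℂ) * planckNode H (2 ^ N * α) k * rot H j =
      (((2 * ((k : ℝ) + 1)) ^ ((1 : ℝ) / N) : ℝ) : ℂ) * β *
        Complex.exp (-(π * Complex.I * j) / N) := by
  rw [rot, ← hN, ← Complex.ofReal_mul _ β, ← two_pi_mul_planckNode hN hα hβ hαβ]
  push_cast
  rfl

lemma tsum_eq_mul_halfKerSum {N H : ℕ} (hN : N = 2 * H + 1) (α : ℝ) (m : ℤ) (c : ℂ) (r q : ℕ) :
    ∑' n : ℕ, c * Complex.exp (-((r : ℂ) / q) * (2 * ((n : ℂ) + 1)) ^ N * α) /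
        (((n : ℂ) + 1) ^ (2 * (N : ℤ) * m + 1) *
          (1 - Complex.exp (-(2 * ((n : ℂ) + 1)) ^ N * α))) =
      c * (halfKerSum H (2 ^ N * α) (-(2 * (2 * H + 1) * m + 1)) (r / q) : ℂ) := by
  rw [halfKerSum, Complex.ofReal_tsum, ← tsum_mul_left, ← hN]
  refine tsum_congr fun n => ?_
  have hnum : -((r : ℂ) / q) * (2 * ((n : ℂ) + 1)) ^ N * α =
      -((r : ℂ) / q * (2 ^ N * α * ((n : ℂ) + 1) ^ N)) := by
    rw [mul_pow]
    ring
  have hden : -(2 * ((n : ℂ) + 1)) ^ N * α = -(2 ^ N * α * ((n : ℂ) + 1) ^ N) := by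
    rw [mul_pow]
    ring
  have hNZ : (N : ℤ) = 2 * H + 1 := by exact_mod_cast hN
  rw [zpow_neg, hnum, hden, hNZ]
  push_cast
  simp only [div_eq_mul_inv, mul_inv]
  ring

lemma riemannZeta_eq_bernOverFact {N H : ℕ} (hN : N = 2 * H + 1) (m j : ℤ) :
    riemannZeta (2 * (2 * H + 1) * (m - j) + (2 * H + 1) + 1) =
      (-1) ^ (m + j + H) * 2 ^ (2 * (N : ℤ) * (m - j) + N) *
        π ^ (2 * (N : ℤ) * (m - j) + N + 1) *
        ((bernOverFact (2 * (N : ℤ) * (m - j) + N + 1) : ℚ) : ℂ) := by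
  set a : ℤ := N * (m - j) + H + 1 with ha
  have hNZ : (N : ℤ) = 2 * H + 1 := by exact_mod_cast hN
  have h2a : 2 * (N : ℤ) * (m - j) + N + 1 = 2 * a := by
    rw [ha, hNZ]
    ring
  have harg : (2 * (2 * H + 1) * (m - j) + (2 * H + 1) + 1 : ℂ) = 2 * a := by
    rw [ha, hNZ]
    push_cast
    ring
  have hsign : (-1 : ℂ) ^ (a + 1) = (-1) ^ (m + j + H) := by
    have hpar : a + 1 = (m + j + H) + 2 * (H * (m - j) + 1 - j) := by
      rw [ha, hNZ]
      ring
    rw [hpar, zpow_add₀ (by norm_num), zpow_mul (-1 : ℂ) 2]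
    norm_num
  rw [harg, riemannZeta_two_mul_intCast, hsign, h2a, ← h2a]
  congr 4
  ring

lemma zpow_mul_riemannZeta {N H : ℕ} (hN : N = 2 * H + 1) {α β : ℝ} (hα : 0 < α) (hβ : 0 < β)
    (hαβ : α * β ^ N = π ^ (N + 1)) (m j : ℤ) :
    ((2 ^ N * α : ℝ) : ℂ) ^ (2 * j - 1) *
        riemannZeta (2 * (2 * H + 1) * (m - j) + (2 * H + 1) + 1) =
      (α ^ (2 * (N : ℝ) * m / (N + 1)) : ℝ) * ((-1) ^ (m + j + H) * 2 ^ (2 * (N : ℤ) * m) *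
        ((bernOverFact (2 * (N : ℤ) * (m - j) + N + 1) : ℚ) : ℂ) *
        (α ^ (2 * (j : ℝ) / (N + 1)) : ℝ) *
        (β ^ ((N : ℝ) + 2 * (N : ℝ) ^ 2 * ((m : ℝ) - j) / (N + 1)) : ℝ)) := by
  have hαπ := congrArg ((↑) : ℝ → ℂ) (zpow_mul_pi_zpow hα hβ hαβ m j)
  have htwo : ((2 : ℂ) ^ N) ^ (2 * j - 1) * 2 ^ (2 * (N : ℤ) * (m - j) + N) =
      2 ^ (2 * (N : ℤ) * m) := by
    rw [← zpow_natCast, ← zpow_mul, ← zpow_add₀ two_ne_zero]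
    ring_nf
  rw [Complex.ofReal_mul, Complex.ofReal_mul, Complex.ofReal_mul, Complex.ofReal_zpow,
    Complex.ofReal_zpow] at hαπ
  rw [riemannZeta_eq_bernOverFact hN, Complex.ofReal_mul, mul_zpow, Complex.ofReal_pow,
    Complex.ofReal_ofNat, ← htwo]
  linear_combination ((2 : ℂ) ^ N) ^ (2 * j - 1) * 2 ^ (2 * (N : ℤ) * (m - j) + N) *
    (-1) ^ (m + j + H) * ((bernOverFact (2 * (N : ℤ) * (m - j) + N + 1) : ℚ) : ℂ) * hαπ

/-- The contribution of the index `j` to the finite sum of the transformation formula. -/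
noncomputable def bernTerm (χ : DirichletCharacter ℂ q) (N : ℕ) (α β : ℝ) (m j : ℤ) : ℂ :=
  ((-1 : ℂ) ^ (j + 1) / (q : ℂ) ^ (2 * j - 1)) *
    (DirichletCharacter.LFunction χ (1 - 2 * (j : ℂ)) / (Nat.factorial (2 * j - 1).toNat : ℂ)) *
    ((bernOverFact (2 * (N : ℤ) * (m - j) + N + 1) : ℚ) : ℂ) *
    ((α ^ ((2 * (j : ℝ)) / (N + 1)) : ℝ) : ℂ) *
    ((β ^ ((N : ℝ) + 2 * (N : ℝ) ^ 2 * ((m : ℝ) - j) / (N + 1)) : ℝ) : ℂ)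

lemma LFunction_div_factorial (hev : χ.Even) (M : ℕ) :
    (-1 : ℂ) ^ (M + 1 + 1) / (q : ℂ) ^ (2 * M + 1) *
        (DirichletCharacter.LFunction χ (1 - 2 * (M + 1 : ℕ)) / (2 * M + 1).factorial) =
      -2 / (2 * π) ^ (2 * (M + 1)) * ∑ r ∈ Finset.Icc 1 q, χ (r : ZMod q) *
        cosZeta ((r / q : ℝ) : UnitAddCircle) (2 * (M + 1 : ℕ)) := by
  have hq : (q : ℂ) ≠ 0 := Nat.cast_ne_zero.mpr (NeZero.ne q)
  have _ : (π : ℂ) ≠ 0 := Complex.ofReal_ne_zero.mpr pi_ne_zero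
  have hfact : ((2 * M + 1).factorial : ℂ) ≠ 0 := Nat.cast_ne_zero.mpr (Nat.factorial_ne_zero _)
  have hsign : (-1 : ℂ) ^ (M + 1) * (-1) ^ (M + 1) = 1 := by
    rw [← mul_pow]
    norm_num
  have hzpow : (2 * π : ℂ) ^ (-(2 * (M + 1 : ℕ) : ℤ)) = ((2 * (π : ℂ)) ^ (2 * (M + 1)))⁻¹ := by
    rw [zpow_neg]
    exact congrArg Inv.inv (zpow_natCast _ _)
  rw [LFunction_one_sub_even hev, hzpow, pow_succ _ (M + 1)]
  set T := ∑ r ∈ Finset.Icc 1 q, χ (r : ZMod q) *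
    cosZeta ((r / q : ℝ) : UnitAddCircle) (2 * (M + 1 : ℕ))
  field_simp
  linear_combination (-T) * hsign

lemma half_residualCoeff_mul_sum {N H : ℕ} (hN : N = 2 * H + 1) (hev : χ.Even) {α β : ℝ}
    (hα : 0 < α) (hβ : 0 < β) (hαβ : α * β ^ N = π ^ (N + 1)) (m : ℤ) (M : ℕ) :
    1 / 2 * (residualCoeff H (2 ^ N * α) m (M + 1) * ∑ r ∈ Finset.Icc 1 q, χ (r : ZMod q) *
        cosZeta ((r / q : ℝ) : UnitAddCircle) (2 * (M + 1 : ℕ))) =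
      (α ^ (2 * (N : ℝ) * m / (N + 1)) : ℝ) *
        ((-1) ^ (m + H) * 2 ^ (2 * (N : ℤ) * m) * bernTerm χ N α β m (M + 1 : ℕ)) := by
  have hzeta := zpow_mul_riemannZeta hN hα hβ hαβ m (M + 1 : ℕ)
  have hfact := LFunction_div_factorial hev M
  have hexp : 2 * ((M + 1 : ℕ) : ℤ) - 1 = (2 * M + 1 : ℕ) := by omega
  have hsign : (-1 : ℂ) ^ (m + (M + 1 : ℕ) + H) = (-1) ^ (m + H) * (-1) ^ (M + 1) := by
    rw [add_right_comm, zpow_add₀ (by norm_num), zpow_natCast]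
  have hneg : (-1 : ℂ) ^ (((M + 1 : ℕ) : ℤ) + 1) = (-1) ^ (M + 1 + 1) := zpow_natCast _ _
  rw [Int.cast_natCast, Int.cast_natCast, hsign] at hzeta
  rw [bernTerm, residualCoeff, Int.cast_natCast, Int.cast_natCast, hneg, hexp, Int.toNat_natCast,
    zpow_natCast (q : ℂ), hfact, ← hexp, pow_succ (-1 : ℂ) (M + 1)]
  set T := ∑ r ∈ Finset.Icc 1 q, χ (r : ZMod q) *
    cosZeta ((r / q : ℝ) : UnitAddCircle) (2 * (M + 1 : ℕ))
  obtain h | h := neg_one_pow_eq_or ℂ (M + 1) <;> rw [h] at hzeta ⊢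
  · linear_combination (-2) / (2 * π) ^ (2 * (M + 1)) * T * hzeta
  · linear_combination 2 / (2 * π) ^ (2 * (M + 1)) * T * hzeta

lemma half_residualCoeff_zero_mul_sum {N H : ℕ} (hN : N = 2 * H + 1) (hprim : χ.IsPrimitive)
    {α β : ℝ} (hα : 0 < α) (hβ : 0 < β) (hαβ : α * β ^ N = π ^ (N + 1)) (m : ℤ) :
    1 / 2 * (residualCoeff H (2 ^ N * α) m 0 * ∑ r ∈ Finset.Icc 1 q, χ (r : ZMod q) *
        cosZeta ((r / q : ℝ) : UnitAddCircle) (2 * (0 : ℕ))) =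
      (α ^ (2 * (N : ℝ) * m / (N + 1)) : ℝ) *
        if q = 1 then (-1) ^ (m + H) * 2 ^ (2 * (N : ℤ) * m) *
          ((bernOverFact (2 * (N : ℤ) * m + N + 1) : ℚ) : ℂ) *
          ((β ^ ((N : ℝ) + 2 * (N : ℝ) ^ 2 * (m : ℝ) / (N + 1)) : ℝ) : ℂ) else 0 := by
  have hzeta := zpow_mul_riemannZeta hN hα hβ hαβ m 0
  have hsum : ∑ r ∈ Finset.Icc 1 q, χ (r : ZMod q) *
      cosZeta ((r / q : ℝ) : UnitAddCircle) (2 * (0 : ℕ)) = -1 / 2 * if q = 1 then 1 else 0 := by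
    rw [← sum_eq_ite_of_isPrimitive hprim, Finset.mul_sum]
    refine Finset.sum_congr rfl fun r _ => ?_
    rw [Nat.cast_zero, mul_zero, cosZeta_apply_zero, mul_comm]
  rw [hsum]
  split_ifs with hq
  · simp only [Int.cast_zero, sub_zero, mul_zero, zero_div, rpow_zero, Complex.ofReal_one,
      mul_one, add_zero, zero_sub] at hzeta
    simp only [residualCoeff, mul_zero, sub_zero, pow_zero, zero_add, pow_one,
      div_one, mul_one, zero_sub, CharP.cast_eq_zero]
    linear_combination hzeta
  · rw [mul_zero, mul_zero, mul_zero, mul_zero]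

lemma half_sum_mul_residualSum {N H : ℕ} (hN : N = 2 * H + 1) (hprim : χ.IsPrimitive)
    (hev : χ.Even) {α β : ℝ} (hα : 0 < α) (hβ : 0 < β) (hαβ : α * β ^ N = π ^ (N + 1)) (m : ℤ)
    (L : ℕ) :
    1 / 2 * ∑ r ∈ Finset.Icc 1 q, χ (r : ZMod q) *
        residualSum H (2 ^ N * α) m (L + 1) (r / q) =
      (α ^ (2 * (N : ℝ) * m / (N + 1)) : ℝ) *
        ((-1) ^ (m + H) * 2 ^ (2 * (N : ℤ) * m) *
            ∑ M ∈ Finset.range L, bernTerm χ N α β m (M + 1 : ℕ) +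
          if q = 1 then (-1) ^ (m + H) * 2 ^ (2 * (N : ℤ) * m) *
            ((bernOverFact (2 * (N : ℤ) * m + N + 1) : ℚ) : ℂ) *
            ((β ^ ((N : ℝ) + 2 * (N : ℝ) ^ 2 * (m : ℝ) / (N + 1)) : ℝ) : ℂ) else 0) := by
  have hswap : ∑ r ∈ Finset.Icc 1 q, χ (r : ZMod q) *
        residualSum H (2 ^ N * α) m (L + 1) (r / q) =
      ∑ j ∈ Finset.range (L + 1), residualCoeff H (2 ^ N * α) m j *
        ∑ r ∈ Finset.Icc 1 q, χ (r : ZMod q) *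
          cosZeta ((r / q : ℝ) : UnitAddCircle) (2 * j) := by
    simp only [residualSum, Finset.mul_sum]
    rw [Finset.sum_comm]
    exact Finset.sum_congr rfl fun j _ => Finset.sum_congr rfl fun r _ => mul_left_comm _ _ _
  rw [hswap, Finset.mul_sum, Finset.sum_range_succ', Finset.sum_congr rfl fun M _ =>
    half_residualCoeff_mul_sum hN hev hα hβ hαβ m M,
    half_residualCoeff_zero_mul_sum hN hprim hα hβ hαβ m, ← Finset.mul_sum, ← Finset.mul_sum,
    mul_add (Complex.ofReal _)]

lemma bernTerm_eq_zero (χ : DirichletCharacter ℂ q) {N : ℕ} (hN : 0 < N) (α β : ℝ) {m j : ℤ}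
    (hj : ⌊(m : ℝ) + ((N : ℝ) + 1) / (2 * N)⌋ < j) : bernTerm χ N α β m j = 0 := by
  have hN' : (0 : ℝ) < 2 * N := by positivity
  rw [Int.floor_lt, ← lt_sub_iff_add_lt', div_lt_iff₀ hN'] at hj
  have hneg : 2 * (N : ℤ) * (m - j) + N + 1 < 0 := by
    have : 2 * (N : ℝ) * (m - j) + N + 1 < 0 := by linarith
    exact_mod_cast this
  rw [bernTerm, bernOverFact, if_neg (by omega), Rat.cast_zero, mul_zero, zero_mul, zero_mul]

lemma sum_Icc_one_eq_sum_range {E : Type*} [AddCommMonoid E] (f : ℤ → E) (L : ℕ) :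
    ∑ j ∈ Finset.Icc (1 : ℤ) L, f j = ∑ M ∈ Finset.range L, f (M + 1 : ℕ) := by
  refine (Finset.sum_nbij' (fun M => ((M + 1 : ℕ) : ℤ)) (fun j => (j - 1).toNat) ?_ ?_ ?_ ?_
    fun _ _ => rfl).symm <;>
  · simp only [Finset.mem_range, Finset.mem_Icc]
    omega

lemma sum_Icc_floor_bernTerm (χ : DirichletCharacter ℂ q) {N : ℕ} (hN : 0 < N) (α β : ℝ) {m : ℤ}
    {L : ℕ} (hL : m + 1 ≤ L) :
    ∑ j ∈ Finset.Icc (1 : ℤ) ⌊(m : ℝ) + ((N : ℝ) + 1) / (2 * N)⌋, bernTerm χ N α β m j =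
      ∑ M ∈ Finset.range L, bernTerm χ N α β m (M + 1 : ℕ) := by
  have hN1 : (1 : ℝ) ≤ N := by exact_mod_cast hN
  have hfloor : ⌊(m : ℝ) + ((N : ℝ) + 1) / (2 * N)⌋ ≤ L := by
    refine le_trans (Int.lt_add_one_iff.mp (Int.floor_lt.mpr ?_)) hL
    have hlt : ((N : ℝ) + 1) / (2 * N) < 2 := by
      rw [div_lt_iff₀ (by positivity)]
      linarith
    push_cast
    linarith
  rw [← sum_Icc_one_eq_sum_range]
  refine Finset.sum_subset (Finset.Icc_subset_Icc_right hfloor) fun j hj hj' => ?_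
  refine bernTerm_eq_zero χ hN α β (not_le.mp fun hle => hj' ?_)
  exact Finset.mem_Icc.mpr ⟨(Finset.mem_Icc.mp hj).1, hle⟩

lemma neg_one_pow_add_three_div_two {N H : ℕ} (hN : N = 2 * H + 1) :
    (-1 : ℂ) ^ ((N + 3) / 2) = (-1) ^ H := by
  have hdiv : (N + 3) / 2 = H + 2 := by omega
  rw [hdiv, pow_add, neg_one_sq, mul_one]

end Character

end

theorem stmt1 (N : ℕ) (hN : Odd N) (hN1 : 1 ≤ N) (q : ℕ) [NeZero q] (hq : 1 ≤ q)
    (χ : DirichletCharacter ℂ q) (hprim : χ.IsPrimitive) (hev : χ.Even)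
    (α β : ℝ) (hα : 0 < α) (hβ : 0 < β) (hαβ : α * β ^ (N : ℕ) = Real.pi ^ (N + 1))
    (m : ℤ) (hm : m ≠ 0) :
    ((α ^ (-(2 * (N : ℝ) * m) / (N + 1)) : ℝ) : ℂ) *
      ((∑ r ∈ Finset.Icc 1 q, ∑' n : ℕ,
          χ (r : ZMod q) * Complex.exp (-((r : ℂ) / q) * (2 * ((n : ℂ) + 1)) ^ (N : ℕ) * α) /
            (((n : ℂ) + 1) ^ (2 * (N : ℤ) * m + 1) *
              (1 - Complex.exp (-(2 * ((n : ℂ) + 1)) ^ (N : ℕ) * α))))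
        - riemannZeta (2 * (N : ℂ) * m + 1) * DirichletCharacter.LFunction χ 0)
    = ((-1 : ℂ) ^ m * ((β ^ (-(2 * (N : ℝ) * m) / (N + 1)) : ℝ) : ℂ) *
          (2 : ℂ) ^ (2 * m * ((N : ℤ) - 1)) / N) *
        ((q / (2 * gaussSum' (conjChar χ))) *
            DirichletCharacter.LFunction (conjChar χ) (2 * (m : ℂ) + 1)
          + (-1 : ℂ) ^ ((N + 3) / 2 : ℕ) * gaussSum' χ *
              ∑ j ∈ Finset.Icc (-(((N : ℤ) - 1) / 2)) (((N : ℤ) - 1) / 2), (-1 : ℂ) ^ j *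
                ∑' n : ℕ, (starRingEnd ℂ) (χ ((n + 1 : ℕ) : ZMod q)) /
                  (((n : ℂ) + 1) ^ (2 * m + 1) *
                    (Complex.exp ((((2 * ((n : ℝ) + 1)) ^ ((1 : ℝ) / N) : ℝ) : ℂ) * β *
                      Complex.exp (-(Real.pi * Complex.I * j) / N)) - 1)))
      + (-1 : ℂ) ^ (m + (((N + 3) / 2 : ℕ) : ℤ)) * (2 : ℂ) ^ (2 * (N : ℤ) * m) *
          ∑ j ∈ Finset.Icc (1 : ℤ) ⌊(m : ℝ) + ((N : ℝ) + 1) / (2 * N)⌋,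
            ((-1 : ℂ) ^ (j + 1) / (q : ℂ) ^ (2 * j - 1)) *
              (DirichletCharacter.LFunction χ (1 - 2 * (j : ℂ)) /
                (Nat.factorial (2 * j - 1).toNat : ℂ)) *
              ((bernOverFact (2 * (N : ℤ) * (m - j) + N + 1) : ℚ) : ℂ) *
              ((α ^ ((2 * (j : ℝ)) / (N + 1)) : ℝ) : ℂ) *
              ((β ^ ((N : ℝ) + 2 * (N : ℝ) ^ 2 * ((m : ℝ) - j) / (N + 1)) : ℝ) : ℂ)
      + (if q = 1 then
          (-1 : ℂ) ^ (m + (((N + 3) / 2 : ℕ) : ℤ)) * (2 : ℂ) ^ (2 * (N : ℤ) * m) *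
            ((bernOverFact (2 * (N : ℤ) * m + N + 1) : ℚ) : ℂ) *
            ((β ^ ((N : ℝ) + 2 * (N : ℝ) ^ 2 * (m : ℝ) / (N + 1)) : ℝ) : ℂ)
        else 0) := by
  obtain ⟨H, hH⟩ := hN
  have hI : ((N : ℤ) - 1) / 2 = H := by omega
  have hNC : (2 * H + 1 : ℂ) = N := by exact_mod_cast hH.symm
  have hsign : (-1 : ℂ) ^ (m + (((N + 3) / 2 : ℕ) : ℤ)) = (-1) ^ (m + H) := by
    rw [zpow_add₀ (by norm_num), zpow_add₀ (by norm_num), zpow_natCast, zpow_natCast,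
      neg_one_pow_add_three_div_two hH]
  have hα0 : ((α ^ (2 * (N : ℝ) * m / (N + 1)) : ℝ) : ℂ) ≠ 0 :=
    Complex.ofReal_ne_zero.mpr (Real.rpow_pos_of_pos hα _).ne'
  have hconj : ∀ x, (starRingEnd ℂ) (χ x) = conjChar χ x := fun _ => rfl
  have key := sum_mul_halfKerSum_sub_zeta hev H (A := 2 ^ N * α) (by positivity) hm
    (K := (m + 1).toNat + 1) (by omega)
  rw [half_sum_mul_dualSum hprim hev H (by positivity) hm, hNC,
    half_sum_mul_residualSum hH hprim hev hα hβ hαβ, two_pow_mul_div_two_pi_zpow hα hβ hαβ,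
    ← sum_Icc_floor_bernTerm χ hN1 α β (Int.self_le_toNat _)] at key
  simp only [two_pi_mul_planckNode_mul_rot hH hα hβ hαβ, bernTerm] at key
  simp only [tsum_eq_mul_halfKerSum hH, hI, neg_one_pow_add_three_div_two hH, hsign, hconj,
    neg_div, Real.rpow_neg hα.le, Complex.ofReal_inv] at key ⊢
  rw [inv_mul_eq_iff_eq_mul₀ hα0, key]
  ring
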